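/- arXiv:0912.0371 — 4 statements merged into one kernel-verified Lean document; each statement's English description precedes it below -/
import Mathlib

section
/- There exist homogeneous polynomials I_2, I_8, I_12, I_14, I_18, I_20, I_24, I_30 in ℚ[x_1,…,x_8], with I_d homogeneous of degree d for each d ∈ {2, 8, 12, 14, 18, 20, 24, 30}, such that each I_d is invariant under the action of W(E₈), the family (I_2, I_8, I_12, I_14, I_18, I_20, I_24, I_30) is algebraically independent over ℚ, and the invariant subalgebra ℚ[x_1,…,x_8]^{W(E₈)} is exactly the ℚ-subalgebra generated by I_2, I_8, I_12, I_14, I_18, I_20, I_24, I_30. -/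
open MvPolynomial

noncomputable section

/-- The Cartan matrix of type `E₈` in Bourbaki numbering. -/
def cartanE8 : Matrix (Fin 8) (Fin 8) ℚ :=
  !![2, 0, -1, 0, 0, 0, 0, 0;
     0, 2, 0, -1, 0, 0, 0, 0;
     -1, 0, 2, -1, 0, 0, 0, 0;
     0, -1, -1, 2, -1, 0, 0, 0;
     0, 0, 0, -1, 2, -1, 0, 0;
     0, 0, 0, 0, -1, 2, -1, 0;
     0, 0, 0, 0, 0, -1, 2, -1;
     0, 0, 0, 0, 0, 0, -1, 2]

/-- The linear functional `v ↦ ∑ j, A j i * v j`. -/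
def phiE8 (i : Fin 8) : (Fin 8 → ℚ) →ₗ[ℚ] ℚ :=
  ∑ j, cartanE8 j i • LinearMap.proj j

lemma phiE8_apply (i : Fin 8) (v : Fin 8 → ℚ) :
    phiE8 i v = ∑ j, cartanE8 j i * v j := by
  simp [phiE8, LinearMap.proj]

/-- The simple reflection `s_i` as a linear endomorphism:
`s_i (e_j) = e_j - A j i • e_i`. -/
def reflE8 (i : Fin 8) : Module.End ℚ (Fin 8 → ℚ) :=
  LinearMap.id - (phiE8 i).smulRight (Pi.single i 1)

lemma cartanE8_diag (i : Fin 8) : cartanE8 i i = 2 := by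
  fin_cases i <;> norm_num [cartanE8]

lemma phiE8_single (i : Fin 8) : phiE8 i (Pi.single i 1) = 2 := by
  rw [phiE8_apply]
  rw [Finset.sum_eq_single i]
  · simp [cartanE8_diag]
  · intro b _ hb
    simp [Pi.single_apply, hb]
  · simp

lemma reflE8_apply_self (i : Fin 8) (v : Fin 8 → ℚ) :
    reflE8 i (reflE8 i v) = v := by
  have h : phiE8 i (reflE8 i v) = - phiE8 i v := by
    simp only [reflE8, LinearMap.sub_apply, LinearMap.id_apply,
      LinearMap.smulRight_apply, map_sub, map_smul, smul_eq_mul, phiE8_single]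
    ring
  have h2 : reflE8 i (reflE8 i v) = reflE8 i v - phiE8 i (reflE8 i v) • (Pi.single i 1 : Fin 8 → ℚ) := rfl
  rw [h2, h]
  have h3 : reflE8 i v = v - phiE8 i v • (Pi.single i 1 : Fin 8 → ℚ) := rfl
  rw [h3]
  module

lemma reflE8_invol (i : Fin 8) : reflE8 i * reflE8 i = 1 := by
  apply LinearMap.ext
  intro v
  exact reflE8_apply_self i v

/-- The simple reflection `s_i` as an element of `GL(ℚ⁸)`. -/
def sE8 (i : Fin 8) : (Module.End ℚ (Fin 8 → ℚ))ˣ :=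
  ⟨reflE8 i, reflE8 i, reflE8_invol i, reflE8_invol i⟩

/-- The Weyl group `W(E₈)`, the subgroup of `GL(ℚ⁸)` generated by the simple
reflections. -/
def WeylE8 : Subgroup (Module.End ℚ (Fin 8 → ℚ))ˣ :=
  Subgroup.closure (Set.range sE8)

/-- The action of an element `g ∈ GL(ℚ⁸)` on polynomials by linear substitution
of variables: `(g · f)(x) = f (g⁻¹ x)`, i.e. `X i ↦ ∑ j, (g⁻¹ e_j) i • X j`. -/
def polyAct (g : (Module.End ℚ (Fin 8 → ℚ))ˣ) :
    MvPolynomial (Fin 8) ℚ →ₐ[ℚ] MvPolynomial (Fin 8) ℚ :=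
  aeval (fun i => ∑ j, C (((g⁻¹ : (Module.End ℚ (Fin 8 → ℚ))ˣ) :
    Module.End ℚ (Fin 8 → ℚ)) (Pi.single j 1) i) * X j)

end

/-- Integer version of the Cartan matrix. -/
def cartanZ : Matrix (Fin 8) (Fin 8) ℤ :=
  !![2, 0, -1, 0, 0, 0, 0, 0;
     0, 2, 0, -1, 0, 0, 0, 0;
     -1, 0, 2, -1, 0, 0, 0, 0;
     0, -1, -1, 2, -1, 0, 0, 0;
     0, 0, 0, -1, 2, -1, 0, 0;
     0, 0, 0, 0, -1, 2, -1, 0;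
     0, 0, 0, 0, 0, -1, 2, -1;
     0, 0, 0, 0, 0, 0, -1, 2]

/-- The 120 positive roots (up to sign), as linear forms in the coordinates `x₁,…,x₈`:
the eight decimal digits are the coefficients shifted by `3`. -/
def rootList : List ℕ :=
  [53233333, 35323333, 23523333, 32252333, 33325233, 33332523, 33333252, 33333325, 43423333, 34242333,
   22442333, 32244233, 33324423, 33332442, 33333244, 42342333, 24432333, 34234233, 22434233, 32243423,
   33324342, 33332434, 44332333, 42334233, 24424233, 34233423, 22433423, 32243342, 33324334, 44324233,
   42333423, 23343233, 24423423, 34233342, 22433342, 32243334, 43243233, 44323423, 42333342, 23342423,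
   24423342, 34233334, 22433334, 33433233, 43242423, 44323342, 42333334, 23334323, 23342342, 24423334,
   33432423, 43234323, 43242342, 44323334, 23334242, 23342334, 33424323, 33432342, 43234242, 43242334,
   23333432, 23334234, 32343323, 33424242, 33432334, 43233432, 43234234, 23333424, 34333323, 32343242,
   33423432, 33424234, 43233424, 23333343, 34333242, 32342432, 32343234, 33423424, 43233343, 34332432,
   34333234, 32334332, 32342424, 33423343, 34324332, 34332424, 32334324, 32342343, 33243332, 34324324,
   34332343, 32334243, 23433332, 33243324, 34324243, 32333433, 43333332, 23433324, 33243243, 34323433,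
   43333324, 23433243, 33242433, 43333243, 23432433, 33234333, 43332433, 23424333, 43324333, 22343333,
   42243333, 24333333, 44233333, 32433333, 34423333, 33342333, 33334233, 33333423, 33333342, 33333334]

/-- For each simple reflection, the permutation induced on roots up to sign. -/
def permList : List (List (Fin 120)) :=
  [[0, 1, 8, 3, 4, 5, 6, 7, 2, 9, 15, 11, 12, 13, 14, 10, 22, 17, 23, 19,
   20, 21, 16, 18, 29, 25, 30, 27, 28, 24, 26, 36, 37, 33, 38, 35, 31, 32, 34, 44,
   45, 41, 46, 43, 39, 40, 42, 51, 52, 53, 50, 47, 48, 49, 58, 59, 56, 57, 54, 55,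
   65, 66, 62, 63, 64, 60, 61, 72, 68, 69, 70, 71, 67, 78, 74, 75, 76, 77, 73, 79,
   80, 81, 82, 83, 84, 85, 86, 87, 88, 89, 90, 91, 96, 93, 94, 95, 92, 100, 98, 99,
   97, 103, 102, 101, 106, 105, 104, 108, 107, 110, 109, 112, 111, 113, 114, 115, 116, 117, 118, 119],
   [0, 1, 2, 9, 4, 5, 6, 7, 8, 3, 16, 17, 12, 13, 14, 22, 10, 11, 24, 25,
   20, 21, 15, 29, 18, 19, 32, 33, 28, 23, 37, 31, 26, 27, 40, 41, 36, 30, 45, 39,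
   34, 35, 49, 43, 44, 38, 53, 47, 48, 42, 50, 51, 52, 46, 54, 55, 56, 57, 58, 59,
   60, 61, 68, 63, 64, 65, 66, 67, 62, 74, 70, 71, 72, 73, 69, 79, 80, 77, 78, 75,
   76, 84, 85, 83, 81, 82, 89, 90, 88, 86, 87, 94, 92, 93, 91, 99, 96, 97, 98, 95,
   100, 101, 102, 103, 104, 105, 106, 107, 108, 111, 112, 109, 110, 114, 113, 115, 116, 117, 118, 119],
   [8, 1, 2, 10, 4, 5, 6, 7, 0, 16, 3, 18, 12, 13, 14, 15, 9, 24, 11, 26,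
   20, 21, 22, 23, 17, 32, 19, 34, 28, 29, 30, 31, 25, 40, 27, 42, 43, 37, 38, 39,
   33, 49, 35, 36, 50, 45, 46, 47, 48, 41, 44, 56, 57, 53, 54, 55, 51, 52, 63, 64,
   60, 61, 62, 58, 59, 70, 71, 67, 68, 69, 65, 66, 77, 73, 74, 75, 76, 72, 83, 79,
   80, 81, 82, 78, 84, 85, 86, 87, 92, 89, 90, 91, 88, 97, 94, 95, 96, 93, 101, 99,
   100, 98, 104, 103, 102, 107, 106, 105, 108, 109, 113, 111, 114, 110, 112, 115, 116, 117, 118, 119],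
   [0, 9, 10, 3, 11, 5, 6, 7, 15, 1, 2, 4, 19, 13, 14, 8, 16, 17, 18, 12,
   27, 21, 22, 23, 31, 25, 26, 20, 35, 36, 30, 24, 39, 33, 34, 28, 29, 44, 38, 32,
   48, 41, 42, 43, 37, 52, 46, 47, 40, 55, 50, 51, 45, 59, 54, 49, 62, 57, 58, 53,
   60, 61, 56, 69, 64, 65, 66, 67, 68, 63, 75, 76, 72, 73, 74, 70, 71, 82, 78, 79,
   80, 81, 77, 87, 88, 85, 86, 83, 84, 93, 90, 91, 92, 89, 98, 95, 96, 97, 94, 102,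
   100, 101, 99, 103, 104, 105, 106, 109, 110, 107, 108, 111, 112, 113, 115, 114, 116, 117, 118, 119],
   [0, 1, 2, 11, 4, 12, 6, 7, 8, 17, 18, 3, 5, 20, 14, 23, 24, 9, 10, 19,
   13, 28, 29, 15, 16, 25, 26, 27, 21, 22, 30, 31, 32, 33, 34, 35, 36, 37, 38, 47,
   40, 41, 42, 43, 51, 45, 46, 39, 54, 49, 56, 44, 58, 53, 48, 61, 50, 63, 52, 66,
   60, 55, 62, 57, 71, 65, 59, 67, 68, 69, 70, 64, 72, 73, 74, 81, 76, 77, 78, 84,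
   80, 75, 86, 83, 79, 89, 82, 91, 88, 85, 94, 87, 92, 93, 90, 95, 96, 97, 98, 99,
   100, 101, 105, 103, 107, 102, 108, 104, 106, 109, 110, 111, 112, 113, 114, 116, 115, 117, 118, 119],
   [0, 1, 2, 3, 12, 5, 13, 7, 8, 9, 10, 19, 4, 6, 21, 15, 16, 25, 26, 11,
   20, 14, 22, 30, 32, 17, 18, 27, 28, 37, 23, 39, 24, 33, 34, 35, 44, 29, 38, 31,
   40, 41, 42, 50, 36, 45, 46, 47, 48, 49, 43, 51, 52, 53, 60, 55, 56, 57, 65, 59,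
   54, 67, 62, 70, 64, 58, 72, 61, 68, 75, 63, 77, 66, 73, 79, 69, 82, 71, 78, 74,
   85, 81, 76, 83, 84, 80, 86, 87, 88, 89, 90, 95, 92, 93, 99, 91, 96, 97, 102, 94,
   100, 104, 98, 106, 101, 105, 103, 107, 108, 109, 110, 111, 112, 113, 114, 115, 117, 116, 118, 119],
   [0, 1, 2, 3, 4, 13, 6, 14, 8, 9, 10, 11, 20, 5, 7, 15, 16, 17, 18, 27,
   12, 21, 22, 23, 24, 33, 34, 19, 28, 29, 38, 31, 40, 25, 26, 35, 36, 45, 30, 48,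
   32, 41, 42, 43, 52, 37, 46, 54, 39, 49, 57, 58, 44, 53, 47, 55, 63, 50, 51, 59,
   60, 61, 69, 56, 64, 65, 66, 73, 74, 62, 70, 71, 78, 67, 68, 75, 76, 83, 72, 79,
   80, 81, 87, 77, 84, 90, 91, 82, 88, 94, 85, 86, 92, 98, 89, 95, 96, 101, 93, 99,
   103, 97, 102, 100, 104, 105, 106, 107, 108, 109, 110, 111, 112, 113, 114, 115, 116, 118, 117, 119],
   [0, 1, 2, 3, 4, 5, 14, 7, 8, 9, 10, 11, 12, 21, 6, 15, 16, 17, 18, 19,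
   28, 13, 22, 23, 24, 25, 26, 35, 20, 29, 30, 31, 32, 41, 42, 27, 36, 37, 46, 39,
   49, 33, 34, 43, 44, 53, 38, 47, 55, 40, 50, 51, 59, 45, 61, 48, 56, 64, 66, 52,
   67, 54, 62, 71, 57, 72, 58, 60, 68, 76, 77, 63, 65, 73, 80, 82, 69, 70, 78, 85,
   74, 86, 75, 83, 89, 79, 81, 87, 93, 84, 90, 91, 97, 88, 94, 95, 100, 92, 98, 99,
   96, 101, 102, 103, 104, 105, 106, 107, 108, 109, 110, 111, 112, 113, 114, 115, 116, 117, 119, 118]]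

/-- Sample point where the Jacobian does not vanish. -/
def ptJ : Fin 8 → ℤ := ![46, 68, 91, 135, 110, 84, 57, 29]

/-- Sample point used to separate roots. -/
def ptU : Fin 8 → ℤ := ![46, 68, 91, 135, 110, 84, 57, 29]

/-- Sample point used to separate roots. -/
def ptV : Fin 8 → ℤ := ![1739, 2562, 3442, 5121, 4213, 3263, 2243, 1151]

/-- The reduced Jacobian at `ptJ`, modulo `1009`. -/
def jacMod : Matrix (Fin 8) (Fin 8) ℤ :=
  !![30, 30, 30, 30, 30, 30, 30, 30;
     116, 758, 789, 291, 416, 697, 941, 382;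
     190, 280, 919, 958, 697, 980, 895, 959;
     671, 226, 938, 223, 57, 593, 174, 64;
     297, 534, 768, 325, 678, 36, 209, 308;
     935, 380, 89, 972, 251, 165, 319, 768;
     930, 321, 84, 818, 157, 73, 467, 816;
     896, 182, 913, 277, 436, 841, 45, 145]

/-- Inverse of `jacMod` modulo `1009`. -/
def jacInv : Matrix (Fin 8) (Fin 8) ℤ :=
  !![736, 558, 471, 209, 414, 635, 452, 318;
     624, 556, 1003, 481, 634, 572, 867, 759;
     1005, 520, 84, 409, 504, 760, 624, 261;
     21, 791, 898, 472, 202, 262, 248, 298;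
     29, 215, 294, 754, 229, 695, 124, 858;
     654, 102, 786, 830, 424, 478, 895, 43;
     505, 165, 865, 628, 615, 429, 623, 699;
     832, 120, 644, 253, 5, 205, 203, 800]

namespace E8Proof

/-- The `n`-th positive root. -/
def rt (n : Fin 120) (k : Fin 8) : ℤ := 
  ((rootList.getD n 0 / 10 ^ (7 - k.val) % 10 : ℕ) : ℤ) - 3

/-- The permutation of roots up to sign induced by the simple reflection `i`. -/
def pm (i : Fin 8) (n : Fin 120) : Fin 120 := (permList.getD i []).getD n 0

/-- The simple reflection on integral linear forms. -/
def rf (i : Fin 8) (c : Fin 8 → ℤ) : Fin 8 → ℤ := fun k => c k - c i * cartanZ k i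

/-- Evaluation of an integral linear form. -/
def dotZ (c p : Fin 8 → ℤ) : ℤ :=
  c 0 * p 0 + c 1 * p 1 + c 2 * p 2 + c 3 * p 3 + c 4 * p 4 + c 5 * p 5 + c 6 * p 6 + c 7 * p 7

/-- The degrees. -/
def deg : Fin 8 → ℕ := ![2, 8, 12, 14, 18, 20, 24, 30]

lemma rf_rt : ∀ i n, rf i (rt n) = rt (pm i n) ∨ rf i (rt n) = fun k => - rt (pm i n) k := by
  decide +kernel

lemma pm_pm : ∀ i n, pm i (pm i n) = n := by
  decide +kernel

lemma rt_simple : ∀ i : Fin 8, rt (i.castLE (by norm_num)) = fun k => cartanZ k i := by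
  decide +kernel

lemma pm_lt : ∀ n : Fin 120, 8 ≤ n.val → ∃ i, pm i n < n := by
  decide +kernel

lemma rt_sep : ∀ a b : Fin 120, a ≠ b →
    dotZ (rt a) ptV * dotZ (rt b) ptU - dotZ (rt a) ptU * dotZ (rt b) ptV ≠ 0 := by
  decide +kernel

lemma rt_ne : ∀ a : Fin 120, ∃ k, rt a k ≠ 0 := by
  decide +kernel

/-- The Jacobian at the sample point, without the factors `deg k`. -/
def jacE : Matrix (Fin 8) (Fin 8) ℤ := fun k j =>
  ∑ n : Fin 120, rt n j * dotZ (rt n) ptJ ^ (deg k - 1)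

lemma jac_mod : ∀ k j : Fin 8, (jacE k j - jacMod k j) % 1009 = 0 := by
  decide +kernel

lemma jac_inv : ∀ i j : Fin 8, (∑ k, jacMod i k * jacInv k j) % 1009 = if i = j then 1 else 0 := by
  decide +kernel

end E8Proof

namespace E8Proof

open MvPolynomial

/-- Shorthand for the polynomial ring. -/
abbrev S8 := MvPolynomial (Fin 8) ℚ

/-- The linear form with given integral coefficients. -/
noncomputable def lin (c : Fin 8 → ℤ) : S8 := ∑ k, C (c k : ℚ) * X k

/-- The action of the simple reflection `i`. -/
noncomputable def sg (i : Fin 8) : S8 →ₐ[ℚ] S8 := polyAct (sE8 i)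

lemma cartan_cast (i j : Fin 8) : cartanE8 i j = (cartanZ i j : ℚ) := by
  fin_cases i <;> fin_cases j <;> simp [cartanE8, cartanZ]

lemma sg_X (i k : Fin 8) :
    sg i (X k) = X k - if k = i then lin (fun j => cartanZ j i) else 0 := by
  have h : ∀ j : Fin 8, reflE8 i (Pi.single j 1) k =
      (if k = j then 1 else 0) - if k = i then (cartanZ j i : ℚ) else 0 := by
    intro j
    have : phiE8 i (Pi.single j 1) = cartanE8 j i := by
      rw [phiE8_apply, Finset.sum_eq_single j] <;> simp +contextual [Pi.single_apply]
    simp [reflE8, this, Pi.single_apply, cartan_cast]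
  have h2 : sg i (X k) = ∑ j, C (reflE8 i (Pi.single j 1) k) * X j := by
    simp only [sg, polyAct, aeval_X]
    rfl
  rw [h2]
  simp only [h, map_sub, sub_mul, Finset.sum_sub_distrib, lin]
  congr 1
  · rw [Finset.sum_eq_single k] <;> simp +contextual [eq_comm]
  · split_ifs <;> simp

lemma sg_lin (i : Fin 8) (c : Fin 8 → ℤ) : sg i (lin c) = lin (rf i c) := by
  have : sg i (lin c) = ∑ k, C (c k : ℚ) * sg i (X k) := by
    simp [lin, map_sum, ← MvPolynomial.algebraMap_eq]
  rw [this]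
  simp only [sg_X, mul_sub, Finset.sum_sub_distrib, mul_ite, mul_zero, Finset.sum_ite_eq',
    Finset.mem_univ, if_true]
  simp only [lin, rf, Finset.mul_sum, ← Finset.sum_sub_distrib]
  refine Finset.sum_congr rfl fun k _ => ?_
  push_cast
  simp only [map_sub, map_mul]
  ring

lemma lin_neg (c : Fin 8 → ℤ) : lin (fun k => - c k) = - lin c := by
  simp [lin]

lemma lin_homog (c : Fin 8 → ℤ) : (lin c).IsHomogeneous 1 := by
  apply IsHomogeneous.sum
  intro k _
  simpa using (isHomogeneous_C (Fin 8) (c k : ℚ)).mul (isHomogeneous_X ℚ k)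

lemma lin_dvd_iff (i : Fin 8) (n : Fin 120) (P : S8) :
    lin (rf i (rt n)) ∣ P ↔ lin (rt (pm i n)) ∣ P := by
  rcases rf_rt i n with h | h
  · rw [h]
  · rw [h, lin_neg, neg_dvd]

/-- The basic invariants: power sums of the positive roots. -/
noncomputable def Iv (k : Fin 8) : S8 := ∑ n, lin (rt n) ^ deg k

lemma Iv_homog (k : Fin 8) : (Iv k).IsHomogeneous (deg k) := by
  apply IsHomogeneous.sum
  intro n _
  simpa using (lin_homog (rt n)).pow (deg k)

lemma deg_even (k : Fin 8) : Even (deg k) := by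
  revert k; decide

lemma sg_Iv (i k : Fin 8) : sg i (Iv k) = Iv k := by
  have h : ∀ n, sg i (lin (rt n) ^ deg k) = lin (rt (pm i n)) ^ deg k := by
    intro n
    rw [map_pow, sg_lin]
    rcases rf_rt i n with h | h
    · rw [h]
    · rw [h, lin_neg, (deg_even k).neg_pow]
  rw [Iv, map_sum]
  simp only [h]
  exact Equiv.sum_comp (Function.Involutive.toPerm (pm i) (pm_pm i)) (fun n => lin (rt n) ^ deg k)

/-! Group action facts -/

lemma polyAct_one (f : S8) : polyAct 1 f = f := by
  have : polyAct 1 = AlgHom.id ℚ S8 := by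
    ext1 i
    simp only [polyAct, aeval_X, AlgHom.id_apply]
    rw [Finset.sum_eq_single i] <;> simp +contextual [Pi.single_apply, eq_comm]
  rw [this]; rfl

lemma polyAct_mul (g h : (Module.End ℚ (Fin 8 → ℚ))ˣ) (f : S8) :
    polyAct (g * h) f = polyAct g (polyAct h f) := by
  have : polyAct (g * h) = (polyAct g).comp (polyAct h) := by
    ext1 i
    have key : ∀ v : Fin 8 → ℚ, (((h⁻¹ : (Module.End ℚ (Fin 8 → ℚ))ˣ) :
        Module.End ℚ (Fin 8 → ℚ)) v) i = ∑ j, v j * (((h⁻¹ : (Module.End ℚ (Fin 8 → ℚ))ˣ) :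
        Module.End ℚ (Fin 8 → ℚ)) (Pi.single j 1)) i := by
      intro v
      conv_lhs => rw [pi_eq_sum_univ' v]
      simp [map_sum]
    simp only [AlgHom.comp_apply, polyAct, aeval_X, map_sum, map_mul, mul_inv_rev, Units.val_mul,
      Module.End.mul_apply, aeval_C, MvPolynomial.algebraMap_eq]
    simp only [key (((g⁻¹ : (Module.End ℚ (Fin 8 → ℚ))ˣ) : Module.End ℚ (Fin 8 → ℚ)) _), map_sum,
      Finset.sum_mul, Finset.mul_sum, map_mul]
    rw [Finset.sum_comm]
    refine Finset.sum_congr rfl fun a _ => Finset.sum_congr rfl fun b _ => by ring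
  rw [this]; rfl

lemma inv_iff (f : S8) : (∀ g ∈ WeylE8, polyAct g f = f) ↔ ∀ i, sg i f = f := by
  constructor
  · intro h i
    exact h _ (Subgroup.subset_closure ⟨i, rfl⟩)
  · intro h g hg
    induction hg using Subgroup.closure_induction with
    | mem x hx => obtain ⟨i, rfl⟩ := hx; exact h i
    | one => exact polyAct_one f
    | mul x y _ _ hx hy => rw [polyAct_mul, hy, hx]
    | inv x _ hx =>
      conv_lhs => rw [← hx]
      rw [← polyAct_mul, inv_mul_cancel, polyAct_one]

/-! Anti-invariants -/

lemma sg_sub_dvd (i : Fin 8) (P : S8) : lin (fun j => cartanZ j i) ∣ sg i P - P := by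
  rw [← Ideal.mem_span_singleton, ← Ideal.Quotient.eq]
  have : (Ideal.Quotient.mkₐ ℚ (Ideal.span {lin (fun j => cartanZ j i)})).comp (sg i) =
      Ideal.Quotient.mkₐ ℚ (Ideal.span {lin (fun j => cartanZ j i)}) := by
    ext1 k
    simp only [AlgHom.comp_apply, Ideal.Quotient.mkₐ_eq_mk, sg_X]
    rw [Ideal.Quotient.eq, Ideal.mem_span_singleton]
    split_ifs <;> simp
  exact DFunLike.congr_fun this P

lemma root_dvd (P : S8) (hP : ∀ i, sg i P = - P) (n : Fin 120) : lin (rt n) ∣ P := by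
  induction n using WellFoundedLT.induction with
  | ind n ih =>
  by_cases hn : n.val < 8
  · have h1 := rt_simple ⟨n.val, hn⟩
    have h2 : (Fin.castLE (by norm_num) (⟨n.val, hn⟩ : Fin 8) : Fin 120) = n := rfl
    rw [h2] at h1
    rw [h1]
    have h3 := sg_sub_dvd ⟨n.val, hn⟩ P
    rw [hP] at h3
    have h4 : P = C (-1 / 2 : ℚ) * (-P - P) := by
      have : (-P - P) = C (-2 : ℚ) * P := by
        simp only [map_neg, map_ofNat]; ring
      rw [this, ← mul_assoc, ← C_mul]; norm_num
    rw [h4]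
    exact h3.mul_left _
  · obtain ⟨i, hi⟩ := pm_lt n (by omega)
    have h1 := map_dvd (sg i) (ih _ hi)
    rw [sg_lin, hP, dvd_neg, lin_dvd_iff, pm_pm] at h1
    exact h1

lemma eval_lin (c : Fin 8 → ℤ) (p : Fin 8 → ℚ) : eval p (lin c) = ∑ k, (c k : ℚ) * p k := by
  simp [lin]

lemma eval_lin_int (c p : Fin 8 → ℤ) : eval (fun k => (p k : ℚ)) (lin c) = (dotZ c p : ℚ) := by
  simp [eval_lin, dotZ, Fin.sum_univ_eight]

lemma coeff_lin (c : Fin 8 → ℤ) (i : Fin 8) : coeff (Finsupp.single i 1) (lin c) = c i := by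
  simp only [lin, coeff_sum, coeff_C_mul]
  rw [Finset.sum_eq_single i] <;> simp +contextual [coeff_X, Finsupp.single_left_inj]

lemma lin_ne_zero (n : Fin 120) : lin (rt n) ≠ 0 := by
  intro h
  obtain ⟨k, hk⟩ := rt_ne n
  have := coeff_lin (rt n) k
  rw [h, coeff_zero] at this
  exact hk (by exact_mod_cast this.symm)

lemma lin_irred (n : Fin 120) : Irreducible (lin (rt n)) := by
  apply irreducible_of_totalDegree_eq_one
  · exact (lin_homog _).totalDegree (lin_ne_zero n)
  · intro x hx
    obtain ⟨k, hk⟩ := rt_ne n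
    have := hx (Finsupp.single k 1)
    rw [coeff_lin] at this
    rw [isUnit_iff_ne_zero]
    rintro rfl
    exact hk (by exact_mod_cast zero_dvd_iff.1 this)

lemma lin_not_dvd (a b : Fin 120) (hab : a ≠ b) : ¬ lin (rt a) ∣ lin (rt b) := by
  rintro ⟨h, hh⟩
  let z : Fin 8 → ℤ := fun k => dotZ (rt a) ptV * ptU k - dotZ (rt a) ptU * ptV k
  have hz : ∀ c, dotZ c z = dotZ (rt a) ptV * dotZ c ptU - dotZ (rt a) ptU * dotZ c ptV := by
    intro c
    simp only [dotZ, z]; ring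
  have h1 := congrArg (eval (fun k => (z k : ℚ))) hh
  rw [map_mul, eval_lin_int, eval_lin_int, hz, hz] at h1
  have h2 : dotZ (rt a) ptV * dotZ (rt a) ptU - dotZ (rt a) ptU * dotZ (rt a) ptV = 0 := by ring
  rw [h2, Int.cast_zero, zero_mul] at h1
  exact rt_sep a b hab (by exact_mod_cast h1)

/-- Product of the positive roots. -/
noncomputable def Pi8 : S8 := ∏ n, lin (rt n)

lemma Pi8_dvd (P : S8) (hP : ∀ i, sg i P = - P) : Pi8 ∣ P := by
  apply Finset.prod_dvd_of_isRelPrime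
  · intro a _ b _ hab
    exact (lin_irred a).isRelPrime_iff_not_dvd.2 (lin_not_dvd a b hab)
  · intro n _
    exact root_dvd P hP n

lemma Pi8_ne : Pi8 ≠ 0 := Finset.prod_ne_zero_iff.2 fun n _ => lin_ne_zero n

lemma Pi8_deg : Pi8.totalDegree = 120 := by
  have h : Pi8.IsHomogeneous (∑ _n : Fin 120, 1) := IsHomogeneous.prod _ _ _ fun n _ => lin_homog _
  have := h.totalDegree Pi8_ne
  simpa using this

end E8Proof

namespace E8Proof

open MvPolynomial

/-! Jacobians -/

/-- Jacobian matrix -/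
noncomputable def jac (F : Fin 8 → S8) : Matrix (Fin 8) (Fin 8) S8 :=
  Matrix.of fun k j => pderiv j (F k)

lemma chain (G : Fin 8 → S8) (j : Fin 8) (P : S8) :
    pderiv j (aeval G P) = ∑ l, aeval G (pderiv l P) * pderiv j (G l) := by
  induction P using MvPolynomial.induction_on with
  | C a => simp
  | add p q hp hq => simp only [map_add, hp, hq, add_mul, Finset.sum_add_distrib]
  | mul_X p i hp =>
    simp only [map_mul, aeval_X, Derivation.leibniz, hp, map_add, smul_eq_mul, pderiv_X, add_mul,
      Finset.sum_add_distrib]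
    congr 1
    · rw [Finset.sum_eq_single i]
      · simp only [Pi.single_eq_same, map_one, mul_one]
      · intro b _ hb
        rw [Pi.single_eq_of_ne hb.symm]; simp
      · simp
    · simp only [Finset.mul_sum, mul_assoc]

lemma pderiv_lin (c : Fin 8 → ℤ) (j : Fin 8) : pderiv j (lin c) = C (c j : ℚ) := by
  simp only [lin, map_sum, Derivation.leibniz, pderiv_X, pderiv_C, smul_eq_mul, mul_zero,
    add_zero]
  rw [Finset.sum_eq_single j]
  · simp
  · intro b _ hb
    rw [Pi.single_eq_of_ne hb]; simp
  · simp

lemma sg_jac (i : Fin 8) (F : Fin 8 → S8) (hF : ∀ k, sg i (F k) = F k) :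
    sg i (jac F).det = - (jac F).det := by
  let B : Matrix (Fin 8) (Fin 8) S8 := Matrix.of fun l j => pderiv j (sg i (X l))
  have h1 : jac F = (jac F).map (sg i) * B := by
    ext1 k j
    simp only [jac, Matrix.mul_apply, Matrix.map_apply, Matrix.of_apply, B]
    conv_lhs => rw [← hF k]
    have := chain (fun l => sg i (X l)) j (F k)
    have h2 : aeval (fun l => sg i (X l)) = sg i := by
      ext1 l; simp
    rwa [h2] at this
  have hB : B.det = -1 := by
    let u : Fin 8 → S8 := Pi.single i (-1)
    let v : Fin 8 → S8 := fun j => C (cartanZ j i : ℚ)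
    let U : Matrix (Fin 8) Unit S8 := Matrix.replicateCol Unit u
    let V : Matrix Unit (Fin 8) S8 := Matrix.replicateRow Unit v
    have : B = 1 + U * V := by
      ext1 l j
      have hm : (U * V) l j = u l * v j := by
        simp [U, V, Matrix.mul_apply]
      rw [Matrix.add_apply, hm, Matrix.one_apply]
      simp only [B, Matrix.of_apply, sg_X, map_sub, pderiv_X, u, v]
      rw [sub_eq_add_neg]
      congr 1
      · simp [Pi.single_apply, eq_comm]
      · split_ifs with h
        · subst h; simp [pderiv_lin]
        · simp [h]
    rw [this, Matrix.det_one_add_replicateCol_mul_replicateRow]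
    have hc : cartanZ i i = 2 := by fin_cases i <;> rfl
    have h2 : (C ((2 : ℤ) : ℚ) : S8) = 2 := by rw [Int.cast_ofNat]; exact map_ofNat C 2
    simp only [u, v, dotProduct_single, hc, h2]
    norm_num
  have h2 : (jac F).det = sg i (jac F).det * (-1) := by
    conv_lhs => rw [h1, Matrix.det_mul, hB]
    rw [AlgHom.map_det]; rfl
  linear_combination h2

/-- The Jacobian determinant of the basic invariants. -/
noncomputable def J8 : S8 := (jac Iv).det

lemma eval_jac (k j : Fin 8) :
    eval (fun k => (ptJ k : ℚ)) (jac Iv k j) = (deg k : ℚ) * (jacE k j : ℚ) := by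
  simp only [jac, Matrix.of_apply, Iv, map_sum, jacE, Int.cast_sum, Finset.mul_sum]
  refine Finset.sum_congr rfl fun n _ => ?_
  simp only [Derivation.leibniz_pow, pderiv_lin, map_mul, smul_eq_mul, map_pow, eval_lin_int,
    eval_C, nsmul_eq_mul, map_natCast]
  push_cast
  ring

lemma jacE_det : jacE.det ≠ 0 := by
  intro h
  let f := Int.castRingHom (ZMod 1009)
  have h1 : jacE.map f = jacMod.map f := by
    ext k j
    simp only [Matrix.map_apply, f, eq_intCast]
    rw [ZMod.intCast_eq_intCast_iff_dvd_sub, ← dvd_neg, neg_sub]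
    exact Int.dvd_of_emod_eq_zero (jac_mod k j)
  have h2 : jacMod.map f * jacInv.map f = 1 := by
    rw [← Matrix.map_mul]
    ext i j
    rw [Matrix.map_apply, Matrix.mul_apply, Matrix.one_apply]
    have := jac_inv i j
    have h3 : f (∑ k, jacMod i k * jacInv k j) =
        f ((∑ k, jacMod i k * jacInv k j) % 1009) := by
      simp only [f, eq_intCast]
      exact ((ZMod.intCast_mod _ 1009)).symm
    rw [h3, this]
    split_ifs <;> simp
  have h3 : f jacE.det = 0 := by rw [h, map_zero]
  rw [RingHom.map_det] at h3
  change (jacE.map f).det = 0 at h3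
  have h4 := congrArg Matrix.det h2
  rw [Matrix.det_mul, ← h1, h3, zero_mul, Matrix.det_one] at h4
  exact absurd h4 (by decide)

lemma deg_pos (k : Fin 8) : 0 < deg k := by
  revert k; decide

lemma deg_two (k : Fin 8) : 2 ≤ deg k := by
  revert k; decide

lemma J8_ne : J8 ≠ 0 := by
  intro h
  have h1 := congrArg (eval (fun k => (ptJ k : ℚ))) h
  rw [map_zero, J8, RingHom.map_det] at h1
  have h2 : (eval (fun k => (ptJ k : ℚ))).mapMatrix (jac Iv) =
      Matrix.diagonal (fun k => (deg k : ℚ)) * jacE.map (Int.castRingHom ℚ) := by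
    ext k j
    rw [Matrix.diagonal_mul]
    simpa using eval_jac k j
  rw [h2, Matrix.det_mul, Matrix.det_diagonal] at h1
  have h3 : (jacE.map (Int.castRingHom ℚ)).det = ((jacE.det : ℤ) : ℚ) := by
    have := RingHom.map_det (Int.castRingHom ℚ) jacE
    rw [eq_intCast] at this
    rw [this]; rfl
  rw [h3] at h1
  rcases mul_eq_zero.1 h1 with h4 | h4
  · obtain ⟨k, _, hk⟩ := Finset.prod_eq_zero_iff.1 h4
    exact (deg_pos k).ne' (by exact_mod_cast hk)
  · exact jacE_det (by exact_mod_cast h4)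

lemma det_homog (M : Matrix (Fin 8) (Fin 8) S8) (e : Fin 8 → ℕ)
    (h : ∀ k j, (M k j).IsHomogeneous (e k)) : M.det.IsHomogeneous (∑ k, e k) := by
  rw [← Matrix.det_transpose, Matrix.det_apply]
  apply IsHomogeneous.sum
  intro s _
  have h1 : (∏ i, M.transpose (s i) i).IsHomogeneous (∑ k, e k) :=
    IsHomogeneous.prod _ _ _ fun i _ => h i (s i)
  rcases Int.units_eq_one_or (Equiv.Perm.sign s) with h2 | h2
  · rw [h2, one_smul]; exact h1
  · rw [h2, Units.neg_smul, one_smul]; exact h1.neg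

lemma J8_homog : J8.IsHomogeneous 120 := by
  have : (∑ k, (deg k - 1)) = 120 := by decide
  rw [← this]
  exact det_homog _ _ fun k j => (Iv_homog k).pderiv

lemma J8_deg : J8.totalDegree = 120 := J8_homog.totalDegree J8_ne

/-- `J8` is a nonzero multiple of the product of positive roots. -/
lemma J8_dvd (P : S8) (hP : ∀ i, sg i P = - P) : J8 ∣ P := by
  obtain ⟨c, hc⟩ := Pi8_dvd J8 fun i => sg_jac i Iv (sg_Iv i)
  have hc0 : c ≠ 0 := by
    rintro rfl
    exact J8_ne (by rw [hc, mul_zero])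
  have h1 := J8_deg
  rw [hc, totalDegree_mul_of_isDomain Pi8_ne hc0, Pi8_deg] at h1
  have h2 : c.totalDegree = 0 := by omega
  rw [totalDegree_eq_zero_iff_eq_C] at h2
  have h3 : IsUnit c := by
    rw [h2]
    apply IsUnit.map
    rw [isUnit_iff_ne_zero]
    intro h
    exact hc0 (by rw [h2, h, C_0])
  rw [hc, h3.mul_right_dvd]
  exact Pi8_dvd P hP

/-! Algebraic independence -/

lemma totalDegree_pderiv_lt (m : ℕ) (P : S8) (hP : P.totalDegree ≤ m + 1) (l : Fin 8) :
    (pderiv l P).totalDegree ≤ m := by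
  rw [← sum_homogeneousComponent P, map_sum]
  refine totalDegree_finsetSum_le fun n hn => ?_
  rw [Finset.mem_range] at hn
  have := ((homogeneousComponent_isHomogeneous n P).pderiv (i := l)).totalDegree_le
  omega

lemma eq_C_of_pderiv (P : S8) (hP : ∀ l, pderiv l P = 0) : P = C (coeff 0 P) := by
  have h1 : ∑ n ∈ Finset.range (P.totalDegree + 1), n • homogeneousComponent n P = 0 := by
    have h2 : ∑ l, X l * pderiv l P = 0 := by simp [hP]
    rw [← h2]
    conv_rhs => rw [← sum_homogeneousComponent P]
    simp only [map_sum, Finset.mul_sum]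
    rw [Finset.sum_comm]
    exact Finset.sum_congr rfl fun n _ =>
      (homogeneousComponent_isHomogeneous n P).sum_X_mul_pderiv.symm
  have h3 : ∀ m ∈ Finset.range (P.totalDegree + 1), m ≠ 0 → homogeneousComponent m P = 0 := by
    intro m hm h0
    have h4 := congrArg (homogeneousComponent m) h1
    rw [map_zero, map_sum, Finset.sum_eq_single m] at h4
    · rw [map_nsmul, homogeneousComponent_eq_self (homogeneousComponent_isHomogeneous m P)] at h4
      exact (smul_eq_zero.1 h4).resolve_left h0
    · intro b _ hb
      rw [map_nsmul, homogeneousComponent_of_mem (homogeneousComponent_isHomogeneous b P),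
        if_neg hb.symm, smul_zero]
    · intro h; exact absurd hm h
  conv_lhs => rw [← sum_homogeneousComponent P]
  rw [Finset.sum_eq_single 0 h3 (by simp), homogeneousComponent_zero]

lemma algInd_aux (m : ℕ) : ∀ P : S8, P.totalDegree ≤ m → aeval Iv P = 0 → P = 0 := by
  induction m with
  | zero =>
    intro P hP h
    rw [Nat.le_zero, totalDegree_eq_zero_iff_eq_C] at hP
    rw [hP] at h ⊢
    simpa using h
  | succ m ih =>
    intro P hP h
    have h1 : Matrix.vecMul (fun l => aeval Iv (pderiv l P)) (jac Iv) = 0 := by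
      ext1 j
      have := chain Iv j P
      rw [h, map_zero] at this
      exact this.symm
    have h2 := Matrix.eq_zero_of_vecMul_eq_zero J8_ne h1
    have h3 : ∀ l, pderiv l P = 0 := by
      intro l
      apply ih _ _ (congrFun h2 l)
      exact totalDegree_pderiv_lt m P hP l
    have h4 := eq_C_of_pderiv P h3
    rw [h4] at h ⊢
    simpa using h

lemma algInd : AlgebraicIndependent ℚ Iv := by
  rw [algebraicIndependent_iff]
  intro P hP
  exact algInd_aux _ P le_rfl hP

/-! Generation -/

lemma hc_inv (i : Fin 8) (f : S8) (hf : sg i f = f) (n : ℕ) :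
    sg i (homogeneousComponent n f) = homogeneousComponent n f := by
  have h1 : ∀ m, (sg i (homogeneousComponent m f)).IsHomogeneous m := by
    intro m
    have := (homogeneousComponent_isHomogeneous m f).aeval (fun l => sg i (X l)) (n := 1) (by
      intro l
      rw [sg_X]
      refine (isHomogeneous_X _ _).sub ?_
      split_ifs
      · exact lin_homog _
      · exact isHomogeneous_zero _ _ _)
    have h2 : aeval (fun l => sg i (X l)) = sg i := by
      ext1 l; simp
    rwa [h2, one_mul] at this
  conv_rhs => rw [← hf, ← sum_homogeneousComponent f]
  rw [map_sum, map_sum]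
  have h2 : ∀ m, homogeneousComponent n (sg i (homogeneousComponent m f)) =
      if n = m then sg i (homogeneousComponent m f) else 0 := fun m =>
    homogeneousComponent_of_mem (h1 m)
  simp only [h2, Finset.sum_ite_eq, Finset.mem_range]
  split_ifs with h
  · rfl
  · rw [homogeneousComponent_eq_zero _ _ (by omega), map_zero]

lemma gen_step (n : ℕ) (hn : 0 < n) (f : S8) (hf : ∀ i, sg i f = f) (hh : f.IsHomogeneous n)
    (ih : ∀ g : S8, g.totalDegree < n → (∀ i, sg i g = g) → g ∈ Algebra.adjoin ℚ (Set.range Iv)) :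
    f ∈ Algebra.adjoin ℚ (Set.range Iv) := by
  let F : Fin 8 → Fin 8 → S8 := fun l => Function.update Iv l f
  have hF : ∀ l i k, sg i (F l k) = F l k := by
    intro l i k
    by_cases h : k = l
    · subst h; simp [F, hf]
    · simp [F, h, sg_Iv]
  have hdiv : ∀ l, ∃ g, (jac (F l)).det = J8 * g := fun l =>
    J8_dvd _ fun i => sg_jac i _ (hF l i)
  choose g hg using hdiv
  have hinv : ∀ l i, sg i (g l) = g l := by
    intro l i
    have h1 := sg_jac i _ (hF l i)
    have h2 : sg i J8 = - J8 := sg_jac i Iv (sg_Iv i)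
    rw [hg, map_mul, h2, neg_mul, neg_inj] at h1
    exact mul_left_cancel₀ J8_ne h1
  have hdeg : ∀ l, (g l).totalDegree < n := by
    intro l
    by_cases h0 : g l = 0
    · rw [h0, totalDegree_zero]; exact hn
    have h1 : (jac (F l)).det.IsHomogeneous
        (∑ k, Function.update (fun k => deg k - 1) l (n - 1) k) := by
      apply det_homog
      intro k j
      simp only [jac, Matrix.of_apply, F]
      by_cases h : k = l
      · subst h; simpa using hh.pderiv
      · simpa [h] using (Iv_homog k).pderiv
    have h2 := h1.totalDegree_le
    rw [hg, totalDegree_mul_of_isDomain J8_ne h0, J8_deg] at h2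
    have h3 : ∑ k, Function.update (fun k => deg k - 1) l (n - 1) k + 1 ≤ 120 + (n - 1) := by
      rw [Finset.sum_update_of_mem (Finset.mem_univ l)]
      have h4 : ∑ k, (deg k - 1) = 120 := by decide
      rw [← Finset.add_sum_erase _ _ (Finset.mem_univ l)] at h4
      have h5 : 2 ≤ deg l := deg_two l
      rw [Finset.sdiff_singleton_eq_erase]
      omega
    omega
  have hpd : ∀ j, pderiv j f = ∑ l, g l * pderiv j (Iv l) := by
    intro j
    have h1 := Matrix.mulVec_cramer (jac Iv).transpose (fun j => pderiv j f)
    have h2 := congrFun h1 j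
    have h3 : ∀ l, Matrix.cramer (jac Iv).transpose (fun j => pderiv j f) l = J8 * g l := by
      intro l
      rw [Matrix.cramer_transpose_apply, ← hg]
      congr 1
      ext1 a b
      by_cases h : a = l
      · subst h; simp [jac, F]
      · simp [jac, F, h, Matrix.updateRow_ne]
    rw [Matrix.det_transpose] at h2
    simp only [Matrix.mulVec, dotProduct, h3] at h2
    simp only [Pi.smul_apply, smul_eq_mul, Matrix.transpose_apply,
      jac, Matrix.of_apply] at h2
    apply mul_left_cancel₀ J8_ne
    refine h2.symm.trans ?_
    rw [Finset.mul_sum]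
    exact Finset.sum_congr rfl fun l _ => by ring
  have hE : n • f = ∑ l, deg l • (g l * Iv l) := by
    rw [← hh.sum_X_mul_pderiv]
    simp only [hpd, Finset.mul_sum]
    rw [Finset.sum_comm]
    refine Finset.sum_congr rfl fun l _ => ?_
    rw [← mul_smul_comm, ← (Iv_homog l).sum_X_mul_pderiv, Finset.mul_sum]
    exact Finset.sum_congr rfl fun j _ => by ring
  have hmem : n • f ∈ Algebra.adjoin ℚ (Set.range Iv) := by
    rw [hE]
    refine Subalgebra.sum_mem _ fun l _ => ?_
    refine Subalgebra.nsmul_mem _ (Subalgebra.mul_mem _ (ih _ (hdeg l) (hinv l)) ?_) _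
    exact Algebra.subset_adjoin ⟨l, rfl⟩
  have : f = (n : ℚ)⁻¹ • (n • f) := by
    rw [← Nat.cast_smul_eq_nsmul ℚ, smul_smul, inv_mul_cancel₀ (by exact_mod_cast hn.ne'), one_smul]
  rw [this]
  exact Subalgebra.smul_mem _ hmem _

lemma gen (m : ℕ) : ∀ f : S8, f.totalDegree ≤ m → (∀ i, sg i f = f) →
    f ∈ Algebra.adjoin ℚ (Set.range Iv) := by
  induction m using Nat.strong_induction_on with
  | h m ih =>
  intro f hm hf
  rw [← sum_homogeneousComponent f]
  refine Subalgebra.sum_mem _ fun n hn => ?_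
  rw [Finset.mem_range] at hn
  rcases Nat.eq_zero_or_pos n with rfl | h0
  · rw [homogeneousComponent_zero]
    exact Subalgebra.algebraMap_mem _ _
  · refine gen_step n h0 _ (fun i => hc_inv i f (hf i) n) (homogeneousComponent_isHomogeneous n f) ?_
    intro g hg hgi
    exact ih g.totalDegree (by omega) g le_rfl hgi

end E8Proof

/-- There exist homogeneous `W(E₈)`-invariant polynomials
`I₂, I₈, I₁₂, I₁₄, I₁₈, I₂₀, I₂₄, I₃₀` of the indicated degrees which are
algebraically independent over `ℚ` and generate the invariant subalgebra
`ℚ[x₁,…,x₈]^{W(E₈)}`. -/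
theorem basic_invariants_of_WE8 :
    ∃ I : Fin 8 → MvPolynomial (Fin 8) ℚ,
      (∀ k : Fin 8, (I k).IsHomogeneous (![2, 8, 12, 14, 18, 20, 24, 30] k)) ∧
      (∀ k : Fin 8, ∀ g ∈ WeylE8, polyAct g (I k) = I k) ∧
      AlgebraicIndependent ℚ I ∧
      (Algebra.adjoin ℚ (Set.range I) : Set (MvPolynomial (Fin 8) ℚ)) =
        {f : MvPolynomial (Fin 8) ℚ | ∀ g ∈ WeylE8, polyAct g f = f} := by
  refine ⟨E8Proof.Iv, E8Proof.Iv_homog, fun k => (E8Proof.inv_iff _).2 fun i => E8Proof.sg_Iv i k,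
    E8Proof.algInd, ?_⟩
  ext f
  simp only [SetLike.mem_coe, Set.mem_ofPred_eq, E8Proof.inv_iff]
  constructor
  · intro hf i
    induction hf using Algebra.adjoin_induction with
    | mem x hx => obtain ⟨k, rfl⟩ := hx; exact E8Proof.sg_Iv i k
    | algebraMap r => exact (E8Proof.sg i).commutes r
    | add x y _ _ hx hy => rw [map_add, hx, hy]
    | mul x y _ _ hx hy => rw [map_mul, hx, hy]
  · intro hf
    exact E8Proof.gen _ f le_rfl hf
end

section
/- The group W(E₈) is finite of order 696729600; that is, the subgroup of GL(ℚ⁸) generated by the eight simple reflections s_1,…,s_8 of type E₈ has exactly 696729600 elements. -/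
open MvPolynomial

/-! ### Integer codes for the roots

A vector with small integer coordinates `x_j` is coded by `∑ j, (x_j + 8) * 16 ^ j`. -/

/-- The place value `16 ^ j`. -/
def place : Fin 8 → ℕ
  | 0 => 1
  | 1 => 16
  | 2 => 256
  | 3 => 4096
  | 4 => 65536
  | 5 => 1048576
  | 6 => 16777216
  | 7 => 268435456

/-- The digit of `c` at a place value. -/
def digit (c p : ℕ) : ℕ := Nat.mod (Nat.div c p) 16

lemma digit_eq (c p : ℕ) : digit c p = c / p % 16 := rfl

/-- The `j`-th coordinate of the vector with code `c`. -/
def codeCoord (c : ℕ) (j : Fin 8) : ℤ := (digit c (place j) : ℤ) - 8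

/-- The functional `phiE8 i` on codes. -/
def codePhi (i : Fin 8) (c : ℕ) : ℤ :=
  match i with
  | 0 => 2 * codeCoord c 0 - codeCoord c 2
  | 1 => 2 * codeCoord c 1 - codeCoord c 3
  | 2 => 2 * codeCoord c 2 - codeCoord c 0 - codeCoord c 3
  | 3 => 2 * codeCoord c 3 - codeCoord c 1 - codeCoord c 2 - codeCoord c 4
  | 4 => 2 * codeCoord c 4 - codeCoord c 3 - codeCoord c 5
  | 5 => 2 * codeCoord c 5 - codeCoord c 4 - codeCoord c 6
  | 6 => 2 * codeCoord c 6 - codeCoord c 5 - codeCoord c 7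
  | 7 => 2 * codeCoord c 7 - codeCoord c 6

/-- The positive part of `codePhi`, as a natural number. -/
def phiPos (i : Fin 8) (c : ℕ) : ℕ :=
  match i with
  | 0 => Nat.add (Nat.mul 2 (digit c 1)) 8
  | 1 => Nat.add (Nat.mul 2 (digit c 16)) 8
  | 2 => Nat.add (Nat.mul 2 (digit c 256)) 16
  | 3 => Nat.add (Nat.mul 2 (digit c 4096)) 24
  | 4 => Nat.add (Nat.mul 2 (digit c 65536)) 16
  | 5 => Nat.add (Nat.mul 2 (digit c 1048576)) 16
  | 6 => Nat.add (Nat.mul 2 (digit c 16777216)) 16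
  | 7 => Nat.add (Nat.mul 2 (digit c 268435456)) 8

/-- The negative part of `codePhi`, as a natural number. -/
def phiNeg (i : Fin 8) (c : ℕ) : ℕ :=
  match i with
  | 0 => Nat.add 16 (digit c 256)
  | 1 => Nat.add 16 (digit c 4096)
  | 2 => Nat.add (Nat.add 16 (digit c 1)) (digit c 4096)
  | 3 => Nat.add (Nat.add (Nat.add 16 (digit c 16)) (digit c 256)) (digit c 65536)
  | 4 => Nat.add (Nat.add 16 (digit c 4096)) (digit c 1048576)
  | 5 => Nat.add (Nat.add 16 (digit c 65536)) (digit c 16777216)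
  | 6 => Nat.add (Nat.add 16 (digit c 1048576)) (digit c 268435456)
  | 7 => Nat.add 16 (digit c 16777216)

lemma codePhi_eq (i : Fin 8) (c : ℕ) : codePhi i c = (phiPos i c : ℤ) - phiNeg i c := by
  fin_cases i <;> simp [codePhi, phiPos, phiNeg, codeCoord, place] <;> ring

/-- The reflection `s_i` on codes. -/
def codeRefl (i : Fin 8) (c : ℕ) : ℕ :=
  Nat.sub (Nat.add c (Nat.mul (phiNeg i c) (place i))) (Nat.mul (phiPos i c) (place i))

/-- The invariant bilinear form on codes. -/
def codeForm (c d : ℕ) : ℤ :=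
  codeCoord c 0 * codePhi 0 d + codeCoord c 1 * codePhi 1 d + codeCoord c 2 * codePhi 2 d +
  codeCoord c 3 * codePhi 3 d + codeCoord c 4 * codePhi 4 d + codeCoord c 5 * codePhi 5 d +
  codeCoord c 6 * codePhi 6 d + codeCoord c 7 * codePhi 7 d

/-- The list of all indices. -/
def allIdx : List (Fin 8) := [0, 1, 2, 3, 4, 5, 6, 7]

lemma mem_allIdx (i : Fin 8) : i ∈ allIdx := by
  fin_cases i <;> simp [allIdx]

/-- The codes of the 240 roots in increasing order, in blocks preceded by their last entry. -/
def rootBlocks : List (ℕ × List ℕ) :=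
  [(1985299815, [1698899030, 1967334486, 1984111702, 1985160278, 1985225814, 1985229910,
     1985229926, 1985230166, 1985230167, 1985230182, 1985230183, 1985234278, 1985234279,
     1985234535, 1985299814, 1985299815]),
   (2003125863, [1985300071, 1985304167, 1985304183, 1986348390, 1986348391, 1986348647,
     1986352743, 1986352759, 1986418279, 1986418295, 1986422391, 1986422647, 1986422648,
     2003125606, 2003125607, 2003125863]),
   (2004318071, [2003129959, 2003129975, 2003195495, 2003195511, 2003199607, 2003199863,
     2003199864, 2004244071, 2004244087, 2004248183, 2004248439, 2004248440, 2004313719,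
     2004313975, 2004313976, 2004318071]),
   (2271630967, [2004318072, 2004318087, 2004318088, 2004318328, 2004318344, 2004322440,
     2004387976, 2005436552, 2022213768, 2271561062, 2271561063, 2271561319, 2271565415,
     2271565431, 2271630951, 2271630967]),
   (2272753784, [2271635063, 2271635319, 2271635320, 2272679527, 2272679543, 2272683639,
     2272683895, 2272683896, 2272749175, 2272749431, 2272749432, 2272753527, 2272753528,
     2272753543, 2272753544, 2272753784]),
   (2289530760, [2272753800, 2272757896, 2272823432, 2273872008, 2289456743, 2289456759,
     2289460855, 2289461111, 2289461112, 2289526391, 2289526647, 2289526648, 2289530743,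
     2289530744, 2289530759, 2289530760]),
   (2290644856, [2289531000, 2289531016, 2289535112, 2289600648, 2290574967, 2290575223,
     2290575224, 2290579319, 2290579320, 2290579335, 2290579336, 2290579576, 2290579592,
     2290583688, 2290644855, 2290644856]),
   (2290653577, [2290644871, 2290644872, 2290645112, 2290645128, 2290648967, 2290648968,
     2290649208, 2290649223, 2290649225, 2290649240, 2290649480, 2290649481, 2290653320,
     2290653336, 2290653576, 2290653577]),
   (2291767448, [2290653592, 2290653593, 2290714760, 2290718856, 2290718872, 2290719112,
     2290719113, 2290719128, 2290719129, 2290723224, 2290723225, 2290723481, 2291697800,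
     2291763336, 2291767432, 2291767448]),
   (2308544648, [2291767688, 2291767689, 2291767704, 2291767705, 2291771800, 2291771801,
     2291772057, 2291837336, 2291837337, 2291837593, 2291841689, 2291841705, 2307426440,
     2308475016, 2308540552, 2308544648]),
   (2309663385, [2308544664, 2308544904, 2308544905, 2308544920, 2308544921, 2308549016,
     2308549017, 2308549273, 2308614552, 2308614553, 2308614809, 2308618905, 2308618921,
     2309663128, 2309663129, 2309663385]),
   (2576980376, [2309667481, 2309667497, 2309733017, 2309733033, 2309737129, 2309737385,
     2309737386, 2559084680, 2575861896, 2576910472, 2576976008, 2576980104, 2576980120,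
     2576980360, 2576980361, 2576980376]),
   (2578168489, [2576980377, 2576984472, 2576984473, 2576984729, 2577050008, 2577050009,
     2577050265, 2577054361, 2577054377, 2578098584, 2578098585, 2578098841, 2578102937,
     2578102953, 2578168473, 2578168489]),
   (2595998377, [2578172585, 2578172841, 2578172842, 2594875800, 2594875801, 2594876057,
     2594880153, 2594880169, 2594945689, 2594945705, 2594949801, 2594950057, 2594950058,
     2595994265, 2595994281, 2595998377]),
   (2882399418, [2595998633, 2595998634, 2596063913, 2596064169, 2596064170, 2596068265,
     2596068266, 2596068281, 2596068282, 2596068522, 2596068538, 2596072634, 2596138170,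
     2597186746, 2613963962, 2882399418])]

/-- The codes of the 240 roots. -/
def rootCodes : List ℕ := (rootBlocks.map Prod.snd).flatten

/-- A quick membership test. -/
def isRoot (c : ℕ) : Bool :=
  rootBlocks.any (fun p => Nat.ble c p.1 && p.2.any (fun d => Nat.beq c d))

lemma mem_of_isRoot {c : ℕ} (h : isRoot c = true) : c ∈ rootCodes := by
  unfold isRoot at h
  rw [List.any_eq_true] at h
  obtain ⟨p, hp, h⟩ := h
  rw [Bool.and_eq_true, List.any_eq_true] at h
  obtain ⟨-, d, hd, he⟩ := h
  rw [Nat.eq_of_beq_eq_true he]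
  exact List.mem_flatten.2 ⟨p.2, List.mem_map_of_mem hp, hd⟩

lemma rootCodes_nodup : rootCodes.Nodup := by
  have h : rootCodes.IsChain (· < ·) := by decide +kernel
  exact (List.isChain_iff_pairwise.1 h).imp (fun h => h.ne)

lemma rootCodes_lt : rootCodes.all (fun c => Nat.blt c 4294967296) = true := by
  decide +kernel

lemma rootCodes_refl_mem : rootCodes.all (fun c => allIdx.all (fun i =>
    isRoot (codeRefl i c))) = true := by
  decide +kernel

lemma rootCodes_refl_coord : rootCodes.all (fun c => allIdx.all (fun i => allIdx.all (fun j =>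
    bif Nat.beq j.val i.val then
      Nat.beq (Nat.add (digit (codeRefl i c) (place j)) (phiPos i c))
        (Nat.add (digit c (place j)) (phiNeg i c))
    else Nat.beq (digit (codeRefl i c) (place j)) (digit c (place j))))) = true := by
  decide +kernel

/-! ### Comparison with the vectors -/

/-- The vector with a given code. -/
def codeVec (c : ℕ) : Fin 8 → ℚ := fun j => (codeCoord c j : ℚ)

lemma phiE8_codeVec (i : Fin 8) (c : ℕ) : phiE8 i (codeVec c) = (codePhi i c : ℚ) := by
  rw [phiE8_apply]
  fin_cases i <;> simp [Fin.sum_univ_eight, cartanE8, codeVec, codePhi] <;> ring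

lemma reflE8_apply' (i : Fin 8) (v : Fin 8 → ℚ) :
    reflE8 i v = v - phiE8 i v • (Pi.single i 1 : Fin 8 → ℚ) := rfl

lemma codeRefl_mem {c : ℕ} (hc : c ∈ rootCodes) (i : Fin 8) : codeRefl i c ∈ rootCodes := by
  have h := rootCodes_refl_mem
  rw [List.all_eq_true] at h
  have h1 := h c hc
  rw [List.all_eq_true] at h1
  have h2 := h1 i (mem_allIdx i)
  exact mem_of_isRoot h2

lemma codeVec_refl {c : ℕ} (hc : c ∈ rootCodes) (i : Fin 8) :
    reflE8 i (codeVec c) = codeVec (codeRefl i c) := by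
  have h := rootCodes_refl_coord
  rw [List.all_eq_true] at h
  have h1 := h c hc
  rw [List.all_eq_true] at h1
  have h2 := h1 i (mem_allIdx i)
  rw [List.all_eq_true] at h2
  funext j
  have h3 : codeCoord (codeRefl i c) j =
      codeCoord c j - codePhi i c * (if j = i then 1 else 0) := by
    have h4 := h2 j (mem_allIdx j)
    rw [codePhi_eq, codeCoord, codeCoord]
    by_cases hji : j = i
    · subst hji
      rw [Nat.beq_refl, cond_true] at h4
      have h5 : digit (codeRefl j c) (place j) + phiPos j c =
        digit c (place j) + phiNeg j c := Nat.eq_of_beq_eq_true h4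
      rw [if_pos rfl]
      omega
    · have h6 : Nat.beq j.val i.val = false := by
        rw [Bool.eq_false_iff]
        exact fun h => hji (Fin.ext (Nat.eq_of_beq_eq_true h))
      rw [h6, cond_false] at h4
      rw [Nat.eq_of_beq_eq_true h4, if_neg hji]
      ring
  rw [reflE8_apply', phiE8_codeVec]
  simp only [Pi.sub_apply, Pi.smul_apply, smul_eq_mul, Pi.single_apply]
  unfold codeVec
  rw [h3]
  push_cast
  rfl

lemma codeVec_injOn : Set.InjOn codeVec {c | c ∈ rootCodes} := by
  intro c hc d hd h
  have hk := rootCodes_lt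
  rw [List.all_eq_true] at hk
  have h1 : c < 4294967296 := by simpa [Nat.blt_eq] using hk c hc
  have h2 : d < 4294967296 := by simpa [Nat.blt_eq] using hk d hd
  have h3 : ∀ j, digit c (place j) = digit d (place j) := by
    intro j
    have := congrFun h j
    simpa [codeVec, codeCoord] using this
  have e0 : c / 1 % 16 = d / 1 % 16 := h3 0
  have e1 : c / 16 % 16 = d / 16 % 16 := h3 1
  have e2 : c / 256 % 16 = d / 256 % 16 := h3 2
  have e3 : c / 4096 % 16 = d / 4096 % 16 := h3 3
  have e4 : c / 65536 % 16 = d / 65536 % 16 := h3 4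
  have e5 : c / 1048576 % 16 = d / 1048576 % 16 := h3 5
  have e6 : c / 16777216 % 16 = d / 16777216 % 16 := h3 6
  have e7 : c / 268435456 % 16 = d / 268435456 % 16 := h3 7
  omega

/-- The invariant bilinear form. -/
def formE8 (x y : Fin 8 → ℚ) : ℚ := ∑ i, x i * phiE8 i y

lemma formE8_codeVec (c d : ℕ) : formE8 (codeVec c) (codeVec d) = (codeForm c d : ℚ) := by
  simp [formE8, phiE8_codeVec, Fin.sum_univ_eight, codeForm, codeVec]

lemma formE8_refl (i : Fin 8) (x y : Fin 8 → ℚ) :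
    formE8 (reflE8 i x) (reflE8 i y) = formE8 x y := by
  have hs : ∀ x y, formE8 (reflE8 i x) y = formE8 x y - phiE8 i x * phiE8 i y := by
    intro x y
    simp [formE8, reflE8_apply', sub_mul, Finset.sum_sub_distrib, Pi.single_apply]
  have hc : ∀ x y, formE8 x y = formE8 y x := by
    intro x y
    simp only [formE8, phiE8_apply, Fin.sum_univ_eight]
    simp [cartanE8]
    ring
  have hp : phiE8 i (reflE8 i y) = - phiE8 i y := by
    rw [reflE8_apply', map_sub, map_smul, phiE8_single, smul_eq_mul]
    ring
  rw [hs, hp, hc x, hs, hc y]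
  ring

lemma weyl_form {g : (Module.End ℚ (Fin 8 → ℚ))ˣ} (hg : g ∈ WeylE8) :
    ∀ x y, formE8 (g.1 x) (g.1 y) = formE8 x y := by
  unfold WeylE8 at hg
  induction hg using Subgroup.closure_induction with
  | mem g h =>
    obtain ⟨i, rfl⟩ := h
    exact formE8_refl i
  | one => intro x y; rfl
  | mul a b _ _ ha hb =>
    intro x y
    exact (ha _ _).trans (hb x y)
  | inv a _ ha =>
    intro x y
    rw [← ha]
    have h : ∀ z, a.1 ((a⁻¹).1 z) = z := fun z => by
      change (a.1 * (a⁻¹).1) z = z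
      rw [Units.mul_inv]; rfl
    rw [h, h]

lemma sE8_inv (i : Fin 8) : (sE8 i)⁻¹ = sE8 i := rfl

lemma weyl_root {g : (Module.End ℚ (Fin 8 → ℚ))ˣ} (hg : g ∈ WeylE8) :
    ∀ c ∈ rootCodes, ∃ d ∈ rootCodes, g.1 (codeVec c) = codeVec d := by
  unfold WeylE8 at hg
  induction hg using Subgroup.closure_induction'' with
  | mem g h =>
    obtain ⟨i, rfl⟩ := h
    exact fun c hc => ⟨_, codeRefl_mem hc i, codeVec_refl hc i⟩
  | inv_mem g h =>
    obtain ⟨i, rfl⟩ := h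
    exact fun c hc => ⟨_, codeRefl_mem hc i, codeVec_refl hc i⟩
  | one => exact fun c hc => ⟨c, hc, rfl⟩
  | mul a b _ _ ha hb =>
    intro c hc
    obtain ⟨d, hd, h1⟩ := hb c hc
    obtain ⟨e, he, h2⟩ := ha d hd
    refine ⟨e, he, ?_⟩
    rw [← h2, ← h1]
    rfl

/-! ### The stabilizer chain -/

/-- The pointwise stabilizer in `WeylE8` of a list of (coded) vectors. -/
def stabE8 (bs : List ℕ) : Subgroup (Module.End ℚ (Fin 8 → ℚ))ˣ where
  carrier := {g | g ∈ WeylE8 ∧ ∀ b ∈ bs, g.1 (codeVec b) = codeVec b}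
  mul_mem' := by
    rintro a c ⟨ha, ha'⟩ ⟨hc, hc'⟩
    refine ⟨mul_mem ha hc, fun b hb => ?_⟩
    change a.1 (c.1 (codeVec b)) = _
    rw [hc' b hb, ha' b hb]
  one_mem' := ⟨one_mem _, fun _ _ => rfl⟩
  inv_mem' := by
    rintro a ⟨ha, ha'⟩
    refine ⟨inv_mem ha, fun b hb => ?_⟩
    conv_lhs => rw [← ha' b hb]
    change ((a⁻¹).1 * a.1) _ = _
    rw [Units.inv_mul]; rfl

/-- Apply those reflections of a word that raise the vector. -/
def climb : List (Fin 8) → ℕ → ℕ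
  | [], c => c
  | i :: w, c => bif Nat.blt (phiPos i c) (phiNeg i c) then climb w (codeRefl i c) else climb w c

/-- Roots having the same products as `b` with all members of `bs`. -/
def candidates (bs : List ℕ) (b : ℕ) : List ℕ :=
  rootCodes.filter (fun c => bs.all (fun d => decide (codeForm c d = codeForm b d)))

lemma climb_spec (bs : List ℕ) (w : List (Fin 8))
    (hw : ∀ i ∈ w, ∀ d ∈ bs, codePhi i d = 0) :
    ∀ c ∈ rootCodes, ∃ g ∈ stabE8 bs, g.1 (codeVec c) = codeVec (climb w c) := by
  induction w with
  | nil => exact fun c _ => ⟨1, one_mem _, rfl⟩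
  | cons i w ih =>
    have ih' := ih (fun j hj => hw j (List.mem_cons_of_mem _ hj))
    intro c hc
    rw [climb]
    cases Nat.blt (phiPos i c) (phiNeg i c) with
    | false => exact ih' c hc
    | true =>
      obtain ⟨g, hg, h⟩ := ih' _ (codeRefl_mem hc i)
      refine ⟨g * sE8 i, mul_mem hg ⟨Subgroup.subset_closure ⟨i, rfl⟩, fun d hd => ?_⟩, ?_⟩
      · change reflE8 i (codeVec d) = codeVec d
        rw [reflE8_apply', phiE8_codeVec, hw i (by simp) d hd]
        simp
      · change g.1 (reflE8 i (codeVec c)) = _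
        rw [codeVec_refl hc, h]
        rfl

/-- The numerical test for one step of the stabilizer chain. -/
def stepTest (bs : List ℕ) (b : ℕ) (gens : List (Fin 8)) (rounds top n : ℕ) : Bool :=
  rootCodes.contains b &&
  bs.all (fun d => gens.all (fun i => decide (codePhi i d = 0))) &&
  Nat.beq (candidates bs b).length n &&
  (candidates bs b).all (fun c => Nat.beq (climb (List.replicate rounds gens).flatten c) top)

lemma step_card (bs : List ℕ) (b : ℕ) (gens : List (Fin 8)) (rounds top n : ℕ)
    (h : stepTest bs b gens rounds top n = true) :
    Nat.card (stabE8 bs) = Nat.card (stabE8 (b :: bs)) * n := by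
  simp only [stepTest, Bool.and_eq_true, List.contains_iff_mem, List.all_eq_true,
    decide_eq_true_eq] at h
  obtain ⟨⟨⟨hb, hg⟩, hn⟩, ht⟩ := h
  have hn := Nat.eq_of_beq_eq_true hn
  have hw : ∀ i ∈ (List.replicate rounds gens).flatten, ∀ d ∈ bs, codePhi i d = 0 := by
    intro i hi d hd
    obtain ⟨l, hl, hi⟩ := List.mem_flatten.1 hi
    rw [List.eq_of_mem_replicate hl] at hi
    exact hg d hd i hi
  have hbc : b ∈ candidates bs b := by simp [candidates, hb]
  have hsub : ∀ c ∈ candidates bs b, c ∈ rootCodes := fun c hc => (List.mem_filter.1 hc).1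
  have key : ∀ c ∈ candidates bs b, ∃ g ∈ stabE8 bs, g.1 (codeVec c) = codeVec top := by
    intro c hc
    obtain ⟨g, hg, h⟩ := climb_spec bs _ hw c (hsub c hc)
    rw [Nat.eq_of_beq_eq_true (ht c hc)] at h
    exact ⟨g, hg, h⟩
  have horb : MulAction.orbit (stabE8 bs) (codeVec b) =
      codeVec '' ((candidates bs b).toFinset : Set ℕ) := by
    ext v
    constructor
    · rintro ⟨⟨g, hg⟩, rfl⟩
      obtain ⟨d, hd, h⟩ := weyl_root hg.1 b hb
      refine ⟨d, ?_, h.symm⟩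
      simp only [candidates, List.coe_toFinset, Set.mem_setOf_eq, List.mem_filter, List.all_eq_true,
        decide_eq_true_eq]
      refine ⟨hd, fun e he => ?_⟩
      have h1 := weyl_form hg.1 (codeVec b) (codeVec e)
      rw [hg.2 e he, h, formE8_codeVec, formE8_codeVec] at h1
      exact_mod_cast h1
    · rintro ⟨c, hc, rfl⟩
      obtain ⟨g, hg, h1⟩ := key c (by simpa using hc)
      obtain ⟨g', hg', h2⟩ := key b hbc
      refine ⟨⟨g⁻¹ * g', mul_mem (inv_mem hg) hg'⟩, ?_⟩
      change (g⁻¹).1 (g'.1 (codeVec b)) = _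
      rw [h2, ← h1]
      change ((g⁻¹).1 * g.1) _ = _
      rw [Units.inv_mul]; rfl
  have hcard : (MulAction.orbit (stabE8 bs) (codeVec b)).ncard = n := by
    rw [horb, Set.ncard_image_of_injOn, Set.ncard_coe_finset, List.toFinset_card_of_nodup, hn]
    · exact rootCodes_nodup.filter _
    · exact codeVec_injOn.mono (fun c hc => hsub c (by simpa using hc))
  have hst : Nat.card (MulAction.stabilizer (stabE8 bs) (codeVec b)) =
      Nat.card (stabE8 (b :: bs)) := by
    refine Nat.card_congr
      { toFun := fun g => ⟨g.1.1, g.1.2.1, ?_⟩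
        invFun := fun g => ⟨⟨g.1, g.2.1, fun d hd => g.2.2 d (List.mem_cons_of_mem _ hd)⟩,
          g.2.2 b (by simp)⟩
        left_inv := fun g => rfl
        right_inv := fun g => rfl }
    intro d hd
    rcases List.mem_cons.1 hd with rfl | hd
    · exact g.2
    · exact g.1.2.2 d hd
  rw [← (MulAction.stabilizer (stabE8 bs) (codeVec b)).card_mul_index, hst,
    MulAction.index_stabilizer, hcard]

lemma stab_nil : stabE8 [] = WeylE8 := by
  ext g
  exact ⟨fun h => h.1, fun h => ⟨h, by simp⟩⟩

lemma stab_full : Nat.card (stabE8 [2290649480, 2290649225, 2290653320, 2290714760, 2291697800, 2307426440, 2559084680, 2882399418]) = 1 := by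
  rw [Nat.card_eq_one_iff_unique]
  refine ⟨⟨?_⟩, ⟨1⟩⟩
  suffices H : ∀ g ∈ stabE8 [2290649480, 2290649225, 2290653320, 2290714760, 2291697800, 2307426440, 2559084680, 2882399418], g = 1 by
    rintro ⟨a, ha⟩ ⟨b, hb⟩
    exact Subtype.ext ((H a ha).trans (H b hb).symm)
  rintro g ⟨-, hg⟩
  have g0 := hg 2882399418 (by simp)
  have g1 := hg 2559084680 (by simp)
  have g2 := hg 2307426440 (by simp)
  have g3 := hg 2291697800 (by simp)
  have g4 := hg 2290714760 (by simp)
  have g5 := hg 2290653320 (by simp)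
  have g6 := hg 2290649225 (by simp)
  have g7 := hg 2290649480 (by simp)
  have span : ∀ v : Fin 8 → ℚ, v =
      (v 1 / 3) • codeVec 2882399418
      + (v 7 - 2 * v 1 / 3) • codeVec 2559084680 + (v 6 - 3 * v 1 / 3) • codeVec 2307426440
      + (v 5 - 4 * v 1 / 3) • codeVec 2291697800 + (v 4 - 5 * v 1 / 3) • codeVec 2290714760
      + (v 3 - 6 * v 1 / 3) • codeVec 2290653320 + (v 0 - 2 * v 1 / 3) • codeVec 2290649225
      + (v 2 - 4 * v 1 / 3) • codeVec 2290649480 := by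
    intro v
    funext j
    fin_cases j <;> simp [codeVec, codeCoord, digit_eq, place] <;> ring
  apply Units.ext
  apply LinearMap.ext
  intro v
  change g.1 v = v
  rw [span v]
  simp only [map_add, map_smul, g0, g1, g2, g3, g4, g5, g6, g7]

/-- The Weyl group `W(E₈)` is finite of order `696729600`. -/
theorem card_WeylE8 : Nat.card WeylE8 = 696729600 := by
  rw [← stab_nil]
  have h0 := step_card [] 2882399418
    [0, 1, 2, 3, 4, 5, 6, 7] 15 2882399418 240 (by decide +kernel)
  have h1 := step_card [2882399418] 2559084680
    [0, 1, 2, 3, 4, 5, 6] 9 2613963962 56 (by decide +kernel)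
  have h2 := step_card [2559084680, 2882399418] 2307426440
    [0, 1, 2, 3, 4, 5] 8 2309737386 27 (by decide +kernel)
  have h3 := step_card [2307426440, 2559084680, 2882399418] 2291697800
    [0, 1, 2, 3, 4] 5 2291841705 16 (by decide +kernel)
  have h4 := step_card [2291697800, 2307426440, 2559084680, 2882399418] 2290714760
    [0, 1, 2, 3] 3 2290723481 10 (by decide +kernel)
  have h5 := step_card [2290714760, 2291697800, 2307426440, 2559084680, 2882399418] 2290653320
    [0, 1, 2] 2 2290653593 6 (by decide +kernel)
  have h6 := step_card [2290653320, 2290714760, 2291697800, 2307426440, 2559084680, 2882399418] 2290649225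
    [0] 1 2290649225 2 (by decide +kernel)
  have h7 := step_card [2290649225, 2290653320, 2290714760, 2291697800, 2307426440, 2559084680, 2882399418] 2290649480
    [] 0 2290649480 1 (by decide +kernel)
  rw [h0, h1, h2, h3, h4, h5, h6, h7, stab_full]
end

section
/- The quotient ring ℤ[u,v,w,x]/I is a free ℤ-module of rank 240. (By the presentation H^*(E₈/C; ℤ) ≅ ℤ[u,v,w,x]/I of the integral cohomology of the homogeneous space E₈/C, this expresses that H^*(E₈/C; ℤ) is torsion-free with total Betti number 240 = |W(E₈)|/|W(E₇)|.) -/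
open MvPolynomial

noncomputable section

namespace E8C

/-- `u = X 0`, of degree 2. -/
def u : MvPolynomial (Fin 4) ℤ := X 0
/-- `v = X 1`, of degree 12. -/
def v : MvPolynomial (Fin 4) ℤ := X 1
/-- `w = X 2`, of degree 20. -/
def w : MvPolynomial (Fin 4) ℤ := X 2
/-- `x = X 3`, of degree 30. -/
def x : MvPolynomial (Fin 4) ℤ := X 3

def r15 : MvPolynomial (Fin 4) ℤ := u ^ 15 - 2 * x

def r20 : MvPolynomial (Fin 4) ℤ :=
  9 * u ^ 20 + 45 * u ^ 14 * v + 12 * u ^ 10 * w + 60 * u ^ 8 * v ^ 2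
    + 30 * u ^ 4 * v * w + 10 * u ^ 2 * v ^ 3 + 3 * w ^ 2

def r24 : MvPolynomial (Fin 4) ℤ :=
  11 * u ^ 24 + 60 * u ^ 18 * v + 21 * u ^ 14 * w + 105 * u ^ 12 * v ^ 2
    + 60 * u ^ 8 * v * w + 60 * u ^ 6 * v ^ 3 + 9 * u ^ 4 * w ^ 2
    + 30 * u ^ 2 * v ^ 2 * w + 5 * v ^ 4

def r30 : MvPolynomial (Fin 4) ℤ :=
  -9 * x ^ 2 - 12 * u ^ 9 * v * x - 6 * u ^ 5 * w * x + 9 * u ^ 14 * v * w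
    - 10 * u ^ 12 * v ^ 3 - 3 * u ^ 10 * w ^ 2 + 30 * u ^ 8 * v ^ 2 * w
    - 35 * u ^ 6 * v ^ 4 + 6 * u ^ 4 * v * w ^ 2 - 10 * u ^ 2 * v ^ 3 * w
    - 4 * v ^ 5 - 2 * w ^ 3

/-- The ideal of relations in the presentation `H^*(E₈/C; ℤ) ≅ ℤ[u,v,w,x]/I`. -/
def relIdeal : Ideal (MvPolynomial (Fin 4) ℤ) :=
  Ideal.span {r15, r20, r24, r30}

end E8C

end

namespace E8Proof

theorem smul_mem_cancel {E : Type*} [CommRing E] (N : Submodule ℤ E) (p n : ℤ)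
    (hp : (p : E) = 0) (h : IsCoprime n p) (y : E) (hy : (n : E) * y ∈ N) : y ∈ N := by
  obtain ⟨a, b, hab⟩ := h
  have h1 : y = a • ((n : E) * y) := by
    have h2 : ((a * n + b * p : ℤ) : E) = 1 := by rw [hab]; simp
    push_cast at h2
    rw [hp] at h2
    rw [zsmul_eq_mul]
    linear_combination (-y) * h2
  rw [h1]
  exact N.smul_mem a hy

theorem torsionFree_step {A : Type*} [CommRing A] [Module.Finite ℤ A]
    {ι : Type*} [Fintype ι] (b : ι → A) (hb : LinearIndependent ℤ b) (p : ℕ) (hp : p.Prime)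
    (s : Finset A) (hs : s.card ≤ Fintype.card ι)
    (hspan : (⊤ : Submodule ℤ A) ≤ Submodule.span ℤ (s : Set A) ⊔
      (Ideal.span {(p : ℤ)} : Ideal ℤ) • (⊤ : Submodule ℤ A)) :
    (∀ a : A, (p : ℤ) • a = 0 → a = 0) ∧
      ∃ r : ℤ, r ≠ 0 ∧ ∀ a : A, r • a ∈ Submodule.span ℤ (s : Set A) := by
  obtain ⟨r, hr, hrN⟩ := Submodule.exists_sub_one_mem_and_smul_le_of_fg_of_le_sup
    (Module.Finite.fg_top) le_rfl hspan
  obtain ⟨k, hk⟩ := Ideal.mem_span_singleton.1 hr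
  have hr0 : r ≠ 0 := by
    rintro rfl
    have : (p : ℤ) ∣ 1 := ⟨-k, by linarith⟩
    have := Int.natAbs_dvd_natAbs.2 this
    simp at this
    exact hp.one_lt.ne' this
  have hmem : ∀ a : A, r • a ∈ Submodule.span ℤ (s : Set A) := fun a =>
    hrN (Submodule.smul_mem_pointwise_smul a r ⊤ trivial)
  refine ⟨?_, r, hr0, hmem⟩
  let g : (s → ℤ) →ₗ[ℤ] A := Fintype.linearCombination ℤ (fun i : s => (i : A))
  have hg : LinearMap.range g = Submodule.span ℤ (s : Set A) := by
    rw [Fintype.range_linearCombination]; simp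
  have hli : LinearIndependent ℤ (fun i => (⟨r • b i, hg ▸ hmem (b i)⟩ : LinearMap.range g)) := by
    rw [Fintype.linearIndependent_iff] at hb ⊢
    intro c hc i
    have h1 := congrArg Subtype.val hc
    simp only [Submodule.coe_sum, Submodule.coe_smul, Submodule.coe_zero, smul_smul] at h1
    have := hb (fun i => c i * r) h1 i
    exact (mul_eq_zero.1 this).resolve_right hr0
  have h1 := hli.fintype_card_le_finrank
  have h2 := Submodule.finrank_quotient_add_finrank (LinearMap.ker g)
  rw [g.quotKerEquivRange.finrank_eq] at h2
  have h3 : Module.finrank ℤ (s → ℤ) = s.card := by simp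
  have h4 : Module.finrank ℤ (LinearMap.ker g) = 0 := by omega
  have hker : LinearMap.ker g = ⊥ := Submodule.finrank_eq_zero.1 h4
  intro a ha
  have ha' : r • a ∈ LinearMap.range g := hg ▸ hmem a
  obtain ⟨c, hc⟩ := ha'
  have hpc : g ((p : ℤ) • c) = 0 := by
    rw [map_smul, hc, smul_comm, ha, smul_zero]
  have : (p : ℤ) • c = 0 := by
    have : (p : ℤ) • c ∈ LinearMap.ker g := hpc
    rwa [hker] at this
  have hc0 : c = 0 := (smul_eq_zero.1 this).resolve_left (by exact_mod_cast hp.ne_zero)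
  have hra : r • a = 0 := by rw [← hc, hc0, map_zero]
  have : a = r • a - k • ((p : ℤ) • a) := by
    have : r = 1 + p * k := by linarith
    rw [this, smul_smul, ← sub_smul]
    conv_lhs => rw [← one_smul ℤ a]
    congr 1; ring
  rw [this, hra, ha]; simp

theorem free_of_spanning {A : Type*} [CommRing A] [Module.Finite ℤ A]
    {ι : Type*} [Fintype ι] (b : ι → A) (hb : LinearIndependent ℤ b)
    (H : ∀ p : ℕ, p.Prime → ∃ s : Finset A, s.card ≤ Fintype.card ι ∧
      (⊤ : Submodule ℤ A) ≤ Submodule.span ℤ (s : Set A) ⊔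
      (Ideal.span {(p : ℤ)} : Ideal ℤ) • (⊤ : Submodule ℤ A)) :
    Module.Free ℤ A ∧ Module.rank ℤ A = Fintype.card ι := by
  have tf : ∀ n : ℕ, n ≠ 0 → ∀ a : A, (n : ℤ) • a = 0 → a = 0 := by
    intro n
    induction n using Nat.recOnMul with
    | zero => intro h; exact absurd rfl h
    | one => intro _ a ha; simpa using ha
    | prime p hp =>
      intro _
      obtain ⟨s, hs, hsp⟩ := H p hp
      exact (torsionFree_step b hb p hp s hs hsp).1
    | mul m n hm hn =>
      intro h a ha
      have h' := mul_ne_zero_iff.1 h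
      apply hn h'.2
      apply hm h'.1
      rw [smul_smul]; exact_mod_cast ha
  have tfi : Module.IsTorsionFree ℤ A := by
    rw [Module.isTorsionFree_iff_smul_eq_zero]
    intro r a hra
    by_cases hr : r = 0
    · exact Or.inl hr
    · refine Or.inr (tf r.natAbs (by simpa using hr) a ?_)
      rcases Int.natAbs_eq r with h | h
      · rwa [← h]
      · have : (r.natAbs : ℤ) = -r := by omega
        rw [this, neg_smul, hra, neg_zero]
  have hfree : Module.Free ℤ A := inferInstance
  refine ⟨hfree, ?_⟩
  rw [← Module.finrank_eq_rank]
  congr 1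
  apply le_antisymm
  · obtain ⟨s, hs, hsp⟩ := H 2 Nat.prime_two
    obtain ⟨-, r, hr, hmem⟩ := torsionFree_step b hb 2 Nat.prime_two s hs hsp
    let g : A →ₗ[ℤ] Submodule.span ℤ (s : Set A) :=
      LinearMap.codRestrict _ (r • LinearMap.id) (fun a => hmem a)
    have hg : Function.Injective g := by
      rw [injective_iff_map_eq_zero]
      intro a ha
      have : r • a = 0 := congrArg Subtype.val ha
      exact (smul_eq_zero.1 this).resolve_left hr
    have h1 := LinearMap.finrank_le_finrank_of_injective hg
    exact h1.trans ((finrank_span_finset_le_card s).trans hs)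
  · exact hb.fintype_card_le_finrank

/-- Elements `u, v, w, x` of a commutative ring which satisfy the four relations, and whose monomials
span the ring additively. -/
structure E8Rel {E : Type*} [CommRing E] (u v w x : E) : Prop where
  h15 : u ^ 15 - 2 * x = 0
  h20 : 9 * u ^ 20 + 45 * u ^ 14 * v + 12 * u ^ 10 * w + 60 * u ^ 8 * v ^ 2
    + 30 * u ^ 4 * v * w + 10 * u ^ 2 * v ^ 3 + 3 * w ^ 2 = 0
  h24 : 11 * u ^ 24 + 60 * u ^ 18 * v + 21 * u ^ 14 * w + 105 * u ^ 12 * v ^ 2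
    + 60 * u ^ 8 * v * w + 60 * u ^ 6 * v ^ 3 + 9 * u ^ 4 * w ^ 2
    + 30 * u ^ 2 * v ^ 2 * w + 5 * v ^ 4 = 0
  h30 : -9 * x ^ 2 - 12 * u ^ 9 * v * x - 6 * u ^ 5 * w * x + 9 * u ^ 14 * v * w
    - 10 * u ^ 12 * v ^ 3 - 3 * u ^ 10 * w ^ 2 + 30 * u ^ 8 * v ^ 2 * w
    - 35 * u ^ 6 * v ^ 4 + 6 * u ^ 4 * v * w ^ 2 - 10 * u ^ 2 * v ^ 3 * w
    - 4 * v ^ 5 - 2 * w ^ 3 = 0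
  gen : ∀ N : Submodule ℤ E, (∀ i k l m : ℕ, u ^ i * v ^ k * w ^ l * x ^ m ∈ N) → N = ⊤

section Spanning

variable {E : Type*} [CommRing E] {u v w x : E}

/-- Four times the last relation, with `x` eliminated. -/
theorem E8Rel.h30u (h : E8Rel u v w x) :
    -9 * u ^ 30 - 24 * u ^ 24 * v - 12 * u ^ 20 * w + 36 * u ^ 14 * v * w - 40 * u ^ 12 * v ^ 3
      - 12 * u ^ 10 * w ^ 2 + 120 * u ^ 8 * v ^ 2 * w - 140 * u ^ 6 * v ^ 4
      + 24 * u ^ 4 * v * w ^ 2 - 40 * u ^ 2 * v ^ 3 * w - 16 * v ^ 5 - 8 * w ^ 3 = 0 := by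
  linear_combination 4 * h.h30 - (9 * u ^ 15 + 24 * u ^ 9 * v + 12 * u ^ 5 * w + 18 * x) * h.h15

/-- For odd `p` the generator `x` is superfluous. -/
theorem E8Rel.gen_odd (h : E8Rel u v w x) (p : ℤ) (hp : (p : E) = 0) (h2 : IsCoprime 2 p)
    (N : Submodule ℤ E) (hN : ∀ i k l : ℕ, u ^ i * v ^ k * w ^ l ∈ N) : N = ⊤ := by
  apply h.gen
  intro i k l m
  induction m generalizing i with
  | zero => simpa using hN i k l
  | succ m ih =>
    apply smul_mem_cancel N p 2 hp h2
    have : ((2 : ℤ) : E) * (u ^ i * v ^ k * w ^ l * x ^ (m + 1))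
        = u ^ (i + 15) * v ^ k * w ^ l * x ^ m := by
      push_cast
      linear_combination -(u ^ i * v ^ k * w ^ l * x ^ m) * h.h15
    rw [this]
    exact ih _

theorem E8Rel.span_two (h : E8Rel u v w x) (hp : (2 : E) = 0) :
    ∃ s : Finset E, s.card ≤ 240 ∧ Submodule.span ℤ (s : Set E) = ⊤ := by
  classical
  obtain ⟨h15, h20, h24, h30, gen⟩ := h
  have hu : u ^ 15 = 0 := by
    linear_combination (1) * h15 + (x) * hp
  have hw : w ^ 2 = u ^ 14 * v := by
    linear_combination (1) * h20 + (u ^ 5) * hu + (-5 * u ^ 20 - 23 * u ^ 14 * v - 6 * u ^ 10 * w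
      - 30 * u ^ 8 * v ^ 2 - 15 * u ^ 4 * v * w - 5 * u ^ 2 * v ^ 3 - w ^ 2) * hp
  have hv : v ^ 4 = u ^ 14 * w + u ^ 12 * v ^ 2 := by
    linear_combination (1) * h24 + (u ^ 4) * hw + (u ^ 9 + u ^ 3 * v) * hu + (-6 * u ^ 24
      - 30 * u ^ 18 * v - 11 * u ^ 14 * w - 53 * u ^ 12 * v ^ 2 - 30 * u ^ 8 * v * w
      - 30 * u ^ 6 * v ^ 3 - 5 * u ^ 4 * w ^ 2 - 15 * u ^ 2 * v ^ 2 * w - 2 * v ^ 4) * hp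
  have hx : x ^ 2 = u ^ 14 * v * w := by
    linear_combination (1) * h30 + (u ^ 10) * hw + (u ^ 6) * hv
      + (u ^ 9 * v + u ^ 5 * w + u ^ 3 * v ^ 2) * hu
      + (-5 * u ^ 14 * v * w + 5 * u ^ 12 * v ^ 3 + u ^ 10 * w ^ 2 + 6 * u ^ 9 * v * x
      - 15 * u ^ 8 * v ^ 2 * w + 17 * u ^ 6 * v ^ 4 + 3 * u ^ 5 * w * x - 3 * u ^ 4 * v * w ^ 2
      + 5 * u ^ 2 * v ^ 3 * w + 2 * v ^ 5 + w ^ 3 + 5 * x ^ 2) * hp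
  let B : Finset (ℕ × ℕ × ℕ × ℕ) :=
    Finset.range 15 ×ˢ Finset.range 4 ×ˢ Finset.range 2 ×ˢ Finset.range 2
  let f : ℕ × ℕ × ℕ × ℕ → E := fun t => u ^ t.1 * v ^ t.2.1 * w ^ t.2.2.1 * x ^ t.2.2.2
  refine ⟨B.image f, Finset.card_image_le.trans (by simp [B]), gen _ ?_⟩
  set N := Submodule.span ℤ ((B.image f : Finset E) : Set E) with hN
  have key : ∀ n i : ℕ, 15 ≤ i + n → ∀ k l m : ℕ, u ^ i * v ^ k * w ^ l * x ^ m ∈ N := by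
    intro n
    induction n with
    | zero =>
      intro i hi k l m
      obtain ⟨j, rfl⟩ := Nat.exists_eq_add_of_le hi
      simp [pow_add, hu]
    | succ n ih =>
      intro i hi k l m
      by_cases hi15 : 15 ≤ i
      · exact ih i (by omega) k l m
      by_cases hk : 4 ≤ k
      · obtain ⟨k, rfl⟩ := Nat.exists_eq_add_of_le hk
        have : u ^ i * v ^ (4 + k) * w ^ l * x ^ m = u ^ (i + 14) * v ^ k * w ^ (l + 1) * x ^ m
            + u ^ (i + 12) * v ^ (k + 2) * w ^ l * x ^ m := by
          linear_combination (u ^ i * v ^ k * w ^ l * x ^ m) * hv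
        rw [this]
        exact N.add_mem (ih _ (by omega) _ _ _) (ih _ (by omega) _ _ _)
      by_cases hl : 2 ≤ l
      · obtain ⟨l, rfl⟩ := Nat.exists_eq_add_of_le hl
        have : u ^ i * v ^ k * w ^ (2 + l) * x ^ m
            = u ^ (i + 14) * v ^ (k + 1) * w ^ l * x ^ m := by
          linear_combination (u ^ i * v ^ k * w ^ l * x ^ m) * hw
        rw [this]
        exact ih _ (by omega) _ _ _
      by_cases hm : 2 ≤ m
      · obtain ⟨m, rfl⟩ := Nat.exists_eq_add_of_le hm
        have : u ^ i * v ^ k * w ^ l * x ^ (2 + m)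
            = u ^ (i + 14) * v ^ (k + 1) * w ^ (l + 1) * x ^ m := by
          linear_combination (u ^ i * v ^ k * w ^ l * x ^ m) * hx
        rw [this]
        exact ih _ (by omega) _ _ _
      apply Submodule.subset_span
      refine Finset.mem_coe.2 (Finset.mem_image.2 ⟨(i, k, l, m), ?_, rfl⟩)
      simp [B]; omega
  exact fun i k l m => key 15 i (by omega) k l m

theorem E8Rel.span_three (h : E8Rel u v w x) (hp : (3 : E) = 0) :
    ∃ s : Finset E, s.card ≤ 240 ∧ Submodule.span ℤ (s : Set E) = ⊤ := by
  classical
  have h20 := h.h20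
  have h24 := h.h24
  have h30u := h.h30u
  have huv : u ^ 2 * v ^ 3 = 0 := by
    linear_combination (1) * h20 + (-3 * u ^ 20 - 15 * u ^ 14 * v - 4 * u ^ 10 * w
      - 20 * u ^ 8 * v ^ 2 - 10 * u ^ 4 * v * w - 3 * u ^ 2 * v ^ 3 - w ^ 2) * hp
  have hv : v ^ 4 = -u ^ 24 := by
    linear_combination (-1) * h24 + (4 * u ^ 24 + 20 * u ^ 18 * v + 7 * u ^ 14 * w
      + 35 * u ^ 12 * v ^ 2 + 20 * u ^ 8 * v * w + 20 * u ^ 6 * v ^ 3 + 3 * u ^ 4 * w ^ 2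
      + 10 * u ^ 2 * v ^ 2 * w + 2 * v ^ 4) * hp
  have hu : u ^ 26 = 0 := by
    linear_combination (u ^ 2) * hv + (-v) * huv
  have hw : w ^ 3 = -u ^ 24 * v := by
    linear_combination (1) * h30u + (u ^ 10 - u ^ 4 * v + w) * huv + (v) * hv
      + (3 * u ^ 30 + 8 * u ^ 24 * v + 4 * u ^ 20 * w - 12 * u ^ 14 * v * w + 13 * u ^ 12 * v ^ 3
      + 4 * u ^ 10 * w ^ 2 - 40 * u ^ 8 * v ^ 2 * w + 47 * u ^ 6 * v ^ 4 - 8 * u ^ 4 * v * w ^ 2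
      + 13 * u ^ 2 * v ^ 3 * w + 5 * v ^ 5 + 3 * w ^ 3) * hp
  let B : Finset (ℕ × ℕ × ℕ) :=
    (Finset.range 26 ×ˢ Finset.range 3 ×ˢ Finset.range 3) ∪
      (Finset.range 2 ×ˢ {3} ×ˢ Finset.range 3)
  let f : ℕ × ℕ × ℕ → E := fun t => u ^ t.1 * v ^ t.2.1 * w ^ t.2.2
  refine ⟨B.image f, Finset.card_image_le.trans ?_, h.gen_odd 3 (by exact_mod_cast hp)
    (by norm_num) _ ?_⟩
  · exact (Finset.card_union_le _ _).trans (by simp)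
  set N := Submodule.span ℤ ((B.image f : Finset E) : Set E) with hN
  intro i k l
  induction l using Nat.strong_induction_on generalizing i k with
  | _ l ihl =>
    by_cases hl : 3 ≤ l
    · obtain ⟨l, rfl⟩ := Nat.exists_eq_add_of_le hl
      have : u ^ i * v ^ k * w ^ (3 + l) = -(u ^ (i + 24) * v ^ (k + 1) * w ^ l) := by
        linear_combination (u ^ i * v ^ k * w ^ l) * hw
      rw [this]
      exact N.neg_mem (ihl _ (by omega) _ _)
    induction k using Nat.strong_induction_on generalizing i with
    | _ k ihk =>
      by_cases hk : 4 ≤ k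
      · obtain ⟨k, rfl⟩ := Nat.exists_eq_add_of_le hk
        have : u ^ i * v ^ (4 + k) * w ^ l = -(u ^ (i + 24) * v ^ k * w ^ l) := by
          linear_combination (u ^ i * v ^ k * w ^ l) * hv
        rw [this]
        exact N.neg_mem (ihk _ (by omega) _)
      by_cases hi26 : 26 ≤ i
      · obtain ⟨j, rfl⟩ := Nat.exists_eq_add_of_le hi26
        simp [pow_add, hu]
      by_cases hk3 : 2 ≤ i ∧ k = 3
      · obtain ⟨hi, rfl⟩ := hk3
        obtain ⟨j, rfl⟩ := Nat.exists_eq_add_of_le hi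
        have : u ^ (2 + j) * v ^ 3 * w ^ l = 0 := by
          linear_combination (u ^ j * w ^ l) * huv
        rw [this]; exact N.zero_mem
      apply Submodule.subset_span
      refine Finset.mem_coe.2 (Finset.mem_image.2 ⟨(i, k, l), ?_, rfl⟩)
      simp [B]; omega

theorem E8Rel.span_five (h : E8Rel u v w x) (hp : (5 : E) = 0) :
    ∃ s : Finset E, s.card ≤ 240 ∧ Submodule.span ℤ (s : Set E) = ⊤ := by
  classical
  have h20 := h.h20
  have h24 := h.h24
  have h30u := h.h30u
  have hw : w ^ 2 = 2 * u ^ 20 + u ^ 10 * w := by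
    linear_combination (2) * h20 + (-4 * u ^ 20 - 18 * u ^ 14 * v - 5 * u ^ 10 * w
      - 24 * u ^ 8 * v ^ 2 - 12 * u ^ 4 * v * w - 4 * u ^ 2 * v ^ 3 - w ^ 2) * hp
  have hu : u ^ 24 = 0 := by
    linear_combination (-1) * h24 + (3 * u ^ 4) * h20 + (-3 * u ^ 24 - 15 * u ^ 18 * v
      - 3 * u ^ 14 * w - 15 * u ^ 12 * v ^ 2 - 6 * u ^ 8 * v * w + 6 * u ^ 6 * v ^ 3
      + 6 * u ^ 2 * v ^ 2 * w + v ^ 4) * hp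
  have hv : v ^ 5 = -4 * u ^ 30 - 4 * u ^ 24 * v - 2 * u ^ 20 * w - 4 * u ^ 14 * v * w
      - 2 * u ^ 10 * w ^ 2 - u ^ 4 * v * w ^ 2 - 3 * w ^ 3 := by
    linear_combination (-1) * h30u + (-u ^ 30 - 4 * u ^ 24 * v - 2 * u ^ 20 * w
      + 8 * u ^ 14 * v * w - 8 * u ^ 12 * v ^ 3 - 2 * u ^ 10 * w ^ 2 + 24 * u ^ 8 * v ^ 2 * w
      - 28 * u ^ 6 * v ^ 4 + 5 * u ^ 4 * v * w ^ 2 - 8 * u ^ 2 * v ^ 3 * w - 3 * v ^ 5 - w ^ 3) * hp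
  let B : Finset (ℕ × ℕ × ℕ) := Finset.range 24 ×ˢ Finset.range 5 ×ˢ Finset.range 2
  let f : ℕ × ℕ × ℕ → E := fun t => u ^ t.1 * v ^ t.2.1 * w ^ t.2.2
  refine ⟨B.image f, Finset.card_image_le.trans (by simp [B]),
    h.gen_odd 5 (by exact_mod_cast hp) (by norm_num) _ ?_⟩
  set N := Submodule.span ℤ ((B.image f : Finset E) : Set E) with hN
  intro i k l
  induction k using Nat.strong_induction_on generalizing i l with
  | _ k ihk =>
    by_cases hk : 5 ≤ k
    · obtain ⟨k, rfl⟩ := Nat.exists_eq_add_of_le hk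
      have : u ^ i * v ^ (5 + k) * w ^ l = (-4 : ℤ) • (u ^ (i + 30) * v ^ k * w ^ l)
          + (-4 : ℤ) • (u ^ (i + 24) * v ^ (k + 1) * w ^ l)
          + (-2 : ℤ) • (u ^ (i + 20) * v ^ k * w ^ (l + 1))
          + (-4 : ℤ) • (u ^ (i + 14) * v ^ (k + 1) * w ^ (l + 1))
          + (-2 : ℤ) • (u ^ (i + 10) * v ^ k * w ^ (l + 2))
          + (-1 : ℤ) • (u ^ (i + 4) * v ^ (k + 1) * w ^ (l + 2))
          + (-3 : ℤ) • (u ^ i * v ^ k * w ^ (l + 3)) := by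
        simp only [zsmul_eq_mul]
        push_cast
        linear_combination (u ^ i * v ^ k * w ^ l) * hv
      rw [this]
      refine N.add_mem (N.add_mem (N.add_mem (N.add_mem (N.add_mem (N.add_mem ?_ ?_) ?_) ?_) ?_)
        ?_) ?_ <;> exact N.smul_mem _ (ihk _ (by omega) _ _)
    induction l using Nat.strong_induction_on generalizing i with
    | _ l ihl =>
      by_cases hl : 2 ≤ l
      · obtain ⟨l, rfl⟩ := Nat.exists_eq_add_of_le hl
        have : u ^ i * v ^ k * w ^ (2 + l) = (2 : ℤ) • (u ^ (i + 20) * v ^ k * w ^ l)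
            + u ^ (i + 10) * v ^ k * w ^ (l + 1) := by
          simp only [zsmul_eq_mul]
          push_cast
          linear_combination (u ^ i * v ^ k * w ^ l) * hw
        rw [this]
        exact N.add_mem (N.smul_mem _ (ihl _ (by omega) _)) (ihl _ (by omega) _)
      by_cases hi : 24 ≤ i
      · obtain ⟨j, rfl⟩ := Nat.exists_eq_add_of_le hi
        simp [pow_add, hu]
      apply Submodule.subset_span
      refine Finset.mem_coe.2 (Finset.mem_image.2 ⟨(i, k, l), ?_, rfl⟩)
      simp [B]; omega

end Spanning

section LargePrimes

variable {E : Type*} [CommRing E] {u v w x : E}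

/-- The weights of the eight monomials `v ^ k * w ^ l` with `k < 4`, `l < 2`. -/
def dd : Fin 8 → ℕ := ![0, 6, 10, 12, 16, 18, 22, 28]

/-- The eight monomials `v ^ k * w ^ l` with `k < 4`, `l < 2`. -/
def ee (v w : E) : Fin 8 → E := ![1, v, w, v ^ 2, v * w, v ^ 3, v ^ 2 * w, v ^ 3 * w]

/-- Eight homogeneous elements of weight 28, annihilated by explicit powers of `u`. -/
def FF (u v w : E) : Fin 8 → E := ![
  -19787 * u ^ 28 - 98208 * u ^ 22 * v - 18600 * u ^ 18 * w - 120900 * u ^ 16 * v ^ 2 - 42780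
    * u ^ 12 * v * w - 1240 * u ^ 10 * v ^ 3 + 22320 * u ^ 6 * v ^ 2 * w + 1240 * v ^ 3 * w,
  -94488 * u ^ 28 - 409147 * u ^ 22 * v - 89032 * u ^ 18 * w - 280488 * u ^ 16 * v ^ 2 -
    148800 * u ^ 12 * v * w + 357740 * u ^ 10 * v ^ 3 + 236220 * u ^ 6 * v ^ 2 * w - 59520 * v ^
    3 * w,
  -1953000 * u ^ 28 - 7825020 * u ^ 22 * v - 1837521 * u ^ 18 * w - 2667860 * u ^ 16 * v ^ 2 -
    2459664 * u ^ 12 * v * w + 11223240 * u ^ 10 * v ^ 3 + 6307260 * u ^ 6 * v ^ 2 * w - 1878600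
    * v ^ 3 * w,
  5489728 * u ^ 28 + 23068092 * u ^ 22 * v + 5168196 * u ^ 18 * w + 12813593 * u ^ 16 * v ^ 2
    + 7949888 * u ^ 12 * v * w - 25044528 * u ^ 10 * v ^ 3 - 15330120 * u ^ 6 * v ^ 2 * w +
    4164540 * v ^ 3 * w,
  173052168 * u ^ 28 + 728097000 * u ^ 22 * v + 162917400 * u ^ 18 * w + 408498780 * u ^ 16 *
    v ^ 2 + 251483319 * u ^ 12 * v * w - 783875300 * u ^ 10 * v ^ 3 - 481212504 * u ^ 6 * v ^ 2
    * w + 130294860 * v ^ 3 * w,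
  -1920769548 * u ^ 28 - 8076878260 * u ^ 22 * v - 1808269680 * u ^ 18 * w - 4511595540 * u ^
    16 * v ^ 2 - 2786942160 * u ^ 12 * v * w + 8728029805 * u ^ 10 * v ^ 3 + 5351256580 * u ^ 6
    * v ^ 2 * w - 1450948800 * v ^ 3 * w,
  -12019925740 * u ^ 28 - 50543240472 * u ^ 22 * v - 11315912268 * u ^ 18 * w - 28228954020 *
    u ^ 16 * v ^ 2 - 17439525540 * u ^ 12 * v * w + 54623797380 * u ^ 10 * v ^ 3 + 33489309459 *
    u ^ 6 * v ^ 2 * w - 9080673264 * v ^ 3 * w,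
  4188426499440 * u ^ 28 + 17612291704480 * u ^ 22 * v + 3943108563516 * u ^ 18 * w +
    9837312955380 * u ^ 16 * v ^ 2 + 6077067625740 * u ^ 12 * v * w - 19033137893100 * u ^ 10 *
    v ^ 3 - 11669248773180 * u ^ 6 * v ^ 2 * w + 3164068724415 * v ^ 3 * w]

/-- The inverse of the unimodular coefficient matrix of `FF`. -/
def DD : Fin 8 → Fin 8 → ℤ := ![
  ![-2569423355712675, -12445491846611760, -785012539817400, -14136536768857020,
    -1643957320136940, 358255765310088, 1387264728558800, 4231250562840],
  ![1098872878651608, 5322600268206525, 335728632933480, 6045814437221640, 703076084677680,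
    -153216303994332, -593295606928020, -1809591435680],
  ![138051683579880, 668679654765860, 42177673796175, 759537259076700, 88327630072640,
    -19248598751160, -74535877238940, -227339428264],
  ![-469958241839712, -2276332331898492, -143582066097740, -2585631488721975,
    -300686646348240, 65526474735120, 253736502551400, 773913369276],
  ![-59040906069480, -285975886993080, -18038230432984, -324833183608420, -37775296724745,
    8232096101340, 31876943635160, 97226817636],
  ![200988456404700, 973525902091428, 61406174644656, 1105804802069028, 128595563461840,
    -28023905180475, -108516254342220, -330981861936],
  ![25250172310020, 122304024433560, 7714455239916, 138922221688140, 16155455850596,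
    -3520641224684, -13632892426725, -41581236944],
  ![-10798805141264, -52306071847440, -3299260614684, -59413218268620, -6909244719644,
    1505681569572, 5830413643756, 17783152959]]

theorem E8Rel.FF_rel (h : E8Rel u v w x) : ∀ i, u ^ (2 + dd i) * FF u v w i = 0 := by
  have h20 := h.h20
  have h24 := h.h24
  have h30u := h.h30u
  intro i
  fin_cases i
  · change u ^ (2 + 0) * (-19787 * u ^ 28 - 98208 * u ^ 22 * v - 18600 * u ^ 18 * w - 120900 * u ^ 16 * v ^ 2 -
      42780 * u ^ 12 * v * w - 1240 * u ^ 10 * v ^ 3 + 22320 * u ^ 6 * v ^ 2 * w + 1240 * v ^ 3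
      * w) = 0
    linear_combination (15) * h30u + (-3616 * u ^ 10 - 664 * u ^ 4 * v + 40 * w) * h20 + (1172 * u ^ 6 + 48 * v)
      * h24
  · change u ^ (2 + 6) * (-94488 * u ^ 28 - 409147 * u ^ 22 * v - 89032 * u ^ 18 * w - 280488 * u ^ 16 * v ^ 2 -
      148800 * u ^ 12 * v * w + 357740 * u ^ 10 * v ^ 3 + 236220 * u ^ 6 * v ^ 2 * w - 59520 * v
      ^ 3 * w) = 0
    linear_combination (15 * v) * h30u + (-16864 * u ^ 16 + 8784 * u ^ 10 * v + 744 * u ^ 6 * w + 1816 * u ^ 4 *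
      v ^ 2 + 40 * v * w) * h20 + (5208 * u ^ 12 - 3788 * u ^ 6 * v - 248 * u ^ 2 * w + 48 * v ^
      2) * h24
  · change u ^ (2 + 10) * (-1953000 * u ^ 28 - 7825020 * u ^ 22 * v - 1837521 * u ^ 18 * w - 2667860 * u ^ 16 * v ^ 2
      - 2459664 * u ^ 12 * v * w + 11223240 * u ^ 10 * v ^ 3 + 6307260 * u ^ 6 * v ^ 2 * w -
      1878600 * v ^ 3 * w) = 0
    linear_combination (45 * w) * h30u + (-353400 * u ^ 20 + 280860 * u ^ 14 * v + 11472 * u ^ 10 * w + 44640 * u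
      ^ 8 * v ^ 2 - 1992 * u ^ 4 * v * w - 1240 * u ^ 2 * v ^ 3 + 120 * w ^ 2) * h20 + (111600 *
      u ^ 16 - 104160 * u ^ 10 * v - 3924 * u ^ 6 * w + 2480 * u ^ 4 * v ^ 2 + 144 * v * w) *
      h24
  · change u ^ (2 + 12) * (5489728 * u ^ 28 + 23068092 * u ^ 22 * v + 5168196 * u ^ 18 * w + 12813593 * u ^ 16 * v ^
      2 + 7949888 * u ^ 12 * v * w - 25044528 * u ^ 10 * v ^ 3 - 15330120 * u ^ 6 * v ^ 2 * w +
      4164540 * v ^ 3 * w) = 0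
    linear_combination (15 * v ^ 2) * h30u + (988404 * u ^ 22 - 612064 * u ^ 16 * v - 35712 * u ^ 12 * w - 110256
      * u ^ 10 * v ^ 2 + 744 * u ^ 6 * v * w + 1816 * u ^ 4 * v ^ 3 + 40 * v ^ 2 * w) * h20 +
      (-309628 * u ^ 18 + 243288 * u ^ 12 * v + 11904 * u ^ 8 * w - 3788 * u ^ 6 * v ^ 2 - 248 *
      u ^ 2 * v * w + 48 * v ^ 3) * h24
  · change u ^ (2 + 16) * (173052168 * u ^ 28 + 728097000 * u ^ 22 * v + 162917400 * u ^ 18 * w + 408498780 * u ^ 16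
      * v ^ 2 + 251483319 * u ^ 12 * v * w - 783875300 * u ^ 10 * v ^ 3 - 481212504 * u ^ 6 * v
      ^ 2 * w + 130294860 * v ^ 3 * w) = 0
    linear_combination (45 * v * w) * h30u + (31155744 * u ^ 26 - 19139400 * u ^ 20 * v - 1127160 * u ^ 16 * w -
      3476340 * u ^ 14 * v ^ 2 + 11472 * u ^ 10 * v * w + 44640 * u ^ 8 * v ^ 3 - 1992 * u ^ 4 *
      v ^ 2 * w - 1240 * u ^ 2 * v ^ 4 + 120 * v * w ^ 2) * h20 + (-9759048 * u ^ 22 + 7626000 *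
      u ^ 16 * v + 375720 * u ^ 12 * w - 104160 * u ^ 10 * v ^ 2 - 3924 * u ^ 6 * v * w + 2480 *
      u ^ 4 * v ^ 3 + 144 * v ^ 2 * w) * h24
  · change u ^ (2 + 18) * (-1920769548 * u ^ 28 - 8076878260 * u ^ 22 * v - 1808269680 * u ^ 18 * w - 4511595540 * u
      ^ 16 * v ^ 2 - 2786942160 * u ^ 12 * v * w + 8728029805 * u ^ 10 * v ^ 3 + 5351256580 * u
      ^ 6 * v ^ 2 * w - 1450948800 * v ^ 3 * w) = 0
    linear_combination (75 * v ^ 3) * h30u + (-345828684 * u ^ 28 + 213169020 * u ^ 22 * v + 12493620 * u ^ 18 *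
      w + 38585080 * u ^ 16 * v ^ 2 - 178560 * u ^ 12 * v * w - 551280 * u ^ 10 * v ^ 3 + 3720 *
      u ^ 6 * v ^ 2 * w + 9080 * u ^ 4 * v ^ 4 + 200 * v ^ 3 * w) * h20 + (108335328 * u ^ 24 -
      84838940 * u ^ 18 * v - 4164540 * u ^ 14 * w + 1216440 * u ^ 12 * v ^ 2 + 59520 * u ^ 8 *
      v * w - 18940 * u ^ 6 * v ^ 3 - 1240 * u ^ 2 * v ^ 2 * w + 240 * v ^ 4) * h24
  · change u ^ (2 + 22) * (-12019925740 * u ^ 28 - 50543240472 * u ^ 22 * v - 11315912268 * u ^ 18 * w - 28228954020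
      * u ^ 16 * v ^ 2 - 17439525540 * u ^ 12 * v * w + 54623797380 * u ^ 10 * v ^ 3 +
      33489309459 * u ^ 6 * v ^ 2 * w - 9080673264 * v ^ 3 * w) = 0
    linear_combination (45 * v ^ 2 * w) * h30u + (-2164158360 * u ^ 32 + 1334104344 * u ^ 26 * v + 78176916 * u ^
      22 * w + 241450320 * u ^ 20 * v ^ 2 - 1127160 * u ^ 16 * v * w - 3476340 * u ^ 14 * v ^ 3
      + 11472 * u ^ 10 * v ^ 2 * w + 44640 * u ^ 8 * v ^ 4 - 1992 * u ^ 4 * v ^ 3 * w - 1240 * u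
      ^ 2 * v ^ 5 + 120 * v ^ 2 * w ^ 2) * h20 + (677954500 * u ^ 28 - 530938488 * u ^ 22 * v -
      26058972 * u ^ 18 * w + 7626000 * u ^ 16 * v ^ 2 + 375720 * u ^ 12 * v * w - 104160 * u ^
      10 * v ^ 3 - 3924 * u ^ 6 * v ^ 2 * w + 2480 * u ^ 4 * v ^ 4 + 144 * v ^ 3 * w) * h24
  · change u ^ (2 + 28) * (4188426499440 * u ^ 28 + 17612291704480 * u ^ 22 * v + 3943108563516 * u ^ 18 * w +
      9837312955380 * u ^ 16 * v ^ 2 + 6077067625740 * u ^ 12 * v * w - 19033137893100 * u ^ 10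
      * v ^ 3 - 11669248773180 * u ^ 6 * v ^ 2 * w + 3164068724415 * v ^ 3 * w) = 0
    linear_combination (225 * v ^ 3 * w) * h30u + (754115154300 * u ^ 38 - 464854455000 * u ^ 32 * v -
      27242019792 * u ^ 28 * w - 84136210920 * u ^ 26 * v ^ 2 + 390884580 * u ^ 22 * v * w +
      1207251600 * u ^ 20 * v ^ 3 - 5635800 * u ^ 16 * v ^ 2 * w - 17381700 * u ^ 14 * v ^ 4 +
      57360 * u ^ 10 * v ^ 3 * w + 223200 * u ^ 8 * v ^ 5 - 9960 * u ^ 4 * v ^ 4 * w - 6200 * u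
      ^ 2 * v ^ 6 + 600 * v ^ 3 * w ^ 2) * h20 + (-236237262660 * u ^ 34 + 185003237780 * u ^ 28
      * v + 9080673264 * u ^ 24 * w - 2654692440 * u ^ 22 * v ^ 2 - 130294860 * u ^ 18 * v * w +
      38130000 * u ^ 16 * v ^ 3 + 1878600 * u ^ 12 * v ^ 2 * w - 520800 * u ^ 10 * v ^ 4 - 19620
      * u ^ 6 * v ^ 3 * w + 12400 * u ^ 4 * v ^ 5 + 720 * v ^ 4 * w) * h24

theorem ee_eq (u v w : E) : ∀ j, u ^ (28 - dd j) * ee v w j = ∑ i, DD j i • FF u v w i := by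
  intro j
  simp only [zsmul_eq_mul, Fin.sum_univ_eight]
  fin_cases j <;> simp [dd, ee, DD, FF] <;> ring

theorem E8Rel.span_large (h : E8Rel u v w x) (p : ℕ) (hp : p.Prime) (h7 : 7 ≤ p)
    (hpE : ((p : ℤ) : E) = 0) :
    ∃ s : Finset E, s.card ≤ 240 ∧ Submodule.span ℤ (s : Set E) = ⊤ := by
  classical
  have h20 := h.h20
  have h24 := h.h24
  have cop : ∀ n : ℕ, n.Prime → n < 7 → IsCoprime (n : ℤ) (p : ℤ) := by
    intro n hn hn7
    exact Nat.isCoprime_iff_coprime.2 ((Nat.coprime_primes hn hp).2 (by omega))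
  have c2 : IsCoprime (2 : ℤ) p := cop 2 Nat.prime_two (by norm_num)
  have c3 : IsCoprime (3 : ℤ) p := cop 3 Nat.prime_three (by norm_num)
  have c5 : IsCoprime (5 : ℤ) p := cop 5 Nat.prime_five (by norm_num)
  let B₁ : Finset (Σ _ : Fin 8, ℕ) := Finset.univ.sigma fun j => Finset.range (28 - dd j)
  let B₂ : Finset (Σ _ : Fin 8, ℕ) := Finset.univ.sigma fun j => Finset.range (2 + dd j)
  let f₁ : (Σ _ : Fin 8, ℕ) → E := fun t => u ^ t.2 * ee v w t.1
  let f₂ : (Σ _ : Fin 8, ℕ) → E := fun t => u ^ t.2 * FF u v w t.1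
  refine ⟨B₁.image f₁ ∪ B₂.image f₂, ?_, h.gen_odd p hpE c2 _ ?_⟩
  · refine (Finset.card_union_le _ _).trans ((Nat.add_le_add Finset.card_image_le
      Finset.card_image_le).trans ?_)
    simp [B₁, B₂, Fin.sum_univ_eight, dd]
  set N := Submodule.span ℤ ((B₁.image f₁ ∪ B₂.image f₂ : Finset E) : Set E) with hN
  have hF : ∀ (a : ℕ) (i : Fin 8), u ^ a * FF u v w i ∈ N := by
    intro a i
    by_cases ha : a < 2 + dd i
    · apply Submodule.subset_span
      refine Finset.mem_coe.2 (Finset.mem_union_right _ (Finset.mem_image.2 ⟨⟨i, a⟩, ?_, rfl⟩))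
      simpa [B₂] using ha
    · obtain ⟨b, rfl⟩ := Nat.exists_eq_add_of_le (not_lt.1 ha)
      have : u ^ (2 + dd i + b) * FF u v w i = 0 := by
        rw [pow_add, mul_right_comm, h.FF_rel i, zero_mul]
      rw [this]; exact N.zero_mem
  have he : ∀ (a : ℕ) (j : Fin 8), u ^ a * ee v w j ∈ N := by
    intro a j
    by_cases ha : a < 28 - dd j
    · apply Submodule.subset_span
      refine Finset.mem_coe.2 (Finset.mem_union_left _ (Finset.mem_image.2 ⟨⟨j, a⟩, ?_, rfl⟩))
      simpa [B₁] using ha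
    · obtain ⟨b, rfl⟩ := Nat.exists_eq_add_of_le (not_lt.1 ha)
      have : u ^ (28 - dd j + b) * ee v w j = ∑ i, DD j i • (u ^ b * FF u v w i) := by
        rw [pow_add, mul_right_comm, ee_eq, Finset.sum_mul]
        refine Finset.sum_congr rfl fun i _ => ?_
        rw [smul_mul_assoc, mul_comm]
      rw [this]
      exact N.sum_mem fun i _ => N.smul_mem _ (hF b i)
  have key : ∀ n i k l : ℕ, 6 * k + 10 * l ≤ n → u ^ i * v ^ k * w ^ l ∈ N := by
    intro n
    induction n using Nat.strong_induction_on with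
    | _ n ih =>
      intro i k l hn
      by_cases hl : 2 ≤ l
      · obtain ⟨l, rfl⟩ := Nat.exists_eq_add_of_le hl
        apply smul_mem_cancel N p 3 hpE c3
        have : ((3 : ℤ) : E) * (u ^ i * v ^ k * w ^ (2 + l)) =
            (-9 : ℤ) • (u ^ (i + 20) * v ^ k * w ^ l)
            + (-45 : ℤ) • (u ^ (i + 14) * v ^ (k + 1) * w ^ l)
            + (-12 : ℤ) • (u ^ (i + 10) * v ^ k * w ^ (l + 1))
            + (-60 : ℤ) • (u ^ (i + 8) * v ^ (k + 2) * w ^ l)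
            + (-30 : ℤ) • (u ^ (i + 4) * v ^ (k + 1) * w ^ (l + 1))
            + (-10 : ℤ) • (u ^ (i + 2) * v ^ (k + 3) * w ^ l) := by
          simp only [zsmul_eq_mul]
          push_cast
          linear_combination (u ^ i * v ^ k * w ^ l) * h20
        rw [this]
        refine N.add_mem (N.add_mem (N.add_mem (N.add_mem (N.add_mem ?_ ?_) ?_) ?_) ?_) ?_ <;>
          exact N.smul_mem _ (ih (n - 1) (by omega) _ _ _ (by omega))
      by_cases hk : 4 ≤ k
      · obtain ⟨k, rfl⟩ := Nat.exists_eq_add_of_le hk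
        apply smul_mem_cancel N p 5 hpE c5
        have : ((5 : ℤ) : E) * (u ^ i * v ^ (4 + k) * w ^ l) =
            (16 : ℤ) • (u ^ (i + 24) * v ^ k * w ^ l)
            + (75 : ℤ) • (u ^ (i + 18) * v ^ (k + 1) * w ^ l)
            + (15 : ℤ) • (u ^ (i + 14) * v ^ k * w ^ (l + 1))
            + (75 : ℤ) • (u ^ (i + 12) * v ^ (k + 2) * w ^ l)
            + (30 : ℤ) • (u ^ (i + 8) * v ^ (k + 1) * w ^ (l + 1))
            + (-30 : ℤ) • (u ^ (i + 6) * v ^ (k + 3) * w ^ l)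
            + (-30 : ℤ) • (u ^ (i + 2) * v ^ (k + 2) * w ^ (l + 1)) := by
          simp only [zsmul_eq_mul]
          push_cast
          linear_combination (u ^ i * v ^ k * w ^ l) * h24 - 3 * (u ^ (i + 4) * v ^ k * w ^ l) * h20
        rw [this]
        refine N.add_mem (N.add_mem (N.add_mem (N.add_mem (N.add_mem (N.add_mem ?_ ?_) ?_) ?_) ?_)
          ?_) ?_ <;> exact N.smul_mem _ (ih (n - 1) (by omega) _ _ _ (by omega))
      have hk' : k < 4 := by omega
      have hl' : l < 2 := by omega
      interval_cases k <;> interval_cases l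
      · simpa [ee, mul_assoc] using he i 0
      · simpa [ee, mul_assoc] using he i 2
      · simpa [ee, mul_assoc] using he i 1
      · simpa [ee, mul_assoc] using he i 4
      · simpa [ee, mul_assoc] using he i 3
      · simpa [ee, mul_assoc] using he i 6
      · simpa [ee, mul_assoc] using he i 5
      · simpa [ee, mul_assoc] using he i 7
  exact fun i k l => key _ i k l le_rfl

theorem E8Rel.u_nilpotent (h : E8Rel u v w x) : u ^ 58 = 0 := by
  have h1 : u ^ 28 = ∑ i, DD 0 i • FF u v w i := by
    have := ee_eq u v w 0
    simpa [dd, ee] using this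
  have h2 : ∀ i, u ^ 30 * FF u v w i = 0 := by
    intro i
    have hd : dd i ≤ 28 := by fin_cases i <;> simp [dd]
    have : u ^ 30 = u ^ (28 - dd i) * u ^ (2 + dd i) := by
      rw [← pow_add]; congr 1; omega
    rw [this, mul_assoc, h.FF_rel i, mul_zero]
  have : u ^ 58 = u ^ 30 * u ^ 28 := by ring
  rw [this, h1, Finset.mul_sum]
  refine Finset.sum_eq_zero fun i _ => ?_
  rw [mul_smul_comm, h2, smul_zero]

end LargePrimes

section Finiteness

variable {E : Type*} [CommRing E] {u v w x : E}

theorem E8Rel.isIntegral (h : E8Rel u v w x) : Algebra.IsIntegral ℤ E := by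
  have nil : ∀ y : E, ∀ n : ℕ, n ≠ 0 → u ∣ y ^ n → IsIntegral ℤ y := by
    rintro y n hn ⟨c, hc⟩
    have h0 : y ^ (n * 58) = 0 := by rw [pow_mul, hc, mul_pow, h.u_nilpotent, zero_mul]
    exact IsIntegral.of_pow (n := n * 58) (by omega) (h0 ▸ isIntegral_zero)
  have a1 : u ∣ 2 * x := ⟨u ^ 14, by linear_combination -h.h15⟩
  have a2 : u ∣ 3 * w ^ 2 := ⟨-(9 * u ^ 19 + 45 * u ^ 13 * v + 12 * u ^ 9 * w + 60 * u ^ 7 * v ^ 2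
    + 30 * u ^ 3 * v * w + 10 * u * v ^ 3), by linear_combination h.h20⟩
  have a3 : u ∣ 5 * v ^ 4 := ⟨-(11 * u ^ 23 + 60 * u ^ 17 * v + 21 * u ^ 13 * w
    + 105 * u ^ 11 * v ^ 2 + 60 * u ^ 7 * v * w + 60 * u ^ 5 * v ^ 3 + 9 * u ^ 3 * w ^ 2
    + 30 * u * v ^ 2 * w), by linear_combination h.h24⟩
  have a4 : u ∣ 9 * x ^ 2 + 4 * v ^ 5 + 2 * w ^ 3 := ⟨- 12 * u ^ 8 * v * x - 6 * u ^ 4 * w * x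
    + 9 * u ^ 13 * v * w - 10 * u ^ 11 * v ^ 3 - 3 * u ^ 9 * w ^ 2 + 30 * u ^ 7 * v ^ 2 * w
    - 35 * u ^ 5 * v ^ 4 + 6 * u ^ 3 * v * w ^ 2 - 10 * u * v ^ 3 * w,
    by linear_combination -h.h30⟩
  obtain ⟨b1, a1⟩ := a1
  obtain ⟨b2, a2⟩ := a2
  obtain ⟨b3, a3⟩ := a3
  obtain ⟨b4, a4⟩ := a4
  have iu : IsIntegral ℤ u := nil u 1 one_ne_zero (by simp)
  have ix : IsIntegral ℤ x := nil x 2 (by norm_num)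
    ⟨15 * b4 - 67 * x * b1 - 10 * w * b2 - 12 * v * b3,
      by linear_combination 15 * a4 - 67 * x * a1 - 10 * w * a2 - 12 * v * a3⟩
  have iw : IsIntegral ℤ w := nil w 3 (by norm_num)
    ⟨20 * b4 - 90 * x * b1 - 13 * w * b2 - 16 * v * b3,
      by linear_combination 20 * a4 - 90 * x * a1 - 13 * w * a2 - 16 * v * a3⟩
  have iv : IsIntegral ℤ v := nil v 5 (by norm_num)
    ⟨24 * b4 - 108 * x * b1 - 16 * w * b2 - 19 * v * b3,
      by linear_combination 24 * a4 - 108 * x * a1 - 16 * w * a2 - 19 * v * a3⟩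
  have htop := h.gen (Subalgebra.toSubmodule (integralClosure ℤ E)) (fun i k l m =>
    (((iu.pow i).mul (iv.pow k)).mul (iw.pow l)).mul (ix.pow m))
  refine ⟨fun y => ?_⟩
  have : y ∈ Subalgebra.toSubmodule (integralClosure ℤ E) := htop ▸ trivial
  exact this

end Finiteness

section LowerBound

open Polynomial in
theorem mem_map_C_iff_map {B : Type*} [CommRing B] (J : Ideal B) (g : B[X]) :
    g ∈ J.map (Polynomial.C : B →+* B[X]) ↔ g.map (Ideal.Quotient.mk J) = 0 := by
  rw [Ideal.mem_map_C_iff, Polynomial.ext_iff]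
  simp [Ideal.Quotient.eq_zero_iff_mem]

open Polynomial in
theorem monic_regular {B : Type*} [CommRing B] (J : Ideal B) (c f f' b : B[X]) (hf' : f'.Monic)
    (hc : c * f - f' ∈ J.map (Polynomial.C : B →+* B[X]))
    (h : f * b ∈ J.map (Polynomial.C : B →+* B[X])) :
    b ∈ J.map (Polynomial.C : B →+* B[X]) := by
  have h1 : f' * b ∈ J.map (Polynomial.C : B →+* B[X]) := by
    have : f' * b = c * (f * b) - b * (c * f - f') := by ring
    rw [this]
    exact Ideal.sub_mem _ (Ideal.mul_mem_left _ _ h) (Ideal.mul_mem_left _ _ hc)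
  rw [mem_map_C_iff_map] at h1 ⊢
  rw [Polynomial.map_mul] at h1
  exact ((hf'.map _).mul_right_eq_zero_iff).1 h1

open Polynomial in
theorem monic_lt {B : Type*} [CommRing B] (J : Ideal B) (f b : B[X]) (hf : f.Monic)
    (hb : b ∈ J.map (Polynomial.C : B →+* B[X]) ⊔ Ideal.span {f}) (hd : b.degree < f.natDegree) :
    b ∈ J.map (Polynomial.C : B →+* B[X]) := by
  obtain ⟨y, hy, z, hz, rfl⟩ := Submodule.mem_sup.1 hb
  obtain ⟨z, rfl⟩ := Ideal.mem_span_singleton.1 hz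
  rw [mem_map_C_iff_map] at hy ⊢
  by_contra hne
  rcases subsingleton_or_nontrivial (B ⧸ J) with hs | hs
  · exact hne (Subsingleton.elim _ _)
  have : Nontrivial B := (Ideal.Quotient.mk J).domain_nontrivial
  refine (hf.map (Ideal.Quotient.mk J)).not_dvd_of_degree_lt hne ?_ ?_
  · rw [hf.degree_map, Polynomial.degree_eq_natDegree hf.ne_zero]
    exact lt_of_le_of_lt Polynomial.degree_map_le hd
  · rw [Polynomial.map_add, hy, zero_add, Polynomial.map_mul]
    exact dvd_mul_right _ _

theorem swap_regular {Q : Type*} [CommRing Q] (K : Ideal Q) (p g : Q)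
    (h1 : ∀ a, p * a ∈ K → a ∈ K)
    (h2 : ∀ b, g * b ∈ K ⊔ Ideal.span {p} → b ∈ K ⊔ Ideal.span {p}) :
    ∀ a, p * a ∈ K ⊔ Ideal.span {g} → a ∈ K ⊔ Ideal.span {g} := by
  intro a ha
  obtain ⟨k, hk, z, hz, hkz⟩ := Submodule.mem_sup.1 ha
  obtain ⟨b, rfl⟩ := Ideal.mem_span_singleton.1 hz
  have hb : g * b ∈ K ⊔ Ideal.span {p} := by
    have : g * b = -k + p * a := by rw [← hkz]; ring
    rw [this]
    exact Ideal.add_mem _ (Ideal.mem_sup_left (K.neg_mem hk))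
      (Ideal.mem_sup_right (Ideal.mem_span_singleton.2 (dvd_mul_right _ _)))
  obtain ⟨k', hk', z', hz', hb'⟩ := Submodule.mem_sup.1 (h2 b hb)
  obtain ⟨b', rfl⟩ := Ideal.mem_span_singleton.1 hz'
  have h3 : p * (a - g * b') ∈ K := by
    have : p * (a - g * b') = k + g * k' := by
      rw [mul_sub, ← hkz, ← hb']; ring
    rw [this]
    exact K.add_mem hk (K.mul_mem_left _ hk')
  have h4 := h1 _ h3
  have : a = (a - g * b') + g * b' := by ring
  rw [this]
  exact Ideal.add_mem _ (Ideal.mem_sup_left h4)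
    (Ideal.mem_sup_right (Ideal.mem_span_singleton.2 (dvd_mul_right _ _)))

end LowerBound

noncomputable section Tower

/-- The relation of weight 20, as a function. -/
def t20 {R : Type*} [CommRing R] (u v w : R) : R :=
  9 * u ^ 20 + 45 * u ^ 14 * v + 12 * u ^ 10 * w + 60 * u ^ 8 * v ^ 2
    + 30 * u ^ 4 * v * w + 10 * u ^ 2 * v ^ 3 + 3 * w ^ 2

/-- The relation of weight 24, as a function. -/
def t24 {R : Type*} [CommRing R] (u v w : R) : R :=
  11 * u ^ 24 + 60 * u ^ 18 * v + 21 * u ^ 14 * w + 105 * u ^ 12 * v ^ 2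
    + 60 * u ^ 8 * v * w + 60 * u ^ 6 * v ^ 3 + 9 * u ^ 4 * w ^ 2
    + 30 * u ^ 2 * v ^ 2 * w + 5 * v ^ 4

/-- The relation of weight 30, as a function. -/
def t30 {R : Type*} [CommRing R] (u v w x : R) : R :=
  -9 * x ^ 2 - 12 * u ^ 9 * v * x - 6 * u ^ 5 * w * x + 9 * u ^ 14 * v * w
    - 10 * u ^ 12 * v ^ 3 - 3 * u ^ 10 * w ^ 2 + 30 * u ^ 8 * v ^ 2 * w
    - 35 * u ^ 6 * v ^ 4 + 6 * u ^ 4 * v * w ^ 2 - 10 * u ^ 2 * v ^ 3 * w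
    - 4 * v ^ 5 - 2 * w ^ 3


section Generic

variable {Q : Type*} [CommRing Q] (U V W : Q)

/-- The three relations after the substitution `u = 2 U`, `x = 2 ^ 14 * U ^ 15`. -/
def g24 : Q := 3 * (2 * U) ^ 4 * t20 (2 * U) V W - t24 (2 * U) V W
def g20 : Q := t20 (2 * U) V W
def g30 : Q := t30 (2 * U) V W (2 ^ 14 * U ^ 15)

def F20 : Q := W ^ 2 - (2 * U) ^ 10 * W - 2 * (2 * U) ^ 20

def F30 : Q := V ^ 5
    + (-12 * (2 * U) ^ 9 * (2 ^ 14 * U ^ 15) + 9 * (2 * U) ^ 14 * W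
      + 6 * (2 * U) ^ 4 * W ^ 2) * V
    + (-9 * (2 ^ 14 * U ^ 15) ^ 2 - 6 * (2 * U) ^ 5 * W * (2 ^ 14 * U ^ 15)
      - 3 * (2 * U) ^ 10 * W ^ 2 - 2 * W ^ 3)

def KK : Ideal Q :=
  ((⊥ ⊔ Ideal.span {g24 U V W}) ⊔ Ideal.span {g20 U V W}) ⊔ Ideal.span {g30 U V W}

def L0 : Ideal Q := Ideal.span {5} ⊔ Ideal.span {U ^ 24}
def L1 : Ideal Q := L0 U ⊔ Ideal.span {F20 U W}
def L2 : Ideal Q := L1 U W ⊔ Ideal.span {F30 U V W}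

theorem id20 : ∃ q, 2 * g20 U V W = F20 U W + 5 * q := by
  refine ⟨4 * (2 * U) ^ 20 + 18 * (2 * U) ^ 14 * V + 5 * (2 * U) ^ 10 * W
      + 24 * (2 * U) ^ 8 * V ^ 2 + 12 * (2 * U) ^ 4 * V * W + 4 * (2 * U) ^ 2 * V ^ 3 + W ^ 2, ?_⟩
  unfold g20 F20 t20; ring

theorem id24 : ∃ q, g24 U V W = U ^ 24 + 5 * q := by
  refine ⟨3355443 * U ^ 24 - (-3 * (2 * U) ^ 24 - 15 * (2 * U) ^ 18 * V
      - 3 * (2 * U) ^ 14 * W - 15 * (2 * U) ^ 12 * V ^ 2 - 6 * (2 * U) ^ 8 * V * W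
      + 6 * (2 * U) ^ 6 * V ^ 3 + 6 * (2 * U) ^ 2 * V ^ 2 * W + V ^ 4), ?_⟩
  unfold g24 t20 t24; ring

theorem id30 : ∃ q, g30 U V W = F30 U V W + 5 * q := by
  refine ⟨-2 * (2 * U) ^ 12 * V ^ 3 + 6 * (2 * U) ^ 8 * V ^ 2 * W
    - 7 * (2 * U) ^ 6 * V ^ 4 - 2 * (2 * U) ^ 2 * V ^ 3 * W - V ^ 5, ?_⟩
  unfold F30 g30 t30; ring

theorem five_mul_mem {R : Type*} [CommRing R] {I : Ideal R} (h : (5 : R) ∈ I) (q : R) :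
    5 * q ∈ I := by
  rw [mul_comm]; exact I.mul_mem_left _ h

theorem mem_of_eq_add {R : Type*} [CommRing R] {I : Ideal R} (h : (5 : R) ∈ I) {a b q : R}
    (ha : a ∈ I) (hq : a = b + 5 * q) : b ∈ I := by
  have : b = a - 5 * q := by rw [hq]; ring
  rw [this]
  exact I.sub_mem ha (five_mul_mem h q)

theorem mem_of_two_mul {R : Type*} [CommRing R] {I : Ideal R} (h : (5 : R) ∈ I) {a b q : R}
    (ha : a ∈ I) (hq : 2 * b = a + 5 * q) : b ∈ I := by
  have : b = 3 * a + 5 * (3 * q - b) := by linear_combination 3 * hq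
  rw [this]
  exact I.add_mem (I.mul_mem_left _ ha) (five_mul_mem h _)

theorem mul_mem_of_two_mul {R : Type*} [CommRing R] {I : Ideal R} (h : (5 : R) ∈ I)
    {a b c q : R} (ha : b * c ∈ I) (hq : 2 * b = a + 5 * q) : a * c ∈ I := by
  have : a * c = 2 * (b * c) - 5 * (q * c) := by linear_combination (-c) * hq
  rw [this]
  exact I.sub_mem (I.mul_mem_left _ ha) (five_mul_mem h _)

theorem five_mem_L0 : (5 : Q) ∈ L0 U := Ideal.mem_sup_left (Ideal.mem_span_singleton_self _)

theorem K1_eq : (⊥ ⊔ Ideal.span {g24 U V W}) ⊔ Ideal.span {(5 : Q)} = L0 U := by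
  rw [bot_sup_eq, L0]
  obtain ⟨q, hq⟩ := id24 U V W
  apply le_antisymm
  · rw [sup_le_iff, Ideal.span_singleton_le_iff_mem]
    refine ⟨?_, le_sup_left⟩
    rw [hq]
    exact Ideal.add_mem _ (Ideal.mem_sup_right (Ideal.mem_span_singleton_self _))
      (five_mul_mem (Ideal.mem_sup_left (Ideal.mem_span_singleton_self _)) q)
  · rw [sup_le_iff, Ideal.span_singleton_le_iff_mem (x := U ^ 24)]
    refine ⟨le_sup_right, ?_⟩
    exact mem_of_eq_add (Ideal.mem_sup_right (Ideal.mem_span_singleton_self _))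
      (Ideal.mem_sup_left (Ideal.mem_span_singleton_self _)) hq

theorem K2_eq : ((⊥ ⊔ Ideal.span {g24 U V W}) ⊔ Ideal.span {g20 U V W}) ⊔ Ideal.span {(5 : Q)}
    = L1 U W := by
  rw [sup_right_comm, K1_eq, L1]
  obtain ⟨q, hq⟩ := id20 U V W
  apply le_antisymm
  · refine sup_le le_sup_left ?_
    rw [Ideal.span_singleton_le_iff_mem]
    exact mem_of_two_mul (Ideal.mem_sup_left (five_mem_L0 U))
      (Ideal.mem_sup_right (Ideal.mem_span_singleton_self _)) hq
  · refine sup_le le_sup_left ?_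
    rw [Ideal.span_singleton_le_iff_mem]
    exact mem_of_eq_add (Ideal.mem_sup_left (five_mem_L0 U)) (Ideal.mul_mem_left _ _
      (Ideal.mem_sup_right (Ideal.mem_span_singleton_self _))) hq

theorem KK_le : KK U V W ≤ L2 U V W := by
  have h5 : (5 : Q) ∈ L1 U W := Ideal.mem_sup_left (five_mem_L0 U)
  refine sup_le ?_ ?_
  · rw [L2, ← K2_eq U V W]
    exact le_sup_left.trans le_sup_left
  · obtain ⟨q, hq⟩ := id30 U V W
    rw [Ideal.span_singleton_le_iff_mem, hq]
    exact Ideal.add_mem _ (Ideal.mem_sup_right (Ideal.mem_span_singleton_self _))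
      (five_mul_mem (Ideal.mem_sup_left h5) _)

theorem KK_torsion [IsDomain Q] (hp : Prime (5 : Q)) (hU : ¬ (5 : Q) ∣ U)
    (h20 : ∀ b, F20 U W * b ∈ L0 U → b ∈ L0 U)
    (h30 : ∀ b, F30 U V W * b ∈ L1 U W → b ∈ L1 U W) :
    ∀ a : Q, 5 * a ∈ KK U V W → a ∈ KK U V W := by
  refine swap_regular _ 5 _ (swap_regular _ 5 _ (swap_regular ⊥ 5 _ ?_ ?_) ?_) ?_
  · intro a ha
    have : (5 : Q) * a = 0 := ha
    exact (mul_eq_zero.1 this).resolve_left hp.ne_zero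
  · intro b hb
    rw [bot_sup_eq, Ideal.mem_span_singleton] at hb ⊢
    refine (hp.dvd_or_dvd hb).resolve_left ?_
    obtain ⟨q, hq⟩ := id24 U V W
    rw [hq]
    intro hd
    exact hU (hp.dvd_of_dvd_pow ((dvd_add_left (dvd_mul_right _ _)).1 hd))
  · intro b hb
    rw [K1_eq] at hb ⊢
    obtain ⟨q, hq⟩ := id20 U V W
    exact h20 b (mul_mem_of_two_mul (five_mem_L0 U) hb hq)
  · intro b hb
    rw [K2_eq] at hb ⊢
    obtain ⟨q, hq⟩ := id30 U V W
    apply h30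
    have h5 : (5 : Q) ∈ L1 U W := Ideal.mem_sup_left (five_mem_L0 U)
    have : F30 U V W * b = g30 U V W * b - 5 * (q * b) := by rw [hq]; ring
    rw [this]
    exact Ideal.sub_mem _ hb (five_mul_mem h5 _)

end Generic

/-- The ring `ℤ[U][W][V]`. -/
abbrev Q3 : Type := Polynomial (Polynomial (Polynomial ℤ))

/-- The variable `U`. -/
def qU : Q3 := Polynomial.C (Polynomial.C Polynomial.X)
/-- The variable `W`. -/
def qW : Q3 := Polynomial.C Polynomial.X
/-- The variable `V`. -/
def qV : Q3 := Polynomial.X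

def K3 : Ideal Q3 := KK qU qV qW

def f20 : Polynomial (Polynomial ℤ) :=
  Polynomial.X ^ 2 + Polynomial.C (-(2 * Polynomial.X) ^ 10) * Polynomial.X
    + Polynomial.C (-2 * (2 * Polynomial.X) ^ 20)

def f30a : Polynomial (Polynomial ℤ) :=
  -12 * (2 * Polynomial.C (Polynomial.X : Polynomial ℤ)) ^ 9 * (2 ^ 14 * (Polynomial.C (Polynomial.X : Polynomial ℤ)) ^ 15)
    + 9 * (2 * Polynomial.C (Polynomial.X : Polynomial ℤ)) ^ 14 * Polynomial.X
    + 6 * (2 * Polynomial.C (Polynomial.X : Polynomial ℤ)) ^ 4 * Polynomial.X ^ 2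

def f30b : Polynomial (Polynomial ℤ) :=
  -9 * (2 ^ 14 * (Polynomial.C (Polynomial.X : Polynomial ℤ)) ^ 15) ^ 2
    - 6 * (2 * Polynomial.C (Polynomial.X : Polynomial ℤ)) ^ 5 * Polynomial.X
      * (2 ^ 14 * (Polynomial.C (Polynomial.X : Polynomial ℤ)) ^ 15)
    - 3 * (2 * Polynomial.C (Polynomial.X : Polynomial ℤ)) ^ 10 * Polynomial.X ^ 2 - 2 * Polynomial.X ^ 3

def f30 : Q3 := Polynomial.X ^ 5 + Polynomial.C f30a * Polynomial.X + Polynomial.C f30b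

def J0 : Ideal (Polynomial ℤ) :=
  (Ideal.span {(5 : ℤ)}).map Polynomial.C ⊔ Ideal.span {Polynomial.X ^ 24}
def J1 : Ideal (Polynomial (Polynomial ℤ)) := J0.map Polynomial.C ⊔ Ideal.span {f20}
def J2 : Ideal Q3 := J1.map Polynomial.C ⊔ Ideal.span {f30}

theorem f20_monic : f20.Monic := by unfold f20; monicity!
theorem f30_monic : f30.Monic := by unfold f30; monicity!
theorem f20_natDegree : f20.natDegree = 2 := by unfold f20; compute_degree!
theorem f30_natDegree : f30.natDegree = 5 := by unfold f30; compute_degree!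

theorem C_f20 : (Polynomial.C f20 : Q3) = F20 qU qW := by
  simp only [F20, f20, qU, qW, map_add, map_mul, map_pow, map_neg, map_ofNat]
  ring

theorem f30_eq : f30 = F30 qU qV qW := by
  simp only [F30, f30, f30a, f30b, qU, qW, qV, map_add, map_sub, map_mul, map_pow, map_neg,
    map_ofNat]

theorem mapJ0 : (J0.map Polynomial.C).map Polynomial.C = L0 qU := by
  simp only [L0, J0, Ideal.map_sup, Ideal.map_span, Set.image_singleton, qU, map_pow, map_ofNat]

theorem mapJ1 : (J1.map Polynomial.C : Ideal Q3) = L1 qU qW := by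
  rw [J1, Ideal.map_sup, mapJ0, L1, ← C_f20]
  simp only [Ideal.map_span, Set.image_singleton]

theorem J2_eq : J2 = L2 qU qV qW := by
  rw [J2, mapJ1, L2, f30_eq]

theorem K3_le : K3 ≤ J2 := by
  rw [J2_eq]; exact KK_le _ _ _

theorem prime_five : Prime (5 : Q3) := by
  have h : Prime (5 : ℤ) := by norm_num
  have h1 := Polynomial.prime_C_iff.2 (Polynomial.prime_C_iff.2 (Polynomial.prime_C_iff.2 h))
  simpa only [map_ofNat] using h1

theorem not_dvd_qU : ¬ (5 : Q3) ∣ qU := by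
  rintro ⟨y, hy⟩
  have h3 := congrArg (fun z : Q3 => ((z.eval 0).eval 0).eval 1) hy
  simp [qU] at h3
  omega

theorem regular_C {B : Type*} [CommRing B] (J : Ideal B) (f : B)
    (hf : ∀ b, f * b ∈ J → b ∈ J) (b : Polynomial B)
    (hb : Polynomial.C f * b ∈ J.map (Polynomial.C : B →+* Polynomial B)) :
    b ∈ J.map (Polynomial.C : B →+* Polynomial B) := by
  rw [Ideal.mem_map_C_iff] at hb ⊢
  intro n
  have h2 := hb n
  rw [Polynomial.coeff_C_mul] at h2
  exact hf _ h2

theorem regular_monic {B : Type*} [CommRing B] (J : Ideal B) (f : Polynomial B) (hf : f.Monic)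
    (b : Polynomial B) (hb : f * b ∈ J.map (Polynomial.C : B →+* Polynomial B)) :
    b ∈ J.map (Polynomial.C : B →+* Polynomial B) :=
  monic_regular J 1 f f b hf (by simp) hb

theorem K3_torsion : ∀ a : Q3, 5 * a ∈ K3 → a ∈ K3 := by
  refine KK_torsion qU qV qW prime_five not_dvd_qU ?_ ?_
  · rw [← mapJ0, ← C_f20]
    exact regular_C _ _ (regular_monic J0 f20 f20_monic)
  · rw [← mapJ1, ← f30_eq]
    exact regular_monic J1 f30 f30_monic

/-- The polynomial with coefficients `c i j k` at `U ^ i * W ^ j * V ^ k`. -/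
def poly3 (c : Fin 24 → Fin 2 → Fin 5 → ℤ) : Q3 :=
  ∑ k : Fin 5, Polynomial.C (∑ j : Fin 2, Polynomial.C (∑ i : Fin 24,
    Polynomial.C (c i j k) * Polynomial.X ^ (i : ℕ)) * Polynomial.X ^ (j : ℕ))
    * Polynomial.X ^ (k : ℕ)

theorem coeff_fin_sum {B : Type*} [CommRing B] {n : ℕ} (f : Fin n → B) (k : Fin n) :
    (∑ i : Fin n, Polynomial.C (f i) * Polynomial.X ^ (i : ℕ)).coeff (k : ℕ) = f k := by
  rw [Polynomial.finsetSum_coeff, Finset.sum_eq_single k]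
  · simp
  · intro b _ hb
    rw [Polynomial.coeff_C_mul, Polynomial.coeff_X_pow, if_neg, mul_zero]
    exact fun h => hb (Fin.ext h.symm)
  · simp

theorem poly3_dvd (c : Fin 24 → Fin 2 → Fin 5 → ℤ) (h : poly3 c ∈ J2) (i : Fin 24) (j : Fin 2)
    (k : Fin 5) : (5 : ℤ) ∣ c i j k := by
  have h1 := monic_lt J1 f30 _ f30_monic h (by
    rw [f30_natDegree]; exact Polynomial.degree_sum_fin_lt _)
  have h2 := Ideal.mem_map_C_iff.1 h1 k
  rw [poly3, coeff_fin_sum] at h2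
  have h3 := monic_lt J0 f20 _ f20_monic h2 (by
    rw [f20_natDegree]; exact Polynomial.degree_sum_fin_lt _)
  have h4 := Ideal.mem_map_C_iff.1 h3 j
  rw [coeff_fin_sum] at h4
  have h5 := monic_lt _ (Polynomial.X ^ 24) _ (Polynomial.monic_X_pow 24) h4 (by
    rw [Polynomial.natDegree_X_pow]; exact Polynomial.degree_sum_fin_lt _)
  have h6 := Ideal.mem_map_C_iff.1 h5 i
  rw [coeff_fin_sum] at h6
  exact Ideal.mem_span_singleton.1 h6

theorem poly3_pow_dvd (n : ℕ) : ∀ c : Fin 24 → Fin 2 → Fin 5 → ℤ, poly3 c ∈ K3 →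
    ∀ i j k, (5 : ℤ) ^ n ∣ c i j k := by
  induction n with
  | zero => intro c _ i j k; simp
  | succ n ih =>
    intro c hc
    have h1 := poly3_dvd c (K3_le hc)
    choose c' hc' using h1
    have h2 : poly3 c = 5 * poly3 c' := by
      simp only [poly3, hc', map_mul, map_ofNat, Finset.mul_sum, Finset.sum_mul, map_sum, mul_assoc]
    have h3 := ih c' (K3_torsion _ (h2 ▸ hc))
    intro i j k
    rw [hc', pow_succ']
    exact mul_dvd_mul_left _ (h3 i j k)

theorem poly3_eq_zero (c : Fin 24 → Fin 2 → Fin 5 → ℤ) (hc : poly3 c ∈ K3) (i : Fin 24)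
    (j : Fin 2) (k : Fin 5) : c i j k = 0 := by
  have h := poly3_pow_dvd ((c i j k).natAbs) c hc i j k
  apply Int.eq_zero_of_abs_lt_dvd h
  rw [Int.abs_eq_natAbs]
  exact_mod_cast Nat.lt_pow_self (by norm_num)

end Tower

section Assembly

theorem E8Rel.map {E F : Type*} [CommRing E] [CommRing F] {u v w x : E} (h : E8Rel u v w x)
    (f : E →+* F) (hf : Function.Surjective f) : E8Rel (f u) (f v) (f w) (f x) where
  h15 := by
    simpa only [map_add, map_sub, map_mul, map_pow, map_neg, map_ofNat, map_zero] using congrArg f h.h15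
  h20 := by
    simpa only [map_add, map_sub, map_mul, map_pow, map_neg, map_ofNat, map_zero] using congrArg f h.h20
  h24 := by
    simpa only [map_add, map_sub, map_mul, map_pow, map_neg, map_ofNat, map_zero] using congrArg f h.h24
  h30 := by
    simpa only [map_add, map_sub, map_mul, map_pow, map_neg, map_ofNat, map_zero] using congrArg f h.h30
  gen := by
    intro N hN
    have h1 := h.gen (N.comap f.toAddMonoidHom.toIntLinearMap) (by
      intro i k l m
      rw [Submodule.mem_comap]
      simpa using hN i k l m)
    rw [eq_top_iff]
    intro y _
    obtain ⟨z, rfl⟩ := hf y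
    have hz : z ∈ N.comap f.toAddMonoidHom.toIntLinearMap := by rw [h1]; trivial
    exact hz

abbrev AA : Type := MvPolynomial (Fin 4) ℤ ⧸ E8C.relIdeal

theorem mk_eq_zero_of_mem {p : MvPolynomial (Fin 4) ℤ}
    (hp : p ∈ ({E8C.r15, E8C.r20, E8C.r24, E8C.r30} : Set (MvPolynomial (Fin 4) ℤ))) :
    Ideal.Quotient.mk E8C.relIdeal p = 0 :=
  Ideal.Quotient.eq_zero_iff_mem.2 (Ideal.subset_span hp)

theorem monomials_span (N : Submodule ℤ (MvPolynomial (Fin 4) ℤ))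
    (hN : ∀ i k l m : ℕ, E8C.u ^ i * E8C.v ^ k * E8C.w ^ l * E8C.x ^ m ∈ N) : N = ⊤ := by
  rw [eq_top_iff]
  intro p _
  induction p using MvPolynomial.induction_on' with
  | monomial s a =>
    rw [MvPolynomial.monomial_eq, Finsupp.prod_fintype _ _ (by simp), Fin.prod_univ_four,
      ← MvPolynomial.smul_eq_C_mul]
    exact N.smul_mem a (hN _ _ _ _)
  | add p q hp hq => exact N.add_mem (hp trivial) (hq trivial)

theorem AA_rel : E8Rel (Ideal.Quotient.mk E8C.relIdeal E8C.u) (Ideal.Quotient.mk E8C.relIdeal E8C.v)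
    (Ideal.Quotient.mk E8C.relIdeal E8C.w) (Ideal.Quotient.mk E8C.relIdeal E8C.x) where
  h15 := by
    have := mk_eq_zero_of_mem (p := E8C.r15) (by simp)
    simpa only [E8C.r15, map_add, map_sub, map_mul, map_pow, map_ofNat] using this
  h20 := by
    have := mk_eq_zero_of_mem (p := E8C.r20) (by simp)
    simpa only [E8C.r20, map_add, map_sub, map_mul, map_pow, map_ofNat] using this
  h24 := by
    have := mk_eq_zero_of_mem (p := E8C.r24) (by simp)
    simpa only [E8C.r24, map_add, map_sub, map_mul, map_pow, map_ofNat] using this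
  h30 := by
    have := mk_eq_zero_of_mem (p := E8C.r30) (by simp)
    simpa only [E8C.r30, map_add, map_sub, map_mul, map_pow, map_neg, map_ofNat] using this
  gen := by
    intro N hN
    have h1 := monomials_span
      (N.comap (Ideal.Quotient.mk E8C.relIdeal).toAddMonoidHom.toIntLinearMap) (by
        intro i k l m
        rw [Submodule.mem_comap]
        simpa using hN i k l m)
    rw [eq_top_iff]
    intro y _
    obtain ⟨z, rfl⟩ := Ideal.Quotient.mk_surjective y
    have hz : z ∈ N.comap (Ideal.Quotient.mk E8C.relIdeal).toAddMonoidHom.toIntLinearMap := by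
      rw [h1]; trivial
    exact hz

theorem E8Rel.span_prime {E : Type*} [CommRing E] {u v w x : E} (h : E8Rel u v w x) (p : ℕ)
    (hp : p.Prime) (hpE : (p : E) = 0) :
    ∃ s : Finset E, s.card ≤ 240 ∧ Submodule.span ℤ (s : Set E) = ⊤ := by
  by_cases h7 : 7 ≤ p
  · exact h.span_large p hp h7 (by simpa using hpE)
  · have h2 := hp.two_le
    interval_cases p
    · exact h.span_two (by simpa using hpE)
    · exact h.span_three (by simpa using hpE)
    · exact absurd hp (by norm_num)
    · exact h.span_five (by simpa using hpE)
    · exact absurd hp (by norm_num)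

theorem lift_span {A : Type*} [CommRing A] (p : ℕ) (n : ℕ)
    (h : ∃ s : Finset (A ⧸ Ideal.span {(p : A)}), s.card ≤ n ∧
      Submodule.span ℤ (s : Set (A ⧸ Ideal.span {(p : A)})) = ⊤) :
    ∃ s : Finset A, s.card ≤ n ∧ (⊤ : Submodule ℤ A) ≤ Submodule.span ℤ (s : Set A) ⊔
      (Ideal.span {(p : ℤ)} : Ideal ℤ) • (⊤ : Submodule ℤ A) := by
  classical
  obtain ⟨s, hs, hspan⟩ := h
  have hsurj : Function.Surjective (Ideal.Quotient.mk (Ideal.span {(p : A)})) :=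
    Ideal.Quotient.mk_surjective
  set g := Function.surjInv hsurj with hg
  refine ⟨s.image g, Finset.card_image_le.trans hs, ?_⟩
  intro a _
  set f : A →ₗ[ℤ] A ⧸ Ideal.span {(p : A)} :=
    (Ideal.Quotient.mk (Ideal.span {(p : A)})).toAddMonoidHom.toIntLinearMap with hf
  have h1 : (Submodule.span ℤ (s.image g : Set A)).map f = ⊤ := by
    rw [Submodule.map_span, ← hspan]
    congr 1
    rw [Finset.coe_image, Set.image_image]
    have : ∀ y, f (g y) = y := fun y => Function.surjInv_eq hsurj y
    simp only [this, Set.image_id']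
  have h2 : f a ∈ (Submodule.span ℤ (s.image g : Set A)).map f := by rw [h1]; trivial
  obtain ⟨b, hb, hba⟩ := h2
  have h3 : a - b ∈ Ideal.span {(p : A)} := by
    rw [← Ideal.Quotient.eq]; exact hba.symm
  obtain ⟨c, hc⟩ := Ideal.mem_span_singleton.1 h3
  have h4 : a = b + (p : ℤ) • c := by
    rw [zsmul_eq_mul, Int.cast_natCast, ← hc]; ring
  rw [h4]
  exact Submodule.add_mem_sup hb
    (Submodule.smul_mem_smul (Ideal.mem_span_singleton_self _) trivial)

theorem E8Rel.span_lift {A : Type*} [CommRing A] {u v w x : A} (h : E8Rel u v w x) (p : ℕ)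
    (hp : p.Prime) : ∃ s : Finset A, s.card ≤ 240 ∧
    (⊤ : Submodule ℤ A) ≤ Submodule.span ℤ (s : Set A) ⊔
      (Ideal.span {(p : ℤ)} : Ideal ℤ) • (⊤ : Submodule ℤ A) := by
  apply lift_span
  refine (h.map (Ideal.Quotient.mk (Ideal.span {(p : A)}))
    Ideal.Quotient.mk_surjective).span_prime p hp ?_
  rw [← map_natCast (Ideal.Quotient.mk (Ideal.span {(p : A)})), Ideal.Quotient.eq_zero_iff_mem]
  exact Ideal.mem_span_singleton_self _

theorem AA_finite : Module.Finite ℤ AA := by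
  have h1 : Algebra.IsIntegral ℤ AA := AA_rel.isIntegral
  have h2 : Algebra.FiniteType ℤ AA := inferInstance
  exact Algebra.IsIntegral.finite

theorem aeval_mem_KK {Q : Type*} [CommRing Q] (U V W : Q) (p : MvPolynomial (Fin 4) ℤ)
    (hp : p ∈ E8C.relIdeal) :
    MvPolynomial.aeval ![2 * U, V, W, 2 ^ 14 * U ^ 15] p ∈ KK U V W := by
  set f : MvPolynomial (Fin 4) ℤ →ₐ[ℤ] Q := MvPolynomial.aeval ![2 * U, V, W, 2 ^ 14 * U ^ 15]
    with hf
  have hu : f E8C.u = 2 * U := by simp [hf, E8C.u]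
  have hv : f E8C.v = V := by simp [hf, E8C.v]
  have hw : f E8C.w = W := by simp [hf, E8C.w]
  have hx : f E8C.x = 2 ^ 14 * U ^ 15 := by simp [hf, E8C.x]
  have m24 : g24 U V W ∈ KK U V W := Ideal.mem_sup_left (Ideal.mem_sup_left
    (Ideal.mem_sup_right (Ideal.mem_span_singleton_self _)))
  have m20 : g20 U V W ∈ KK U V W := Ideal.mem_sup_left
    (Ideal.mem_sup_right (Ideal.mem_span_singleton_self _))
  have m30 : g30 U V W ∈ KK U V W := Ideal.mem_sup_right (Ideal.mem_span_singleton_self _)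
  suffices h : E8C.relIdeal ≤ (KK U V W).comap f from h hp
  rw [E8C.relIdeal, Ideal.span_le]
  intro q hq
  simp only [Set.mem_insert_iff, Set.mem_singleton_iff] at hq
  show f q ∈ KK U V W
  rcases hq with rfl | rfl | rfl | rfl
  · have : f E8C.r15 = 0 := by
      simp only [E8C.r15, map_sub, map_mul, map_pow, map_ofNat, hu, hx]; ring
    rw [this]; exact Ideal.zero_mem _
  · have : f E8C.r20 = g20 U V W := by
      simp only [E8C.r20, map_add, map_mul, map_pow, map_ofNat, hu, hv, hw, g20, t20]
    rw [this]; exact m20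
  · have : f E8C.r24 = 3 * (2 * U) ^ 4 * g20 U V W - g24 U V W := by
      simp only [E8C.r24, map_add, map_mul, map_pow, map_ofNat, hu, hv, hw, g20, g24, t24]
      ring
    rw [this]; exact Ideal.sub_mem _ (Ideal.mul_mem_left _ _ m20) m24
  · have : f E8C.r30 = g30 U V W := by
      simp only [E8C.r30, map_add, map_sub, map_mul, map_pow, map_neg, map_ofNat, hu, hv, hw, hx,
        g30, t30]
    rw [this]; exact m30

/-- The candidate basis over the rationals. -/
noncomputable def bb (t : Fin 24 × Fin 2 × Fin 5) : MvPolynomial (Fin 4) ℤ :=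
  E8C.u ^ (t.1 : ℕ) * E8C.w ^ (t.2.1 : ℕ) * E8C.v ^ (t.2.2 : ℕ)

theorem poly3_eq (c : Fin 24 → Fin 2 → Fin 5 → ℤ) :
    poly3 c = ∑ t : Fin 24 × Fin 2 × Fin 5,
      (c t.1 t.2.1 t.2.2 : Q3) * (qU ^ (t.1 : ℕ) * qW ^ (t.2.1 : ℕ) * qV ^ (t.2.2 : ℕ)) := by
  rw [Fintype.sum_prod_type_right]
  rw [Fintype.sum_prod_type_right]
  rw [poly3]
  refine Finset.sum_congr rfl fun k _ => ?_
  rw [map_sum, Finset.sum_mul]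
  refine Finset.sum_congr rfl fun j _ => ?_
  rw [map_mul, map_sum, map_sum, Finset.sum_mul, Finset.sum_mul]
  refine Finset.sum_congr rfl fun i _ => ?_
  simp only [map_mul, map_pow, qU, qW, qV, mul_assoc, eq_intCast, map_intCast]

theorem sum_mem_KK {Q : Type*} [CommRing Q] (U V W : Q) (g : Fin 24 × Fin 2 × Fin 5 → ℤ)
    (h : (∑ t, g t • bb t) ∈ E8C.relIdeal) :
    ∑ t : Fin 24 × Fin 2 × Fin 5, ((g t * 2 ^ (t.1 : ℕ) : ℤ) : Q) *
      (U ^ (t.1 : ℕ) * W ^ (t.2.1 : ℕ) * V ^ (t.2.2 : ℕ)) ∈ KK U V W := by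
  have h2 := aeval_mem_KK U V W _ h
  rw [map_sum] at h2
  convert h2 using 2 with t
  rw [map_zsmul, zsmul_eq_mul]
  simp [bb, E8C.u, E8C.v, E8C.w]
  ring

theorem AA_independent :
    LinearIndependent ℤ (fun t => Ideal.Quotient.mk E8C.relIdeal (bb t)) := by
  rw [Fintype.linearIndependent_iff]
  intro g hg t
  have h1 : (∑ t, g t • bb t) ∈ E8C.relIdeal := by
    rw [← Ideal.Quotient.eq_zero_iff_mem, map_sum]
    simpa only [map_zsmul] using hg
  have h2 : poly3 (fun i j k => g (i, j, k) * 2 ^ (i : ℕ)) ∈ K3 := by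
    rw [poly3_eq]
    exact sum_mem_KK qU qV qW g h1
  have h3 := poly3_eq_zero _ h2 t.1 t.2.1 t.2.2
  exact (mul_eq_zero.1 h3).resolve_right (by positivity)

end Assembly


end E8Proof

/-- `ℤ[u,v,w,x]/(r₁₅, r₂₀, r₂₄, r₃₀)` is a free `ℤ`-module of
rank `240` (the integral cohomology `H^*(E₈/C; ℤ)` is torsion-free with total
Betti number `240`). -/
theorem free_rank_E8C :
    Module.Free ℤ (MvPolynomial (Fin 4) ℤ ⧸ E8C.relIdeal) ∧
    Module.rank ℤ (MvPolynomial (Fin 4) ℤ ⧸ E8C.relIdeal) = 240 := by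
  have hfin : Module.Finite ℤ (MvPolynomial (Fin 4) ℤ ⧸ E8C.relIdeal) := E8Proof.AA_finite
  have hcard : Fintype.card (Fin 24 × Fin 2 × Fin 5) = 240 := by simp
  obtain ⟨h1, h2⟩ := E8Proof.free_of_spanning _ E8Proof.AA_independent (fun p hp => by
    rw [hcard]; exact E8Proof.AA_rel.span_lift p hp)
  refine ⟨h1, ?_⟩
  rw [h2, hcard]
  norm_num
end

section
/- The quotient ℚ-algebra ℚ[u,v,w,x]/(r15, r20, r24, r30) is a finite-dimensional ℚ-vector space of dimension 240; in particular the four polynomials r15, r20, r24, r30 form a regular sequence in ℚ[u,v,w,x]. -/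
open MvPolynomial

noncomputable section

namespace E8CQ

/-- `u = X 0`, of degree 2. -/
def u : MvPolynomial (Fin 4) ℚ := X 0
/-- `v = X 1`, of degree 12. -/
def v : MvPolynomial (Fin 4) ℚ := X 1
/-- `w = X 2`, of degree 20. -/
def w : MvPolynomial (Fin 4) ℚ := X 2
/-- `x = X 3`, of degree 30. -/
def x : MvPolynomial (Fin 4) ℚ := X 3

def r15 : MvPolynomial (Fin 4) ℚ := u ^ 15 - 2 * x

def r20 : MvPolynomial (Fin 4) ℚ :=
  9 * u ^ 20 + 45 * u ^ 14 * v + 12 * u ^ 10 * w + 60 * u ^ 8 * v ^ 2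
    + 30 * u ^ 4 * v * w + 10 * u ^ 2 * v ^ 3 + 3 * w ^ 2

def r24 : MvPolynomial (Fin 4) ℚ :=
  11 * u ^ 24 + 60 * u ^ 18 * v + 21 * u ^ 14 * w + 105 * u ^ 12 * v ^ 2
    + 60 * u ^ 8 * v * w + 60 * u ^ 6 * v ^ 3 + 9 * u ^ 4 * w ^ 2
    + 30 * u ^ 2 * v ^ 2 * w + 5 * v ^ 4

def r30 : MvPolynomial (Fin 4) ℚ :=
  -9 * x ^ 2 - 12 * u ^ 9 * v * x - 6 * u ^ 5 * w * x + 9 * u ^ 14 * v * w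
    - 10 * u ^ 12 * v ^ 3 - 3 * u ^ 10 * w ^ 2 + 30 * u ^ 8 * v ^ 2 * w
    - 35 * u ^ 6 * v ^ 4 + 6 * u ^ 4 * v * w ^ 2 - 10 * u ^ 2 * v ^ 3 * w
    - 4 * v ^ 5 - 2 * w ^ 3

/-- The ideal of relations in the presentation `H^*(E₈/C; ℚ) ≅ ℚ[u,v,w,x]/I`. -/
def relIdeal : Ideal (MvPolynomial (Fin 4) ℚ) :=
  Ideal.span {r15, r20, r24, r30}

end E8CQ

end

namespace E8Proof

section General

variable {S : Type*} [CommRing S]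

/-- The relation of degree 20, in an arbitrary commutative ring. -/
def rel20 (U V W : S) : S :=
  9 * U ^ 20 + 45 * U ^ 14 * V + 12 * U ^ 10 * W + 60 * U ^ 8 * V ^ 2
    + 30 * U ^ 4 * V * W + 10 * U ^ 2 * V ^ 3 + 3 * W ^ 2

/-- The relation of degree 24, in an arbitrary commutative ring. -/
def rel24 (U V W : S) : S :=
  11 * U ^ 24 + 60 * U ^ 18 * V + 21 * U ^ 14 * W + 105 * U ^ 12 * V ^ 2
    + 60 * U ^ 8 * V * W + 60 * U ^ 6 * V ^ 3 + 9 * U ^ 4 * W ^ 2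
    + 30 * U ^ 2 * V ^ 2 * W + 5 * V ^ 4

/-- The eight monomials `v^i w^j`, `i < 4`, `j < 2`. -/
def mon (V W : S) : Fin 8 → S :=
  ![1, V, V ^ 2, V ^ 3, W, V * W, V ^ 2 * W, V ^ 3 * W]

variable [Algebra ℚ S]

/-- `ℚ[U]`-linear combinations of the eight monomials. -/
noncomputable def comb (U V W : S) : (Fin 8 → Polynomial ℚ) →ₗ[ℚ] S :=
  ∑ k, (LinearMap.mulRight ℚ (mon V W k)) ∘ₗ (Polynomial.aeval U).toLinearMap ∘ₗ
    LinearMap.proj k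

theorem comb_apply (U V W : S) (a : Fin 8 → Polynomial ℚ) :
    comb U V W a = ∑ k, Polynomial.aeval U (a k) * mon V W k := by
  simp [comb]

theorem comb_mul (U V W : S) (p : Polynomial ℚ) (y : S)
    (hy : y ∈ LinearMap.range (comb U V W)) :
    Polynomial.aeval U p * y ∈ LinearMap.range (comb U V W) := by
  obtain ⟨a, rfl⟩ := hy
  refine ⟨fun k => p * a k, ?_⟩
  simp only [comb_apply, map_mul, Finset.mul_sum, mul_assoc]

theorem mem_of_nat_mul (U V W : S) (n : ℕ) (hn : n ≠ 0) (y : S) (a : Fin 8 → Polynomial ℚ)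
    (h : (n : S) * y = comb U V W a) :
    y ∈ LinearMap.range (comb U V W) := by
  have h2 : (n : ℚ) • y ∈ LinearMap.range (comb U V W) := by
    refine ⟨a, ?_⟩
    rw [← h, Algebra.smul_def]; simp
  exact ((LinearMap.range (comb U V W)).smul_mem_iff (by exact_mod_cast hn)).1 h2

theorem mul_mon_V (U V W : S) (h20 : rel20 U V W = 0) (h24 : rel24 U V W = 0) (k : Fin 8) :
    V * mon V W k ∈ LinearMap.range (comb U V W) := by
  have key : ∀ k' : Fin 8, mon V W k' ∈ LinearMap.range (comb U V W) := by
    intro k'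
    refine ⟨Pi.single k' 1, ?_⟩
    rw [comb_apply, Finset.sum_eq_single k']
    · simp
    · intro b _ hb; simp [Pi.single_eq_of_ne hb]
    · simp
  unfold rel20 at h20
  unfold rel24 at h24
  fin_cases k
  · convert key 1 using 1; simp [mon]
  · convert key 2 using 1; simp [mon]; ring
  · convert key 3 using 1; simp [mon]; ring
  · refine mem_of_nat_mul U V W 5 (by norm_num) _ (![16*Polynomial.X^24, 75*Polynomial.X^18, 75*Polynomial.X^12, - 30*Polynomial.X^6, 15*Polynomial.X^14, 30*Polynomial.X^8, - 30*Polynomial.X^2, 0]) ?_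
    rw [comb_apply]
    simp [Fin.sum_univ_succ, mon, map_ofNat]
    linear_combination (- 3*U^4) * h20 + h24
  · convert key 5 using 1; simp [mon]
  · convert key 6 using 1; simp [mon]; ring
  · convert key 7 using 1; simp [mon]; ring
  · refine mem_of_nat_mul U V W 5 (by norm_num) _ ( ![- 365*Polynomial.X^34, - 1495*Polynomial.X^28, - 660*Polynomial.X^22, 1900*Polynomial.X^16, - 344*Polynomial.X^24, - 495*Polynomial.X^18, 1095*Polynomial.X^12, - 330*Polynomial.X^6]) ?_
    rw [comb_apply]
    simp [Fin.sum_univ_succ, mon, map_ofNat]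
    linear_combination (65*U^14 - 50*U^8*V - 3*U^4*W - 10*U^2*V^2) * h20 +
      (- 20*U^10 + 20*U^4*V + 1*W) * h24

theorem mul_mon_W (U V W : S) (h20 : rel20 U V W = 0) (h24 : rel24 U V W = 0) (k : Fin 8) :
    W * mon V W k ∈ LinearMap.range (comb U V W) := by
  have key : ∀ k' : Fin 8, mon V W k' ∈ LinearMap.range (comb U V W) := by
    intro k'
    refine ⟨Pi.single k' 1, ?_⟩
    rw [comb_apply, Finset.sum_eq_single k']
    · simp
    · intro b _ hb; simp [Pi.single_eq_of_ne hb]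
    · simp
  unfold rel20 at h20
  unfold rel24 at h24
  fin_cases k
  · convert key 4 using 1; simp [mon]
  · convert key 5 using 1; simp [mon]; ring
  · convert key 6 using 1; simp [mon]; ring
  · convert key 7 using 1; simp [mon]; ring
  · refine mem_of_nat_mul U V W 3 (by norm_num) _ (![- 9*Polynomial.X^20, - 45*Polynomial.X^14, - 60*Polynomial.X^8, - 10*Polynomial.X^2, - 12*Polynomial.X^10, - 30*Polynomial.X^4, 0, 0]) ?_
    rw [comb_apply]
    simp [Fin.sum_univ_succ, mon, map_ofNat]
    linear_combination h20
  · refine mem_of_nat_mul U V W 3 (by norm_num) _ (![- 32*Polynomial.X^26, - 159*Polynomial.X^20, - 195*Polynomial.X^14, 0, - 30*Polynomial.X^16, - 72*Polynomial.X^10, 30*Polynomial.X^4, 0]) ?_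
    rw [comb_apply]
    simp [Fin.sum_univ_succ, mon, map_ofNat]
    linear_combination (6*U^6 + V) * h20 - 2*U^2 * h24
  · refine mem_of_nat_mul U V W 3 (by norm_num) _ (![0, - 32*Polynomial.X^26, - 159*Polynomial.X^20, - 195*Polynomial.X^14, 0, - 30*Polynomial.X^16, - 72*Polynomial.X^10, 30*Polynomial.X^4]) ?_
    rw [comb_apply]
    simp [Fin.sum_univ_succ, mon, map_ofNat]
    linear_combination (6*U^6*V + V^2) * h20 - 2*U^2*V * h24
  · refine mem_of_nat_mul U V W 3 (by norm_num) _ (![- 2814*Polynomial.X^38, - 11895*Polynomial.X^32, - 6917*Polynomial.X^26, 12411*Polynomial.X^20, - 2649*Polynomial.X^28, - 4140*Polynomial.X^22, 7710*Polynomial.X^16, - 2052*Polynomial.X^10]) ?_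
    rw [comb_apply]
    simp [Fin.sum_univ_succ, mon, map_ofNat]
    linear_combination (507*U^18 - 300*U^12*V - 18*U^8*W - 54*U^6*V^2 + 1*V^3) * h20 +
      (- 159*U^14 + 120*U^8*V + 6*U^4*W - 2*U^2*V^2) * h24

theorem mul_mem_of_mon (U V W z : S)
    (hz : ∀ k, z * mon V W k ∈ LinearMap.range (comb U V W)) (y : S)
    (hy : y ∈ LinearMap.range (comb U V W)) :
    z * y ∈ LinearMap.range (comb U V W) := by
  obtain ⟨a, rfl⟩ := hy
  rw [comb_apply, Finset.mul_sum]
  refine Submodule.sum_mem _ fun k _ => ?_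
  have := comb_mul U V W (a k) _ (hz k)
  convert this using 1
  ring

theorem comb_surjective (U V W : S) (h20 : rel20 U V W = 0) (h24 : rel24 U V W = 0)
    (htop : Algebra.adjoin ℚ {U, V, W} = (⊤ : Subalgebra ℚ S)) :
    Function.Surjective (comb U V W) := by
  have h1 : (1 : S) ∈ LinearMap.range (comb U V W) := by
    refine ⟨Pi.single 0 1, ?_⟩
    rw [comb_apply, Finset.sum_eq_single 0]
    · simp [mon]
    · intro b _ hb; simp [Pi.single_eq_of_ne hb]
    · simp
  have main : ∀ s ∈ Algebra.adjoin ℚ {U, V, W}, ∀ y ∈ LinearMap.range (comb U V W),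
      s * y ∈ LinearMap.range (comb U V W) := by
    intro s hs
    induction hs using Algebra.adjoin_induction with
    | mem s hs =>
      rcases hs with rfl | rfl | rfl
      · intro y hy
        simpa using comb_mul s V W Polynomial.X y hy
      · exact mul_mem_of_mon U s W s (mul_mon_V U s W h20 h24)
      · exact mul_mem_of_mon U V s s (mul_mon_W U V s h20 h24)
    | algebraMap r =>
      intro y hy
      rw [← Algebra.smul_def]
      exact Submodule.smul_mem _ _ hy
    | add p q _ _ hp hq =>
      intro y hy
      rw [add_mul]
      exact Submodule.add_mem _ (hp y hy) (hq y hy)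
    | mul p q _ _ hp hq =>
      intro y hy
      rw [mul_assoc]
      exact hp _ (hq y hy)
  intro s
  have := main s (htop ▸ Algebra.mem_top) 1 h1
  simpa using this

theorem map_comb {S' : Type*} [CommRing S'] [Algebra ℚ S'] (φ : S →ₐ[ℚ] S') (U V W : S)
    (a : Fin 8 → Polynomial ℚ) :
    φ (comb U V W a) = comb (φ U) (φ V) (φ W) a := by
  rw [comb_apply, comb_apply, map_sum]
  refine Finset.sum_congr rfl fun k _ => ?_
  rw [map_mul, Polynomial.aeval_algHom_apply]
  congr 1
  fin_cases k <;> simp [mon]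

end General

section Fibre

/-- The degree 8 polynomial, the resultant of the first two relations at `u = 1`. -/
noncomputable def f8 : Polynomial ℚ :=
  25*Polynomial.X^8 + 1800*Polynomial.X^7 + 4050*Polynomial.X^6 + 1500*Polynomial.X^5 - 2935*Polynomial.X^4 - 3510*Polynomial.X^3 - 1605*Polynomial.X^2 - 345*Polynomial.X - 29

/-- The fibre at `u = 1` of the quotient by the first two relations. -/
abbrev K8 : Type := AdjoinRoot f8

theorem f8_natDegree : f8.natDegree = 8 := by
  unfold f8
  compute_degree!

theorem f8_ne_zero : f8 ≠ 0 := by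
  intro h
  have := f8_natDegree
  rw [h] at this
  simp at this

theorem finrank_K8 : Module.finrank ℚ K8 = 8 := by
  rw [(AdjoinRoot.powerBasis f8_ne_zero).finrank, AdjoinRoot.powerBasis_dim, f8_natDegree]

instance : Module.Finite ℚ K8 := (AdjoinRoot.powerBasis f8_ne_zero).finite

instance : Nontrivial K8 := Module.nontrivial_of_finrank_pos (R := ℚ) (by rw [finrank_K8]; norm_num)

/-- The class of `v`. -/
noncomputable def vK : K8 := AdjoinRoot.root f8

theorem aeval_f8 {S : Type*} [CommRing S] [Algebra ℚ S] (y : S) : Polynomial.aeval y f8 =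
    25*y^8 + 1800*y^7 + 4050*y^6 + 1500*y^5 - 2935*y^4 - 3510*y^3 - 1605*y^2 - 345*y - 29 := by
  simp [f8, map_ofNat]

theorem vK_rel : 25*vK^8 + 1800*vK^7 + 4050*vK^6 + 1500*vK^5 - 2935*vK^4 - 3510*vK^3
    - 1605*vK^2 - 345*vK - 29 = 0 := by
  rw [← aeval_f8, vK, AdjoinRoot.aeval_eq, AdjoinRoot.mk_self]

/-- The class of `w`. -/
noncomputable def wK : K8 :=
  (1 / 177 : ℚ) • (- 3800*vK^7 - 272210*vK^6 - 516030*vK^5 - 39355*vK^4 + 460150*vK^3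
    + 364657*vK^2 + 109839*vK + 11852)

theorem wK_rel : 177 * wK = - 3800*vK^7 - 272210*vK^6 - 516030*vK^5 - 39355*vK^4 + 460150*vK^3
    + 364657*vK^2 + 109839*vK + 11852 := by
  have : (177 : K8) = algebraMap ℚ K8 177 := (map_ofNat (algebraMap ℚ K8) 177).symm
  rw [wK, this, ← Algebra.smul_def, smul_smul]
  norm_num

theorem nat_cancel {S : Type*} [CommRing S] [Algebra ℚ S] (n : ℕ) (hn : n ≠ 0) (y : S)
    (h : (n : S) * y = 0) : y = 0 := by
  have h2 : (n : ℚ) • y = 0 := by rw [Algebra.smul_def]; simpa using h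
  have h3 : (n : ℚ) ≠ 0 := by exact_mod_cast hn
  have := congrArg (fun z => (n : ℚ)⁻¹ • z) h2
  simpa [smul_smul, inv_mul_cancel₀ h3] using this

theorem relK20 : rel20 1 vK wK = 0 := by
  refine nat_cancel (177 ^ 2) (by norm_num) _ ?_
  have hf := vK_rel
  have hw := wK_rel
  generalize vK = t at *
  generalize hW : - 3800*t^7 - 272210*t^6 - 516030*t^5 - 39355*t^4 + 460150*t^3
    + 364657*t^2 + 109839*t + 11852 = Wp at hw
  have h1 : 3 * Wp ^ 2 + 177 * (12 + 30 * t) * Wp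
      + 177 ^ 2 * (9 + 45 * t + 60 * t ^ 2 + 10 * t ^ 3) = 0 := by
    subst hW
    linear_combination (1732800*t^6 + 123493920*t^5 + 190137612*t^4 - 51553032*t^3
      - 190822920*t^2 - 96288156*t - 15409149) * hf
  unfold rel20
  push_cast
  rw [← hw] at h1
  linear_combination h1

theorem relK24 : rel24 1 vK wK = 0 := by
  refine nat_cancel 177 (by norm_num) _ ?_
  have h20 := relK20
  have hf := vK_rel
  have hw := wK_rel
  unfold rel20 at h20
  unfold rel24
  push_cast
  linear_combination 531 * h20 + (-15 - 30 * vK + 30 * vK ^ 2) * hw + (- 4560*vK + 6228) * hf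

/-- The last relation at `u = 1`, `x = 1/2`, times 4. -/
noncomputable def cK : K8 :=
  (-9 - 24 * vK - 40 * vK ^ 3 - 140 * vK ^ 4 - 16 * vK ^ 5)
    + (-12 + 36 * vK + 120 * vK ^ 2 - 40 * vK ^ 3) * wK + (-12 + 24 * vK) * wK ^ 2 - 8 * wK ^ 3

theorem isUnit_nat {S : Type*} [CommRing S] [Algebra ℚ S] (n : ℕ) (hn : n ≠ 0) :
    IsUnit (n : S) := by
  have h3 : IsUnit (n : ℚ) := by
    rw [isUnit_iff_ne_zero]
    exact_mod_cast hn
  simpa using h3.map (algebraMap ℚ S)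

theorem cK_isUnit : IsUnit cK := by
  have hf := vK_rel
  have hw := wK_rel
  have key : cK * (177 ^ 3 * (- 28220642392938000*vK^7 - 2019817052241349000*vK^6
      - 3707923332478868500*vK^5 - 107460757592563000*vK^4 + 3359061422815881900*vK^3
      + 2525599131752040800*vK^2 + 731635321118079800*vK + 76544382120436475))
      = ((10443 ^ 2 : ℕ) : K8) := by
    have h1 : 177 ^ 3 * cK = 10443 * (12400*vK^7 + 894040*vK^6 + 2098204*vK^5 + 1305720*vK^4
        - 242420*vK^3 - 547088*vK^2 - 201128*vK - 24015) := by
      unfold cK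
      generalize vK = t at *
      generalize hW : - 3800*t^7 - 272210*t^6 - 516030*t^5 - 39355*t^4 + 460150*t^3
        + 364657*t^2 + 109839*t + 11852 = Wp at hw
      have h2 : 177 ^ 3 * (-9 - 24 * t - 40 * t ^ 3 - 140 * t ^ 4 - 16 * t ^ 5)
        + 177 ^ 2 * (-12 + 36 * t + 120 * t ^ 2 - 40 * t ^ 3) * Wp
        + 177 * (-12 + 24 * t) * Wp ^ 2 - 8 * Wp ^ 3
        = 10443 * (12400*t^7 + 894040*t^6 + 2098204*t^5 + 1305720*t^4
        - 242420*t^3 - 547088*t^2 - 201128*t - 24015) := by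
        subst hW
        linear_combination (17559040000*t^13 + 2509233024000*t^12 + 93954612460800*t^11
          + 307616585926720*t^10 + 233122904760640*t^9 - 343699872976800*t^8
          - 691945229564160*t^7 - 320813015097104*t^6 + 194691505841808*t^5
          + 311093376890792*t^4 + 168830878678416*t^3 + 48402420486936*t^2
          + 7352045983632*t + 469703701652) * hf
      rw [← h2, ← hw]
      ring
    push_cast
    rw [← mul_assoc, mul_comm cK, h1]
    linear_combination 10443 * (- 13997438626897248000*vK^6 - 1003229001774398828800*vK^5
      - 1939452873086958658880*vK^4 - 644479133867324114880*vK^3 + 549276078228508724560*vK^2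
      + 382656575332506424640*vK + 63386666780078688192) * hf
  have h2 : IsUnit ((10443 ^ 2 : ℕ) : K8) := isUnit_nat _ (by norm_num)
  rw [← key] at h2
  exact isUnit_of_mul_isUnit_left h2

theorem mon_span : ∀ y : K8, ∃ q : Fin 8 → ℚ, y = ∑ k, q k • mon vK wK k := by
  intro y
  have htop : Algebra.adjoin ℚ {(1 : K8), vK, wK} = ⊤ := by
    rw [eq_top_iff, ← AdjoinRoot.adjoinRoot_eq_top (f := f8)]
    apply Algebra.adjoin_mono
    intro z hz
    rw [Set.mem_singleton_iff] at hz
    subst hz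
    right; left; rfl
  obtain ⟨a, rfl⟩ := comb_surjective (1 : K8) vK wK relK20 relK24 htop y
  refine ⟨fun k => Polynomial.eval 1 (a k), ?_⟩
  rw [comb_apply]
  refine Finset.sum_congr rfl fun k _ => ?_
  rw [Algebra.smul_def]
  congr 1
  have := Polynomial.aeval_algebraMap_apply K8 (1 : ℚ) (a k)
  simpa using this

theorem mon_linearIndependent : LinearIndependent ℚ (mon vK wK) := by
  refine linearIndependent_of_top_le_span_of_card_eq_finrank ?_ ?_
  · intro y _
    obtain ⟨q, rfl⟩ := mon_span y
    exact Submodule.sum_mem _ fun k _ => Submodule.smul_mem _ _ (Submodule.subset_span ⟨k, rfl⟩)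
  · rw [finrank_K8]; simp

end Fibre

section Main

open Polynomial in
/-- The comparison map to `K8[X]`. -/
noncomputable def Phi : MvPolynomial (Fin 4) ℚ →ₐ[ℚ] Polynomial K8 :=
  MvPolynomial.aeval ![Polynomial.X, Polynomial.C vK * Polynomial.X ^ 6,
    Polynomial.C wK * Polynomial.X ^ 10,
    Polynomial.C (algebraMap ℚ K8 (1 / 2)) * Polynomial.X ^ 15]

theorem Phi_u : Phi E8CQ.u = Polynomial.X := by simp [Phi, E8CQ.u]
theorem Phi_v : Phi E8CQ.v = Polynomial.C vK * Polynomial.X ^ 6 := by simp [Phi, E8CQ.v]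
theorem Phi_w : Phi E8CQ.w = Polynomial.C wK * Polynomial.X ^ 10 := by simp [Phi, E8CQ.w]
theorem Phi_x : Phi E8CQ.x = Polynomial.C (algebraMap ℚ K8 (1 / 2)) * Polynomial.X ^ 15 := by
  simp [Phi, E8CQ.x]

theorem half_rel : 2 * algebraMap ℚ K8 (1 / 2) = 1 := by
  rw [← map_ofNat (algebraMap ℚ K8) 2, ← map_mul]
  norm_num

theorem half_rel' : 2 * Polynomial.C (algebraMap ℚ K8 (1 / 2)) = 1 := by
  have := congrArg Polynomial.C half_rel
  simpa only [map_mul, map_ofNat, map_one] using this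

theorem Phi_r15 : Phi E8CQ.r15 = 0 := by
  simp only [E8CQ.r15, map_sub, map_pow, map_mul, map_ofNat, Phi_u, Phi_x]
  linear_combination (- Polynomial.X ^ 15) * half_rel'

theorem Phi_r20 : Phi E8CQ.r20 = 0 := by
  have h := congrArg Polynomial.C relK20
  simp only [rel20, map_add, map_pow, map_mul, map_ofNat, map_zero, map_one] at h
  simp only [E8CQ.r20, map_add, map_pow, map_mul, map_ofNat, Phi_u, Phi_v, Phi_w]
  linear_combination Polynomial.X ^ 20 * h

theorem Phi_r24 : Phi E8CQ.r24 = 0 := by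
  have h := congrArg Polynomial.C relK24
  simp only [rel24, map_add, map_pow, map_mul, map_ofNat, map_zero, map_one] at h
  simp only [E8CQ.r24, map_add, map_pow, map_mul, map_ofNat, Phi_u, Phi_v, Phi_w]
  linear_combination Polynomial.X ^ 24 * h

theorem Phi_r30_four : 4 * Phi E8CQ.r30 = Polynomial.C cK * Polynomial.X ^ 30 := by
  have h := half_rel'
  simp only [cK, map_add, map_sub, map_neg, map_pow, map_mul, map_ofNat]
  simp only [E8CQ.r30, map_add, map_sub, map_neg, map_pow, map_mul, map_ofNat, Phi_u, Phi_v,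
    Phi_w, Phi_x]
  generalize Polynomial.C (algebraMap ℚ K8 (1 / 2)) = z at *
  generalize Polynomial.C vK = t at *
  generalize Polynomial.C wK = s at *
  generalize (Polynomial.X : Polynomial K8) = y at *
  linear_combination (-9 * y ^ 30 * (2 * z + 1) - 24 * y ^ 30 * t - 12 * y ^ 30 * s) * h

theorem Phi_r30 : ∃ c : K8, IsUnit c ∧ Phi E8CQ.r30 = Polynomial.C c * Polynomial.X ^ 30 := by
  refine ⟨algebraMap ℚ K8 (1 / 2) * algebraMap ℚ K8 (1 / 2) * cK, ?_, ?_⟩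
  · have h : IsUnit (algebraMap ℚ K8 (1 / 2)) := by
      refine IsUnit.map _ ?_
      rw [isUnit_iff_ne_zero]; norm_num
    exact (h.mul h).mul cK_isUnit
  · have h := half_rel'
    have h4 := Phi_r30_four
    simp only [map_mul]
    generalize Polynomial.C (algebraMap ℚ K8 (1 / 2)) = z at *
    linear_combination z * z * h4 - (2 * z + 1) * Phi E8CQ.r30 * h

/-- The ideal of the first three relations. -/
noncomputable def J3 : Ideal (MvPolynomial (Fin 4) ℚ) :=
  Ideal.span {E8CQ.r15, E8CQ.r20, E8CQ.r24}

theorem J3_le : ∀ p ∈ J3, Phi p = 0 := by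
  have : J3 ≤ RingHom.ker Phi := by
    rw [J3, Ideal.span_le]
    rintro p (rfl | rfl | rfl)
    · exact Phi_r15
    · exact Phi_r20
    · exact Phi_r24
  intro p hp
  exact this hp

theorem comb_Phi_injective (a : Fin 8 → Polynomial ℚ)
    (h : comb (Polynomial.X : Polynomial K8) (Polynomial.C vK * Polynomial.X ^ 6)
      (Polynomial.C wK * Polynomial.X ^ 10) a = 0) : a = 0 := by
  have hd : ∀ k, mon (Polynomial.C vK * Polynomial.X ^ 6 : Polynomial K8)
      (Polynomial.C wK * Polynomial.X ^ 10) k =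
      Polynomial.C (mon vK wK k) * Polynomial.X ^ ((![0, 6, 12, 18, 10, 16, 22, 28] : Fin 8 → ℕ) k) := by
    intro k
    fin_cases k <;> simp [mon] <;> ring
  generalize (![0, 6, 12, 18, 10, 16, 22, 28] : Fin 8 → ℕ) = d at hd
  rw [comb_apply] at h
  have hc : ∀ n k, (a k * Polynomial.X ^ (d k)).coeff n = 0 := by
    intro n
    have h2 := congrArg (fun q => Polynomial.coeff q n) h
    simp only [Polynomial.finsetSum_coeff, Polynomial.coeff_zero] at h2
    refine Fintype.linearIndependent_iff.1 mon_linearIndependent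
      (fun k => (a k * Polynomial.X ^ (d k)).coeff n) ?_
    rw [← h2]
    refine Finset.sum_congr rfl fun k _ => ?_
    rw [hd k]
    have : Polynomial.aeval (Polynomial.X : Polynomial K8) (a k) *
        (Polynomial.C (mon vK wK k) * Polynomial.X ^ d k) =
        Polynomial.C (mon vK wK k) * (a k * Polynomial.X ^ (d k)).map (algebraMap ℚ K8) := by
      rw [Polynomial.map_mul, Polynomial.map_pow, Polynomial.map_X,
        ← Polynomial.aeval_X_left_eq_map]
      ring
    rw [this, Polynomial.coeff_C_mul, Polynomial.coeff_map, Algebra.smul_def, mul_comm]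
  funext k
  have h3 : a k * Polynomial.X ^ (d k) = 0 := Polynomial.ext fun n => by simpa using hc n k
  rcases mul_eq_zero.1 h3 with h4 | h4
  · exact h4
  · exact absurd h4 (pow_ne_zero _ Polynomial.X_ne_zero)

theorem exists_comb (p : MvPolynomial (Fin 4) ℚ) :
    ∃ a, p - comb E8CQ.u E8CQ.v E8CQ.w a ∈ J3 := by
  let π := Ideal.Quotient.mkₐ ℚ J3
  have h15 : π E8CQ.r15 = 0 := Ideal.Quotient.eq_zero_iff_mem.2 (Ideal.subset_span (by simp))
  have h20 : π E8CQ.r20 = 0 := Ideal.Quotient.eq_zero_iff_mem.2 (Ideal.subset_span (by simp))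
  have h24 : π E8CQ.r24 = 0 := Ideal.Quotient.eq_zero_iff_mem.2 (Ideal.subset_span (by simp))
  have htop : Algebra.adjoin ℚ {π E8CQ.u, π E8CQ.v, π E8CQ.w} = ⊤ := by
    rw [eq_top_iff]
    rintro y -
    obtain ⟨q, rfl⟩ := Ideal.Quotient.mkₐ_surjective ℚ J3 y
    have hu : π E8CQ.u ∈ Algebra.adjoin ℚ {π E8CQ.u, π E8CQ.v, π E8CQ.w} :=
      Algebra.subset_adjoin (by simp)
    induction q using MvPolynomial.induction_on with
    | C r => exact Subalgebra.algebraMap_mem _ r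
    | add p q hp hq => rw [map_add]; exact Subalgebra.add_mem _ hp hq
    | mul_X p i hp =>
      rw [map_mul]
      refine Subalgebra.mul_mem _ hp ?_
      fin_cases i
      · exact hu
      · exact Algebra.subset_adjoin (by right; left; rfl)
      · exact Algebra.subset_adjoin (by right; right; rfl)
      · have : π E8CQ.x = algebraMap ℚ _ (1 / 2) * (π E8CQ.u) ^ 15 := by
          have h2 : algebraMap ℚ (MvPolynomial (Fin 4) ℚ ⧸ J3) (1 / 2) * 2 = 1 := by
            rw [← map_ofNat (algebraMap ℚ (MvPolynomial (Fin 4) ℚ ⧸ J3)) 2, ← map_mul]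
            norm_num
          rw [E8CQ.r15, map_sub, map_mul, map_ofNat, map_pow] at h15
          linear_combination (-algebraMap ℚ (MvPolynomial (Fin 4) ℚ ⧸ J3) (1 / 2)) * h15
            - π E8CQ.x * h2
        change π E8CQ.x ∈ _
        rw [this]
        exact Subalgebra.mul_mem _ (Subalgebra.algebraMap_mem _ _) (Subalgebra.pow_mem _ hu _)
  have hs := comb_surjective (π E8CQ.u) (π E8CQ.v) (π E8CQ.w)
    (by rw [← h20]; simp only [rel20, E8CQ.r20, map_add, map_pow, map_mul, map_ofNat])
    (by rw [← h24]; simp only [rel24, E8CQ.r24, map_add, map_pow, map_mul, map_ofNat]) htop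
  obtain ⟨a, ha⟩ := hs (π p)
  refine ⟨a, ?_⟩
  rw [← Ideal.Quotient.eq_zero_iff_mem]
  change π (p - _) = 0
  rw [map_sub, map_comb, ha, sub_self]

theorem Phi_comb (a : Fin 8 → Polynomial ℚ) : Phi (comb E8CQ.u E8CQ.v E8CQ.w a) =
    comb (Polynomial.X : Polynomial K8) (Polynomial.C vK * Polynomial.X ^ 6)
      (Polynomial.C wK * Polynomial.X ^ 10) a := by
  rw [map_comb, Phi_u, Phi_v, Phi_w]

theorem Phi_eq_zero (p : MvPolynomial (Fin 4) ℚ) : Phi p = 0 ↔ p ∈ J3 := by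
  refine ⟨fun h => ?_, J3_le p⟩
  obtain ⟨a, ha⟩ := exists_comb p
  have h1 := J3_le _ ha
  rw [map_sub, h, zero_sub, neg_eq_zero, Phi_comb] at h1
  have := comb_Phi_injective a h1
  subst this
  simpa using ha

theorem r30_regular (p : MvPolynomial (Fin 4) ℚ) (h : E8CQ.r30 * p ∈ J3) : p ∈ J3 := by
  rw [← Phi_eq_zero] at h ⊢
  obtain ⟨c, hc, h30⟩ := Phi_r30
  rw [map_mul, h30, mul_assoc] at h
  have h2 := (hc.map Polynomial.C).mul_right_eq_zero.1 h
  rwa [mul_comm, (Polynomial.monic_X_pow 30).mul_left_eq_zero_iff] at h2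

end Main

section Dimension

/-- Dimension count for a stable subspace of finite codimension. -/
theorem finrank_aux {E : Type*} [AddCommGroup E] [Module ℚ E] (φ : E →ₗ[ℚ] E)
    (hφ : Function.Injective φ) (W : Submodule ℚ E) (hW : W.map φ ≤ W)
    [Module.Finite ℚ (E ⧸ W)] [Module.Finite ℚ (E ⧸ LinearMap.range φ)] :
    Module.Finite ℚ (E ⧸ W.map φ) ∧
    Module.finrank ℚ (W.map (W.map φ).mkQ) = Module.finrank ℚ (E ⧸ LinearMap.range φ) := by
  set N := W.map φ with hN
  have hNr : N ≤ LinearMap.range φ := LinearMap.map_le_range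
  -- the image of `range φ` is isomorphic to `E / W`
  let g : E →ₗ[ℚ] E ⧸ N := N.mkQ ∘ₗ φ
  have hgk : LinearMap.ker g = W := by
    ext y
    simp only [g, LinearMap.mem_ker, LinearMap.comp_apply, Submodule.mkQ_apply,
      Submodule.Quotient.mk_eq_zero, hN, Submodule.mem_map]
    constructor
    · rintro ⟨z, hz, hzy⟩
      rwa [← hφ hzy]
    · intro hy
      exact ⟨y, hy, rfl⟩
  have hgr : LinearMap.range g = (LinearMap.range φ).map N.mkQ := LinearMap.range_comp _ _
  let e1 : (E ⧸ W) ≃ₗ[ℚ] (LinearMap.range φ).map N.mkQ :=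
    (Submodule.quotEquivOfEq _ _ hgk.symm) ≪≫ₗ g.quotKerEquivRange ≪≫ₗ
      (LinearEquiv.ofEq _ _ hgr)
  let e2 := Submodule.quotientQuotientEquivQuotient N (LinearMap.range φ) hNr
  let e3 := Submodule.quotientQuotientEquivQuotient N W hW
  have : Module.Finite ℚ ((LinearMap.range φ).map N.mkQ) := Module.Finite.equiv e1
  have : Module.Finite ℚ ((E ⧸ N) ⧸ (LinearMap.range φ).map N.mkQ) := Module.Finite.equiv e2.symm
  have : Module.Finite ℚ (E ⧸ N) :=
    Module.Finite.of_submodule_quotient ((LinearMap.range φ).map N.mkQ)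
  refine ⟨inferInstance, ?_⟩
  have d1 := Submodule.finrank_quotient_add_finrank ((LinearMap.range φ).map N.mkQ)
  have d2 := Submodule.finrank_quotient_add_finrank (W.map N.mkQ)
  rw [e2.finrank_eq, ← e1.finrank_eq] at d1
  rw [e3.finrank_eq] at d2
  omega

theorem finite_XPow (n : ℕ) : Module.Finite ℚ
    (Polynomial K8 ⧸ (Ideal.span {(Polynomial.X ^ n : Polynomial K8)}).restrictScalars ℚ) := by
  have : Module.Finite K8 (AdjoinRoot (Polynomial.X ^ n : Polynomial K8)) :=
    (AdjoinRoot.powerBasis' (Polynomial.monic_X_pow n)).finite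
  have : Module.Finite ℚ (AdjoinRoot (Polynomial.X ^ n : Polynomial K8)) :=
    Module.Finite.trans K8 _
  have h2 : Module.Finite ℚ
    (Polynomial K8 ⧸ (Ideal.span {(Polynomial.X ^ n : Polynomial K8)})) := this
  exact Module.Finite.equiv (Submodule.Quotient.restrictScalarsEquiv ℚ
    (Ideal.span {(Polynomial.X ^ n : Polynomial K8)})).symm

theorem finrank_XPow (n : ℕ) : Module.finrank ℚ
    (Polynomial K8 ⧸ (Ideal.span {(Polynomial.X ^ n : Polynomial K8)}).restrictScalars ℚ)
      = 8 * n := by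
  have : Module.Free K8 (AdjoinRoot (Polynomial.X ^ n : Polynomial K8)) :=
    .of_basis (AdjoinRoot.powerBasis' (Polynomial.monic_X_pow n)).basis
  have h1 : Module.finrank ℚ (AdjoinRoot (Polynomial.X ^ n : Polynomial K8)) = 8 * n := by
    rw [← Module.finrank_mul_finrank ℚ K8, finrank_K8,
      (AdjoinRoot.powerBasis' (Polynomial.monic_X_pow n)).finrank, AdjoinRoot.powerBasis'_dim,
      Polynomial.natDegree_X_pow]
  rw [← h1]
  exact (Submodule.Quotient.restrictScalarsEquiv ℚ
    (Ideal.span {(Polynomial.X ^ n : Polynomial K8)})).finrank_eq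

theorem XPow_le : (Ideal.span {(Polynomial.X ^ 28 : Polynomial K8)}).restrictScalars ℚ ≤
    LinearMap.range Phi.toLinearMap := by
  intro y hy
  rw [Submodule.restrictScalars_mem, Ideal.mem_span_singleton] at hy
  obtain ⟨q, rfl⟩ := hy
  induction q using Polynomial.induction_on' with
  | add p q hp hq => rw [mul_add]; exact Submodule.add_mem _ hp hq
  | monomial n s =>
    obtain ⟨q, rfl⟩ := mon_span s
    refine ⟨comb E8CQ.u E8CQ.v E8CQ.w (fun k => Polynomial.C (q k) *
      Polynomial.X ^ (n + (![28, 22, 16, 10, 18, 12, 6, 0] : Fin 8 → ℕ) k)), ?_⟩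
    change Phi _ = _
    rw [Phi_comb, comb_apply, ← Polynomial.C_mul_X_pow_eq_monomial, map_sum, Finset.sum_mul,
      Finset.mul_sum]
    refine Finset.sum_congr rfl fun k _ => ?_
    simp only [map_mul, map_pow, Polynomial.aeval_X, Polynomial.aeval_C, Algebra.smul_def]
    rw [IsScalarTower.algebraMap_apply ℚ K8 (Polynomial K8), Polynomial.algebraMap_eq]
    fin_cases k <;> simp [mon] <;> ring

theorem span_four {R : Type*} [CommRing R] (a b c d : R) :
    Ideal.span {a, b, c, d} = Ideal.span {a, b, c} ⊔ Ideal.span {d} := by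
  simp only [Ideal.span_insert, sup_assoc]

theorem relIdeal_eq : E8CQ.relIdeal = J3 ⊔ Ideal.span {E8CQ.r30} :=
  span_four E8CQ.r15 E8CQ.r20 E8CQ.r24 E8CQ.r30

theorem mem_image_iff (p : MvPolynomial (Fin 4) ℚ) :
    Phi p ∈ (LinearMap.range Phi.toLinearMap).map (LinearMap.mulLeft ℚ (Phi E8CQ.r30)) ↔
      p ∈ E8CQ.relIdeal := by
  have h : Phi p ∈ (LinearMap.range Phi.toLinearMap).map (LinearMap.mulLeft ℚ (Phi E8CQ.r30)) ↔
      ∃ q, Phi E8CQ.r30 * Phi q = Phi p := by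
    simp only [Submodule.mem_map, LinearMap.mem_range, exists_exists_eq_and,
      LinearMap.mulLeft_apply, AlgHom.toLinearMap_apply]
  rw [h, relIdeal_eq]
  constructor
  · rintro ⟨q, hq⟩
    have h0 : p - E8CQ.r30 * q ∈ J3 := by
      rw [← Phi_eq_zero, map_sub, map_mul, hq, sub_self]
    rw [← sub_add_cancel p (E8CQ.r30 * q)]
    exact Submodule.add_mem_sup h0 (Ideal.mul_mem_right _ _ (Ideal.subset_span rfl))
  · intro hp
    obtain ⟨y, hy, z, hz, rfl⟩ := Submodule.mem_sup.1 hp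
    obtain ⟨q, rfl⟩ := Ideal.mem_span_singleton.1 hz
    exact ⟨q, by rw [map_add, J3_le y hy, map_mul, zero_add]⟩

theorem dim_main : Module.Finite ℚ (MvPolynomial (Fin 4) ℚ ⧸ E8CQ.relIdeal) ∧
    Module.finrank ℚ (MvPolynomial (Fin 4) ℚ ⧸ E8CQ.relIdeal) = 240 := by
  obtain ⟨c, hc, h30⟩ := Phi_r30
  let φ : Polynomial K8 →ₗ[ℚ] Polynomial K8 := LinearMap.mulLeft ℚ (Phi E8CQ.r30)
  have hφ : Function.Injective φ := by
    rw [← LinearMap.ker_eq_bot, LinearMap.ker_eq_bot']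
    intro m hm
    change Phi E8CQ.r30 * m = 0 at hm
    rw [h30, mul_assoc] at hm
    have h2 := (hc.map Polynomial.C).mul_right_eq_zero.1 hm
    rwa [mul_comm, (Polynomial.monic_X_pow 30).mul_left_eq_zero_iff] at h2
  have hr : LinearMap.range φ =
      (Ideal.span {(Polynomial.X ^ 30 : Polynomial K8)}).restrictScalars ℚ := by
    ext y
    rw [Submodule.restrictScalars_mem, Ideal.mem_span_singleton]
    constructor
    · rintro ⟨z, rfl⟩
      refine ⟨Polynomial.C c * z, ?_⟩
      change Phi E8CQ.r30 * z = _
      rw [h30]; ring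
    · rintro ⟨z, rfl⟩
      obtain ⟨d, hd⟩ := hc.exists_right_inv
      refine ⟨Polynomial.C d * z, ?_⟩
      change Phi E8CQ.r30 * _ = _
      have hd' : Polynomial.C c * Polynomial.C d = 1 := by rw [← map_mul, hd, map_one]
      rw [h30]
      linear_combination Polynomial.X ^ 30 * z * hd'
  let W : Submodule ℚ (Polynomial K8) := LinearMap.range Phi.toLinearMap
  have hW : W.map φ ≤ W := by
    rintro _ ⟨_, ⟨p, rfl⟩, rfl⟩
    refine ⟨E8CQ.r30 * p, ?_⟩
    change Phi _ = Phi _ * Phi _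
    rw [map_mul]
  have f1 : Module.Finite ℚ (Polynomial K8 ⧸ W) := by
    have := finite_XPow 28
    exact Module.Finite.of_surjective (Submodule.factor XPow_le)
      (Submodule.factor_surjective XPow_le)
  have f2 : Module.Finite ℚ (Polynomial K8 ⧸ LinearMap.range φ) := by
    rw [hr]; exact finite_XPow 30
  obtain ⟨f3, hfin⟩ := finrank_aux φ hφ W hW
  rw [hr, finrank_XPow] at hfin
  let g : MvPolynomial (Fin 4) ℚ →ₗ[ℚ] Polynomial K8 ⧸ W.map φ :=
    (W.map φ).mkQ ∘ₗ Phi.toLinearMap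
  have hgr : LinearMap.range g = W.map (W.map φ).mkQ := LinearMap.range_comp _ _
  have hgk : LinearMap.ker g = E8CQ.relIdeal.restrictScalars ℚ := by
    ext p
    simp only [g, LinearMap.mem_ker, LinearMap.comp_apply, Submodule.mkQ_apply,
      Submodule.Quotient.mk_eq_zero, Submodule.restrictScalars_mem]
    exact mem_image_iff p
  let e : (MvPolynomial (Fin 4) ℚ ⧸ E8CQ.relIdeal) ≃ₗ[ℚ] W.map (W.map φ).mkQ :=
    (Submodule.Quotient.restrictScalarsEquiv ℚ E8CQ.relIdeal).symm ≪≫ₗ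
    (Submodule.quotEquivOfEq _ _ hgk.symm) ≪≫ₗ g.quotKerEquivRange ≪≫ₗ
      (LinearEquiv.ofEq _ _ hgr)
  exact ⟨Module.Finite.equiv e.symm, by rw [e.finrank_eq, hfin]⟩

end Dimension

section Regular

/-- Elimination of `x`. -/
noncomputable def psi : MvPolynomial (Fin 4) ℚ →ₐ[ℚ] Polynomial (MvPolynomial (Fin 2) ℚ) :=
  MvPolynomial.aeval ![Polynomial.C (MvPolynomial.X 0), Polynomial.C (MvPolynomial.X 1),
    Polynomial.X, Polynomial.C (MvPolynomial.C (1 / 2) * MvPolynomial.X 0 ^ 15)]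

/-- The section of `psi`. -/
noncomputable def theta : Polynomial (MvPolynomial (Fin 2) ℚ) →+* MvPolynomial (Fin 4) ℚ :=
  Polynomial.eval₂RingHom
    (MvPolynomial.aeval ![E8CQ.u, E8CQ.v] : MvPolynomial (Fin 2) ℚ →ₐ[ℚ] _).toRingHom E8CQ.w

theorem psi_u : psi E8CQ.u = Polynomial.C (MvPolynomial.X 0) := by simp [psi, E8CQ.u]
theorem psi_v : psi E8CQ.v = Polynomial.C (MvPolynomial.X 1) := by simp [psi, E8CQ.v]
theorem psi_w : psi E8CQ.w = Polynomial.X := by simp [psi, E8CQ.w]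
theorem psi_x : psi E8CQ.x =
    Polynomial.C (MvPolynomial.C (1 / 2) * MvPolynomial.X 0 ^ 15) := by simp [psi, E8CQ.x]

theorem theta_u : theta (Polynomial.C (MvPolynomial.X 0)) = E8CQ.u := by simp [theta]
theorem theta_v : theta (Polynomial.C (MvPolynomial.X 1)) = E8CQ.v := by simp [theta]
theorem theta_w : theta Polynomial.X = E8CQ.w := by simp [theta]

theorem half_mv {σ : Type*} : 2 * (MvPolynomial.C (1 / 2) : MvPolynomial σ ℚ) = 1 := by
  rw [← map_ofNat (MvPolynomial.C : ℚ →+* MvPolynomial σ ℚ) 2, ← map_mul]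
  norm_num

theorem psi_r15 : psi E8CQ.r15 = 0 := by
  have h := congrArg (Polynomial.C) (half_mv (σ := Fin 2))
  simp only [map_mul, map_ofNat, map_one] at h
  simp only [E8CQ.r15, map_sub, map_mul, map_pow, map_ofNat, psi_u, psi_x]
  linear_combination (- Polynomial.C (MvPolynomial.X 0) ^ 15) * h

theorem psi_r20 : psi E8CQ.r20 = rel20
    (Polynomial.C (MvPolynomial.X 0) : Polynomial (MvPolynomial (Fin 2) ℚ))
    (Polynomial.C (MvPolynomial.X 1)) Polynomial.X := by
  simp only [E8CQ.r20, rel20, map_add, map_mul, map_pow, map_ofNat, psi_u, psi_v, psi_w]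

theorem psi_r24 : psi E8CQ.r24 = rel24
    (Polynomial.C (MvPolynomial.X 0) : Polynomial (MvPolynomial (Fin 2) ℚ))
    (Polynomial.C (MvPolynomial.X 1)) Polynomial.X := by
  simp only [E8CQ.r24, rel24, map_add, map_mul, map_pow, map_ofNat, psi_u, psi_v, psi_w]

theorem theta_psi_r20 : theta (psi E8CQ.r20) = E8CQ.r20 := by
  rw [psi_r20]
  simp only [E8CQ.r20, rel20, map_add, map_mul, map_pow, map_ofNat, theta_u, theta_v, theta_w]

theorem sub_theta_psi (p : MvPolynomial (Fin 4) ℚ) :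
    p - theta (psi p) ∈ Ideal.span {E8CQ.r15} := by
  induction p using MvPolynomial.induction_on with
  | C r =>
    have : theta (psi (MvPolynomial.C r)) = MvPolynomial.C r := by
      have h1 : psi (MvPolynomial.C r) = Polynomial.C (MvPolynomial.C r) := by
        change psi (algebraMap ℚ _ r) = _
        rw [AlgHom.commutes]; rfl
      rw [h1]; simp [theta]
    rw [this, sub_self]; exact Ideal.zero_mem _
  | add p q hp hq =>
    rw [map_add, map_add, add_sub_add_comm]; exact Ideal.add_mem _ hp hq
  | mul_X p i hp =>
    have hi : MvPolynomial.X i - theta (psi (MvPolynomial.X i)) ∈ Ideal.span {E8CQ.r15} := by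
      fin_cases i
      · change E8CQ.u - theta (psi E8CQ.u) ∈ _
        rw [psi_u, theta_u, sub_self]; exact Ideal.zero_mem _
      · change E8CQ.v - theta (psi E8CQ.v) ∈ _
        rw [psi_v, theta_v, sub_self]; exact Ideal.zero_mem _
      · change E8CQ.w - theta (psi E8CQ.w) ∈ _
        rw [psi_w, theta_w, sub_self]; exact Ideal.zero_mem _
      · change E8CQ.x - theta (psi E8CQ.x) ∈ _
        have h1 : theta (psi E8CQ.x) = MvPolynomial.C (1 / 2) * E8CQ.u ^ 15 := by
          rw [psi_x, map_mul, map_mul, map_pow, map_pow, theta_u]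
          congr 1
          simp [theta]
        rw [h1, Ideal.mem_span_singleton]
        refine ⟨- MvPolynomial.C (1 / 2), ?_⟩
        rw [E8CQ.r15]
        linear_combination (-E8CQ.x) * (half_mv (σ := Fin 4))
    rw [map_mul, map_mul]
    have : p * MvPolynomial.X i - theta (psi p) * theta (psi (MvPolynomial.X i)) =
        p * (MvPolynomial.X i - theta (psi (MvPolynomial.X i))) +
        theta (psi (MvPolynomial.X i)) * (p - theta (psi p)) := by ring
    rw [this]
    exact Ideal.add_mem _ (Ideal.mul_mem_left _ _ hi) (Ideal.mul_mem_left _ _ hp)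

theorem mem_span_r15 (p : MvPolynomial (Fin 4) ℚ) (h : psi p = 0) :
    p ∈ Ideal.span {E8CQ.r15} := by
  simpa [h] using sub_theta_psi p

theorem r15_ne_zero : E8CQ.r15 ≠ 0 := by
  intro h
  have := congrArg (MvPolynomial.eval ![0, 0, 0, 1]) h
  simp [E8CQ.r15, E8CQ.u, E8CQ.x] at this

theorem r20_regular (p : MvPolynomial (Fin 4) ℚ) (h : E8CQ.r20 * p ∈ Ideal.span {E8CQ.r15}) :
    p ∈ Ideal.span {E8CQ.r15} := by
  obtain ⟨q, hq⟩ := Ideal.mem_span_singleton.1 h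
  have h2 := congrArg psi hq
  rw [map_mul, map_mul, psi_r15, zero_mul] at h2
  refine mem_span_r15 p ((mul_eq_zero.1 h2).resolve_left fun h3 => ?_)
  have h4 := theta_psi_r20
  rw [h3, map_zero] at h4
  have := congrArg (MvPolynomial.eval ![0, 0, 1, 0]) h4
  simp [E8CQ.r20, E8CQ.u, E8CQ.v, E8CQ.w] at this

/-- The coefficients of the reduced second relation, and the resultant. -/
def coefA {S : Type*} [CommRing S] (U V : S) : S :=
  -16 * U ^ 24 - 75 * U ^ 18 * V - 75 * U ^ 12 * V ^ 2 + 30 * U ^ 6 * V ^ 3 + 5 * V ^ 4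
def coefB {S : Type*} [CommRing S] (U V : S) : S :=
  -15 * U ^ 14 - 30 * U ^ 8 * V + 30 * U ^ 2 * V ^ 2
def coefP {S : Type*} [CommRing S] (U V : S) : S := 12 * U ^ 10 + 30 * U ^ 4 * V
def coefQ {S : Type*} [CommRing S] (U V : S) : S :=
  9 * U ^ 20 + 45 * U ^ 14 * V + 60 * U ^ 8 * V ^ 2 + 10 * U ^ 2 * V ^ 3
def resultantH {S : Type*} [CommRing S] (U V : S) : S :=
  3 * coefA U V ^ 2 - coefP U V * coefA U V * coefB U V + coefQ U V * coefB U V ^ 2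

theorem rel20_eq {S : Type*} [CommRing S] (U V W : S) :
    rel20 U V W = 3 * W ^ 2 + coefP U V * W + coefQ U V := by
  unfold rel20 coefP coefQ; ring

theorem rel24_eq {S : Type*} [CommRing S] (U V W : S) :
    rel24 U V W = 3 * U ^ 4 * rel20 U V W + (coefA U V + coefB U V * W) := by
  unfold rel24 rel20 coefA coefB; ring

theorem resultantH_eq {S : Type*} [CommRing S] (U V W : S) :
    ∃ s k : S, resultantH U V = s * rel24 U V W + k * rel20 U V W := by
  rw [rel24_eq]
  refine ⟨-(3 * (coefA U V + coefB U V * W) - 6 * coefA U V + coefP U V * coefB U V),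
    coefB U V ^ 2 + (3 * (coefA U V + coefB U V * W) - 6 * coefA U V + coefP U V * coefB U V) *
      (3 * U ^ 4), ?_⟩
  rw [resultantH, rel20_eq]
  ring

theorem map_resultantH {S S' : Type*} [CommRing S] [CommRing S'] (f : S →+* S') (U V : S) :
    f (resultantH U V) = resultantH (f U) (f V) := by
  simp only [resultantH, coefA, coefB, coefP, coefQ, map_add, map_sub, map_mul, map_pow, map_neg,
    map_ofNat]

theorem resultantH_ne_zero :
    resultantH (MvPolynomial.X 0 : MvPolynomial (Fin 2) ℚ) (MvPolynomial.X 1) ≠ 0 := by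
  intro h
  have := congrArg (MvPolynomial.eval ![0, 1]) h
  rw [map_resultantH] at this
  simp [resultantH, coefA, coefB, coefP, coefQ] at this

theorem dvd_of_dvd_C_mul {D : Type*} [CommRing D] [IsDomain D] (F q : Polynomial D) (h : D)
    (hF : F.Monic) (hh : h ≠ 0) (hd : F ∣ Polynomial.C h * q) : F ∣ q := by
  rw [← Polynomial.modByMonic_eq_zero_iff_dvd hF] at hd ⊢
  rw [← Polynomial.smul_eq_C_mul, Polynomial.smul_modByMonic] at hd
  exact (smul_eq_zero.1 hd).resolve_left hh

theorem r24_regular (p : MvPolynomial (Fin 4) ℚ)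
    (h : E8CQ.r24 * p ∈ Ideal.span {E8CQ.r15, E8CQ.r20}) :
    p ∈ Ideal.span {E8CQ.r15, E8CQ.r20} := by
  have hdvd : psi E8CQ.r20 ∣ psi p := by
    obtain ⟨a, b, hab⟩ := Ideal.mem_span_pair.1 h
    have h1 := congrArg psi hab
    simp only [map_add, map_mul, psi_r15, mul_zero, zero_add] at h1
    obtain ⟨s, k, hsk⟩ := resultantH_eq (Polynomial.C (MvPolynomial.X 0))
      (Polynomial.C (MvPolynomial.X 1)) (Polynomial.X : Polynomial (MvPolynomial (Fin 2) ℚ))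
    rw [← psi_r20, ← psi_r24, ← map_resultantH] at hsk
    have h2 : psi E8CQ.r20 ∣ Polynomial.C (resultantH (MvPolynomial.X 0) (MvPolynomial.X 1))
        * psi p := by
      refine ⟨s * psi b + k * psi p, ?_⟩
      rw [hsk]
      linear_combination (-s) * h1
    -- a monic multiple
    have h3 : IsUnit (3 : Polynomial (MvPolynomial (Fin 2) ℚ)) := by
      simpa using isUnit_nat (S := Polynomial (MvPolynomial (Fin 2) ℚ)) 3 (by norm_num)
    let z : MvPolynomial (Fin 2) ℚ := MvPolynomial.C (1 / 3)
    have hz : 3 * Polynomial.C z = 1 := by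
      rw [← map_ofNat (Polynomial.C : MvPolynomial (Fin 2) ℚ →+* _) 3, ← map_mul,
        ← map_ofNat (MvPolynomial.C : ℚ →+* MvPolynomial (Fin 2) ℚ) 3, ← map_mul]
      norm_num
    let F : Polynomial (MvPolynomial (Fin 2) ℚ) := Polynomial.X ^ 2 +
      (Polynomial.C (z * coefP (MvPolynomial.X 0) (MvPolynomial.X 1)) * Polynomial.X +
       Polynomial.C (z * coefQ (MvPolynomial.X 0) (MvPolynomial.X 1)))
    have hF : F.Monic := Polynomial.monic_X_pow_add (by compute_degree!)
    have hFe : psi E8CQ.r20 = 3 * F := by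
      have e1 : Polynomial.C (coefP (MvPolynomial.X 0 : MvPolynomial (Fin 2) ℚ)
          (MvPolynomial.X 1)) = coefP
            (Polynomial.C (MvPolynomial.X 0) : Polynomial (MvPolynomial (Fin 2) ℚ))
            (Polynomial.C (MvPolynomial.X 1)) := by
        simp only [coefP, map_add, map_mul, map_pow, map_ofNat]
      have e2 : Polynomial.C (coefQ (MvPolynomial.X 0 : MvPolynomial (Fin 2) ℚ)
          (MvPolynomial.X 1)) = coefQ
            (Polynomial.C (MvPolynomial.X 0) : Polynomial (MvPolynomial (Fin 2) ℚ))
            (Polynomial.C (MvPolynomial.X 1)) := by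
        simp only [coefQ, map_add, map_mul, map_pow, map_ofNat]
      rw [psi_r20, rel20_eq]
      simp only [F, map_mul, e1, e2]
      linear_combination (-coefP (Polynomial.C (MvPolynomial.X 0))
            (Polynomial.C (MvPolynomial.X 1)) * Polynomial.X - coefQ (Polynomial.C
            (MvPolynomial.X 0)) (Polynomial.C (MvPolynomial.X 1))) * hz
    rw [hFe, h3.mul_left_dvd] at h2 ⊢
    exact dvd_of_dvd_C_mul F _ _ hF resultantH_ne_zero h2
  obtain ⟨q, hq⟩ := hdvd
  have h5 := sub_theta_psi p
  rw [hq, map_mul, theta_psi_r20] at h5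
  obtain ⟨c, hc⟩ := Ideal.mem_span_singleton.1 h5
  exact Ideal.mem_span_pair.2 ⟨c, theta q, by linear_combination -hc⟩

end Regular

end E8Proof

/-- `ℚ[u,v,w,x]/(r₁₅, r₂₀, r₂₄, r₃₀)` is a `240`-dimensional
`ℚ`-vector space; in particular `r₁₅, r₂₀, r₂₄, r₃₀` is a regular sequence in
`ℚ[u,v,w,x]`. -/
theorem finrank_E8C_rat :
    Module.Finite ℚ (MvPolynomial (Fin 4) ℚ ⧸ E8CQ.relIdeal) ∧
    Module.finrank ℚ (MvPolynomial (Fin 4) ℚ ⧸ E8CQ.relIdeal) = 240 ∧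
    RingTheory.Sequence.IsRegular (MvPolynomial (Fin 4) ℚ)
      [E8CQ.r15, E8CQ.r20, E8CQ.r24, E8CQ.r30] := by
  refine ⟨E8Proof.dim_main.1, E8Proof.dim_main.2, ⟨⟨?_⟩, ?_⟩⟩
  · intro i hi
    rw [isSMulRegular_quotient_iff_mem_of_smul_mem]
    intro p hp
    rw [smul_eq_mul, smul_eq_mul, Ideal.mul_top] at hp
    rw [smul_eq_mul, Ideal.mul_top]
    have hi' : i < 4 := hi
    interval_cases i
    · simp only [List.take_zero, Ideal.ofList_nil, Ideal.mem_bot] at hp ⊢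
      exact (mul_eq_zero.1 hp).resolve_left E8Proof.r15_ne_zero
    · have e : Ideal.ofList (List.take 1 [E8CQ.r15, E8CQ.r20, E8CQ.r24, E8CQ.r30]) =
          Ideal.span {E8CQ.r15} := by simp
      rw [e] at hp ⊢
      exact E8Proof.r20_regular p hp
    · have e : Ideal.ofList (List.take 2 [E8CQ.r15, E8CQ.r20, E8CQ.r24, E8CQ.r30]) =
          Ideal.span {E8CQ.r15, E8CQ.r20} := by simp [Ideal.span_insert]
      rw [e] at hp ⊢
      exact E8Proof.r24_regular p hp
    · have e : Ideal.ofList (List.take 3 [E8CQ.r15, E8CQ.r20, E8CQ.r24, E8CQ.r30]) =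
          E8Proof.J3 := by simp [E8Proof.J3, Ideal.span_insert]
      rw [e] at hp ⊢
      exact E8Proof.r30_regular p hp
  · rw [smul_eq_mul, Ideal.mul_top]
    have e : Ideal.ofList [E8CQ.r15, E8CQ.r20, E8CQ.r24, E8CQ.r30] = E8CQ.relIdeal := by
      simp [E8CQ.relIdeal, Ideal.span_insert]
    rw [e]
    intro h
    have h2 := E8Proof.dim_main.2
    rw [← h] at h2
    have : Subsingleton (MvPolynomial (Fin 4) ℚ ⧸ (⊤ : Ideal (MvPolynomial (Fin 4) ℚ))) :=
      Ideal.Quotient.subsingleton_iff.2 rfl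
    rw [Module.finrank_zero_of_subsingleton] at h2
    norm_num at h2
end
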